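/- arXiv:1912.05178 — 3 statements merged into one kernel-verified Lean document; each statement's English description precedes it below -/
import Mathlib

section
/- Lemma 2.5(i)-(ii): Let v be a classical solution of v_t = v_rr + ((m−1)/r) v_r − (b(r,t)/r²) v on [0,R] × (t1,t2), not identically zero, satisfying the boundary condition (1.5) and v(0,t) = 0 for all t ∈ (t1,t2). Let t0 ∈ (t1,t2) and let ε0 > 0 be such that for every t ∈ (t0 − ε0, t0) all zeros of v(·,t) are simple and Z(v(·,t)) is constant equal to n+1. Then there exist n+1 continuous functions ζ_0, ζ_1, ..., ζ_n : (t0 − ε0, t0) → [0,R] such that for every t ∈ (t0 − ε0, t0): ζ_0(t) = 0 < ζ_1(t) < ... < ζ_{n−1}(t) < ζ_n(t), and {r ∈ [0,R] : v(r,t) = 0} = {ζ_i(t) : 0 ≤ i ≤ n}; moreover, for each 0 ≤ i ≤ n the limit ζ_i(t0) := lim_{t → t0⁻} ζ_i(t) exists. -/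
open Set Filter

/-! Simple zeros persist in time, so the zero set of `v(·, t)` is lower hemicontinuous in `t`; since
it has constant finite cardinality, its increasing enumeration is continuous.

A zero curve without a limit as `t → t0⁻` sweeps some interval of radii infinitely often, so
`v(·, t0)` vanishes on that interval, and by the equation so do all time derivatives of `v` there.
Such flatness is excluded by backward uniqueness, through a parabolic frequency function: put
`u = r ^ (ν / 2) * v`, which solves a perturbed one-dimensional heat equation with potential
`κ / r²`, reverse time to `s = t0 - t`, and weight by the backward heat kernel centred in the
interval. With `I` the weighted `L²` norm squared and `D` the weighted energy of `u`, the frequency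
`s * D / I` is almost monotone, so `I` decays at most polynomially as `s → 0`, contradicting the
flatness. The argument needs a Dirichlet condition at `R`; if `v(R, t) ≠ 0` it is applied to
`(R - r) * v` instead, whose lower order error is controlled because `v` does not vanish near `R`.
-/

section DirectionalDerivative

open scoped Topology ContDiff

variable {E : Type*} [NormedAddCommGroup E] [NormedSpace ℝ E]

/-- The derivative of `F` within `Q` in the direction `w`, curried so that it can be iterated; the
sets `Q` of interest are rectangles containing part of their boundary. -/
noncomputable def dirDerivWithin (Q : Set E) (w : E) (F : E → ℝ) (p : E) : ℝ :=
  fderivWithin ℝ F Q p w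

variable {Q U : Set E} {F G : E → ℝ} {w w' p : E}

lemma contDiffOn_dirDerivWithin (hQ : UniqueDiffOn ℝ Q) (hF : ContDiffOn ℝ ∞ F Q) (w : E) :
    ContDiffOn ℝ ∞ (dirDerivWithin Q w F) Q :=
  (hF.fderivWithin hQ (by simp)).clm_apply contDiffOn_const

lemma eqOn_dirDerivWithin (h : EqOn F G Q) (w : E) :
    EqOn (dirDerivWithin Q w F) (dirDerivWithin Q w G) Q := fun p hp => by
  rw [dirDerivWithin, dirDerivWithin, fderivWithin_congr h (h hp)]

lemma dirDerivWithin_comm (hQ : UniqueDiffOn ℝ Q) (hQ' : Q ⊆ closure (interior Q))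
    (hF : ContDiffOn ℝ ∞ F Q) (w w' : E) :
    EqOn (dirDerivWithin Q w (dirDerivWithin Q w' F))
      (dirDerivWithin Q w' (dirDerivWithin Q w F)) Q := by
  intro p hp
  have second : ∀ a b, dirDerivWithin Q a (dirDerivWithin Q b F) p =
      fderivWithin ℝ (fderivWithin ℝ F Q) Q p a b := fun a b => by
    have hF' : DifferentiableWithinAt ℝ (fderivWithin ℝ F Q) Q p :=
      (hF.fderivWithin (m := ∞) hQ (by simp)).differentiableOn (by simp) p hp
    change fderivWithin ℝ (fun q => fderivWithin ℝ F Q q b) Q p a = _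
    simp [fderivWithin_clm_apply (hQ p hp) hF' (differentiableWithinAt_const b)]
  have two_le : minSmoothness ℝ 2 ≤ ∞ := by
    rw [minSmoothness_of_isRCLikeNormedField]
    exact WithTop.coe_le_coe.2 le_top
  rw [second, second]
  exact (hF p hp).isSymmSndFDerivWithinAt two_le hQ (hQ' hp) hp w w'

lemma dirDerivWithin_of_mem_nhds (h : Q ∈ 𝓝 p) (w : E) :
    dirDerivWithin Q w F p = fderiv ℝ F p w := by
  rw [dirDerivWithin, fderivWithin_of_mem_nhds h]

lemma eqOn_dirDerivWithin_of_isOpen (hU : IsOpen U) (hUQ : U ⊆ Q) (h : EqOn F G U) (w : E) :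
    EqOn (dirDerivWithin Q w F) (dirDerivWithin U w G) U := fun p hp => by
  rw [dirDerivWithin_of_mem_nhds (mem_of_superset (hU.mem_nhds hp) hUQ),
    dirDerivWithin_of_mem_nhds (hU.mem_nhds hp),
    (h.eventuallyEq_of_mem (hU.mem_nhds hp)).fderiv_eq]

lemma dirDerivWithin_add (hQ : UniqueDiffOn ℝ Q) (hF : DifferentiableOn ℝ F Q)
    (hG : DifferentiableOn ℝ G Q) (w : E) :
    EqOn (dirDerivWithin Q w fun p => F p + G p)
      (fun p => dirDerivWithin Q w F p + dirDerivWithin Q w G p) Q := fun p hp => by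
  simp [dirDerivWithin, fderivWithin_fun_add (hQ p hp) (hF p hp) (hG p hp)]

lemma dirDerivWithin_sub (hQ : UniqueDiffOn ℝ Q) (hF : DifferentiableOn ℝ F Q)
    (hG : DifferentiableOn ℝ G Q) (w : E) :
    EqOn (dirDerivWithin Q w fun p => F p - G p)
      (fun p => dirDerivWithin Q w F p - dirDerivWithin Q w G p) Q := fun p hp => by
  simp [dirDerivWithin, fderivWithin_fun_sub (hQ p hp) (hF p hp) (hG p hp)]

lemma dirDerivWithin_mul (hQ : UniqueDiffOn ℝ Q) (hF : DifferentiableOn ℝ F Q)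
    (hG : DifferentiableOn ℝ G Q) (w : E) :
    EqOn (dirDerivWithin Q w fun p => F p * G p)
      (fun p => F p * dirDerivWithin Q w G p + dirDerivWithin Q w F p * G p) Q := fun p hp => by
  simp [dirDerivWithin, fderivWithin_fun_mul (hQ p hp) (hF p hp) (hG p hp), mul_comm]

lemma hasDerivWithinAt_slice_fst {J T : Set ℝ} {F : ℝ × ℝ → ℝ} {r t : ℝ}
    (hF : DifferentiableOn ℝ F (J ×ˢ T)) (hr : r ∈ J) (ht : t ∈ T) :
    HasDerivWithinAt (fun x => F (x, t)) (dirDerivWithin (J ×ˢ T) (1, 0) F (r, t)) J r :=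
  (hF (r, t) ⟨hr, ht⟩).hasFDerivWithinAt.comp_hasDerivWithinAt (f := fun x : ℝ => (x, t)) r
    ((hasDerivAt_id r).prodMk (hasDerivAt_const r t)).hasDerivWithinAt fun _ hx => ⟨hx, ht⟩

lemma hasDerivWithinAt_slice_snd {J T : Set ℝ} {F : ℝ × ℝ → ℝ} {r t : ℝ}
    (hF : DifferentiableOn ℝ F (J ×ˢ T)) (hr : r ∈ J) (ht : t ∈ T) :
    HasDerivWithinAt (fun s => F (r, s)) (dirDerivWithin (J ×ˢ T) (0, 1) F (r, t)) T t :=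
  (hF (r, t) ⟨hr, ht⟩).hasFDerivWithinAt.comp_hasDerivWithinAt (f := fun s : ℝ => (r, s)) t
    ((hasDerivAt_const t r).prodMk (hasDerivAt_id t)).hasDerivWithinAt fun _ hx => ⟨hr, hx⟩

lemma hasDerivAt_slice_fst {J T : Set ℝ} {F : ℝ × ℝ → ℝ} {r t : ℝ}
    (hF : DifferentiableOn ℝ F (J ×ˢ T)) (hr : J ∈ 𝓝 r) (ht : t ∈ T) :
    HasDerivAt (fun x => F (x, t)) (dirDerivWithin (J ×ˢ T) (1, 0) F (r, t)) r :=
  (hasDerivWithinAt_slice_fst hF (mem_of_mem_nhds hr) ht).hasDerivAt hr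

lemma hasDerivAt_slice_snd {J T : Set ℝ} {F : ℝ × ℝ → ℝ} {r t : ℝ}
    (hF : DifferentiableOn ℝ F (J ×ˢ T)) (hr : r ∈ J) (ht : T ∈ 𝓝 t) :
    HasDerivAt (fun s => F (r, s)) (dirDerivWithin (J ×ˢ T) (0, 1) F (r, t)) t :=
  (hasDerivWithinAt_slice_snd hF hr (mem_of_mem_nhds ht)).hasDerivAt ht

end DirectionalDerivative

section VanishingInTime

open scoped ContDiff

/-- `F` and its time derivatives up to order `k`, taken within `J ×ˢ T`, vanish on the time slice
`J × {t₀}`. -/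
def VanishesInTime (J T : Set ℝ) (t₀ : ℝ) : ℕ → (ℝ × ℝ → ℝ) → Prop
  | 0, F => ∀ r ∈ J, F (r, t₀) = 0
  | k + 1, F =>
    (∀ r ∈ J, F (r, t₀) = 0) ∧ VanishesInTime J T t₀ k (dirDerivWithin (J ×ˢ T) (0, 1) F)

namespace VanishesInTime

variable {J T : Set ℝ} {t₀ : ℝ} {k : ℕ} {F G : ℝ × ℝ → ℝ}

lemma eq_zero (h : VanishesInTime J T t₀ k F) : ∀ r ∈ J, F (r, t₀) = 0 := by
  cases k with
  | zero => exact h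
  | succ k => exact h.1

lemma of_succ (h : VanishesInTime J T t₀ (k + 1) F) : VanishesInTime J T t₀ k F := by
  induction k generalizing F with
  | zero => exact h.1
  | succ k ih => exact ⟨h.1, ih h.2⟩

lemma congr (ht₀ : t₀ ∈ T) (hFG : EqOn F G (J ×ˢ T)) (h : VanishesInTime J T t₀ k F) :
    VanishesInTime J T t₀ k G := by
  have slice : ∀ r ∈ J, G (r, t₀) = 0 := fun r hr => (hFG ⟨hr, ht₀⟩).symm.trans (h.eq_zero r hr)
  induction k generalizing F G with
  | zero => exact slice
  | succ k ih =>
    have hFG' := eqOn_dirDerivWithin hFG (0, 1)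
    exact ⟨slice, ih hFG' h.2 fun r hr => (hFG' ⟨hr, ht₀⟩).symm.trans (h.2.eq_zero r hr)⟩

lemma add (hU : UniqueDiffOn ℝ (J ×ˢ T)) (ht₀ : t₀ ∈ T) (hF : ContDiffOn ℝ ∞ F (J ×ˢ T))
    (hG : ContDiffOn ℝ ∞ G (J ×ˢ T)) (h : VanishesInTime J T t₀ k F)
    (h' : VanishesInTime J T t₀ k G) : VanishesInTime J T t₀ k fun p => F p + G p := by
  have slice : ∀ r ∈ J, F (r, t₀) + G (r, t₀) = 0 := fun r hr => by
    rw [h.eq_zero r hr, h'.eq_zero r hr, add_zero]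
  induction k generalizing F G with
  | zero => exact slice
  | succ k ih =>
    have hF' := contDiffOn_dirDerivWithin hU hF (0, 1)
    have hG' := contDiffOn_dirDerivWithin hU hG (0, 1)
    have sum_rule := dirDerivWithin_add hU (hF.differentiableOn (by simp))
      (hG.differentiableOn (by simp)) (0, 1)
    refine ⟨slice, (ih hF' hG' h.2 h'.2 fun r hr => ?_).congr ht₀ sum_rule.symm⟩
    rw [h.2.eq_zero r hr, h'.2.eq_zero r hr, add_zero]

lemma mul_left (hU : UniqueDiffOn ℝ (J ×ˢ T)) (ht₀ : t₀ ∈ T) (hF : ContDiffOn ℝ ∞ F (J ×ˢ T))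
    (hG : ContDiffOn ℝ ∞ G (J ×ˢ T)) (h : VanishesInTime J T t₀ k G) :
    VanishesInTime J T t₀ k fun p => F p * G p := by
  have slice : ∀ r ∈ J, F (r, t₀) * G (r, t₀) = 0 := fun r hr => by rw [h.eq_zero r hr, mul_zero]
  induction k generalizing F G with
  | zero => exact slice
  | succ k ih =>
    have hF' := contDiffOn_dirDerivWithin hU hF (0, 1)
    have hG' := contDiffOn_dirDerivWithin hU hG (0, 1)
    have product_rule := dirDerivWithin_mul hU (hF.differentiableOn (by simp))
      (hG.differentiableOn (by simp)) (0, 1)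
    have h₁ := ih hF hG' h.2 fun r hr => by rw [h.2.eq_zero r hr, mul_zero]
    have h₂ := ih hF' hG h.of_succ fun r hr => by rw [h.eq_zero r hr, mul_zero]
    exact ⟨slice, (add hU ht₀ (hF.mul hG') (hF'.mul hG) h₁ h₂).congr ht₀ product_rule.symm⟩

lemma dirDerivWithin_fst (hJ : IsOpen J) (hT : IsOpen T) (ht₀ : t₀ ∈ T)
    (hF : ContDiffOn ℝ ∞ F (J ×ˢ T)) (h : VanishesInTime J T t₀ k F) :
    VanishesInTime J T t₀ k (dirDerivWithin (J ×ˢ T) (1, 0) F) := by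
  have slice : ∀ {F : ℝ × ℝ → ℝ}, ContDiffOn ℝ ∞ F (J ×ˢ T) → (∀ r ∈ J, F (r, t₀) = 0) →
      ∀ r ∈ J, dirDerivWithin (J ×ˢ T) (1, 0) F (r, t₀) = 0 := fun hF h r hr =>
    (hJ.uniqueDiffWithinAt hr).eq_deriv _
      (hasDerivWithinAt_slice_fst (hF.differentiableOn (by simp)) hr ht₀)
      ((hasDerivWithinAt_const r J (0 : ℝ)).congr h (h r hr))
  have hU := (hJ.prod hT).uniqueDiffOn (𝕜 := ℝ)
  induction k generalizing F with
  | zero => exact slice hF h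
  | succ k ih =>
    have comm := dirDerivWithin_comm hU (by rw [(hJ.prod hT).interior_eq]; exact subset_closure)
      hF (1, 0) (0, 1)
    exact ⟨slice hF h.1, (ih (contDiffOn_dirDerivWithin hU hF _) h.2).congr ht₀ comm⟩

lemma exists_abs_le_mul_pow (hU : UniqueDiffOn ℝ (J ×ˢ T)) {K : Set ℝ} (hK : IsCompact K)
    (hKJ : K ⊆ J) {ε : ℝ} (hε : 0 < ε) (hT : Icc (t₀ - ε) t₀ ⊆ T)
    (hF : ContDiffOn ℝ ∞ F (J ×ˢ T)) (h : VanishesInTime J T t₀ k F) :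
    ∃ C, ∀ r ∈ K, ∀ s ∈ Icc 0 ε, |F (r, t₀ - s)| ≤ C * s ^ k := by
  have mem : ∀ {s}, s ∈ Icc 0 ε → t₀ - s ∈ Icc (t₀ - ε) t₀ := fun hs =>
    ⟨by linarith [hs.2], by linarith [hs.1]⟩
  induction k generalizing F with
  | zero =>
    obtain ⟨C, hC⟩ := (hK.prod isCompact_Icc).exists_bound_of_continuousOn
      (hF.continuousOn.mono (prod_mono hKJ hT))
    exact ⟨C, fun r hr s hs => by simpa using hC (r, t₀ - s) ⟨hr, mem hs⟩⟩
  | succ k ih =>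
    obtain ⟨C, hC⟩ := ih (contDiffOn_dirDerivWithin hU hF (0, 1)) h.2
    refine ⟨C, fun r hr s hs => ?_⟩
    have hC0 : 0 ≤ C := nonneg_of_mul_nonneg_left
      ((abs_nonneg _).trans (hC r hr ε ⟨hε.le, le_rfl⟩)) (pow_pos hε k)
    have deriv_time : ∀ u ∈ Icc 0 s, HasDerivWithinAt (fun u => F (r, t₀ - u))
        (dirDerivWithin (J ×ˢ T) (0, 1) F (r, t₀ - u) * -1) (Icc 0 s) u := fun u hu =>
      (hasDerivWithinAt_slice_snd (hF.differentiableOn (by simp)) (hKJ hr)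
        (hT (mem ⟨hu.1, hu.2.trans hs.2⟩))).comp u ((hasDerivAt_id u).const_sub t₀).hasDerivWithinAt
        fun x hx => hT (mem ⟨hx.1, hx.2.trans hs.2⟩)
    have bound : ∀ u ∈ Icc 0 s,
        ‖dirDerivWithin (J ×ˢ T) (0, 1) F (r, t₀ - u) * -1‖ ≤ C * s ^ k := fun u hu => by
      rw [mul_neg_one, norm_neg]
      exact (hC r hr u ⟨hu.1, hu.2.trans hs.2⟩).trans (by have := hu.1; have := hu.2; gcongr)
    have mean_value := (convex_Icc 0 s).norm_image_sub_le_of_norm_hasDerivWithin_le deriv_time bound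
      (left_mem_Icc.2 hs.1) (right_mem_Icc.2 hs.1)
    simpa only [sub_zero, h.1 r (hKJ hr), Real.norm_eq_abs, abs_of_nonneg hs.1, pow_succ,
      mul_assoc] using mean_value

lemma of_parabolic_eq (hJ : IsOpen J) (hT : IsOpen T) (ht₀ : t₀ ∈ T) {c₁ c₂ : ℝ × ℝ → ℝ}
    (hF : ContDiffOn ℝ ∞ F (J ×ˢ T)) (hc₁ : ContDiffOn ℝ ∞ c₁ (J ×ˢ T))
    (hc₂ : ContDiffOn ℝ ∞ c₂ (J ×ˢ T))
    (pde : EqOn (dirDerivWithin (J ×ˢ T) (0, 1) F) (fun p =>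
      dirDerivWithin (J ×ˢ T) (1, 0) (dirDerivWithin (J ×ˢ T) (1, 0) F) p +
        c₁ p * dirDerivWithin (J ×ˢ T) (1, 0) F p + c₂ p * F p) (J ×ˢ T))
    (h₀ : ∀ r ∈ J, F (r, t₀) = 0) (k : ℕ) : VanishesInTime J T t₀ k F := by
  have hU := (hJ.prod hT).uniqueDiffOn (𝕜 := ℝ)
  have hFr := contDiffOn_dirDerivWithin hU hF (1, 0)
  have hFrr := contDiffOn_dirDerivWithin hU hFr (1, 0)
  induction k with
  | zero => exact h₀
  | succ k ih =>
    have vr := ih.dirDerivWithin_fst hJ hT ht₀ hF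
    have vrr := vr.dirDerivWithin_fst hJ hT ht₀ hFr
    have v₁ := vr.mul_left hU ht₀ hc₁ hFr
    have v₂ := ih.mul_left hU ht₀ hc₂ hF
    exact ⟨h₀, ((vrr.add hU ht₀ hFrr (hc₁.mul hFr) v₁).add hU ht₀ (hFrr.add (hc₁.mul hFr))
      (hc₂.mul hF) v₂).congr ht₀ pde.symm⟩

end VanishesInTime

end VanishingInTime

section IntervalIntegral

open MeasureTheory
open scoped Topology Interval

variable {a b : ℝ} {T : Set ℝ}

lemma continuousOn_slice_fst {J : Set ℝ} {F : ℝ × ℝ → ℝ} (hF : ContinuousOn F (J ×ˢ T)) {s : ℝ}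
    (hs : s ∈ T) : ContinuousOn (fun r => F (r, s)) J :=
  hF.comp (by fun_prop) fun _ hr => ⟨hr, hs⟩

lemma hasDerivAt_integral_of_continuousOn (hab : a ≤ b) (hT : IsOpen T) {F F' : ℝ × ℝ → ℝ}
    (hF : ContinuousOn F (Icc a b ×ˢ T)) (hF' : ContinuousOn F' (Icc a b ×ˢ T))
    (hFF' : ∀ r ∈ Ioo a b, ∀ s ∈ T, HasDerivAt (fun s => F (r, s)) (F' (r, s)) s)
    {s : ℝ} (hs : s ∈ T) :
    HasDerivAt (fun s => ∫ r in a..b, F (r, s)) (∫ r in a..b, F' (r, s)) s := by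
  obtain ⟨δ, hδ, hδT⟩ := Metric.nhds_basis_closedBall.mem_iff.1 (hT.mem_nhds hs)
  obtain ⟨K, hK⟩ := (isCompact_Icc.prod (isCompact_closedBall s δ)).exists_bound_of_continuousOn
    (hF'.mono (prod_mono_right hδT))
  have integrable : ∀ {G : ℝ × ℝ → ℝ}, ContinuousOn G (Icc a b ×ˢ T) → ∀ τ ∈ T,
      IntervalIntegrable (fun r => G (r, τ)) volume a b := fun hG τ hτ =>
    (continuousOn_slice_fst hG hτ).intervalIntegrable_of_Icc hab
  have ae_mem_Ioo : ∀ᵐ r : ℝ, r ∈ Ι a b → r ∈ Ioo a b := by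
    filter_upwards [Measure.ae_ne volume b] with r hr h
    rw [uIoc_of_le hab] at h
    exact ⟨h.1, lt_of_le_of_ne h.2 hr⟩
  refine (intervalIntegral.hasDerivAt_integral_of_dominated_loc_of_deriv_le
    (F := fun τ r => F (r, τ)) (F' := fun τ r => F' (r, τ)) (bound := fun _ => K)
    (Metric.closedBall_mem_nhds s hδ) ?_ (integrable hF s hs)
    (integrable hF' s hs).def'.aestronglyMeasurable ?_ intervalIntegrable_const ?_).2
  · filter_upwards [hT.mem_nhds hs] with τ hτ
      using (integrable hF τ hτ).def'.aestronglyMeasurable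
  · filter_upwards [ae_mem_Ioo] with r hr h τ hτ
      using hK (r, τ) ⟨Ioo_subset_Icc_self (hr h), hτ⟩
  · filter_upwards [ae_mem_Ioo] with r hr h τ hτ using hFF' r (hr h) τ (hδT hτ)

lemma continuousOn_rpow_mul_of_bounded {R p K : ℝ} (hR : 0 < R) (hp : 0 < p) {g : ℝ × ℝ → ℝ}
    (hg : ContinuousOn g (Ioc 0 R ×ˢ T)) (hK : ∀ q ∈ Ioo 0 R ×ˢ T, |g q| ≤ K) :
    ContinuousOn (fun q : ℝ × ℝ => q.1 ^ p * g q) (Icc 0 R ×ˢ T) := by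
  rintro ⟨r, t⟩ ⟨hr, ht⟩
  have hpow : Continuous fun q : ℝ × ℝ => q.1 ^ p := continuous_fst.rpow_const fun _ => .inr hp.le
  rcases hr.1.eq_or_lt with rfl | hr0
  · have hpowK : Continuous fun q : ℝ × ℝ => q.1 ^ p * K := hpow.mul continuous_const
    have lim : Tendsto (fun q : ℝ × ℝ => q.1 ^ p * K) (𝓝[Icc 0 R ×ˢ T] (0, t)) (𝓝 0) := by
      simpa [Real.zero_rpow hp.ne'] using
        (hpowK.tendsto ((0 : ℝ), t)).mono_left nhdsWithin_le_nhds
    rw [ContinuousWithinAt, Real.zero_rpow hp.ne', zero_mul]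
    refine squeeze_zero_norm' ?_ lim
    filter_upwards [self_mem_nhdsWithin, mem_nhdsWithin_of_mem_nhds
      ((isOpen_Iio.preimage continuous_fst).mem_nhds hR)] with q hq hqR
    rw [norm_mul, Real.norm_of_nonneg (Real.rpow_nonneg hq.1.1 p)]
    rcases hq.1.1.eq_or_lt with h0 | h0
    · simp [← h0, Real.zero_rpow hp.ne']
    · exact mul_le_mul_of_nonneg_left (hK q ⟨⟨h0, hqR⟩, hq.2⟩) (Real.rpow_nonneg h0.le p)
  · refine hpow.continuousWithinAt.mul ((hg (r, t) ⟨⟨hr0, hr.2⟩, ht⟩).mono_of_mem_nhdsWithin ?_)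
    filter_upwards [self_mem_nhdsWithin, mem_nhdsWithin_of_mem_nhds
      ((isOpen_Ioi.preimage continuous_fst).mem_nhds hr0)] with q hq hq0
    exact ⟨⟨hq0, hq.1.2⟩, hq.2⟩

end IntervalIntegral

section FrequencyODE

open scoped Topology

variable {S c K : ℝ} {N N' I I' : ℝ → ℝ}

lemma monotoneOn_exp_mul_of_le_deriv {a b : ℝ} (hN : ∀ s ∈ Ioo a b, HasDerivAt N (N' s) s)
    (h : ∀ s ∈ Ioo a b, -(c * N s) ≤ N' s) :
    MonotoneOn (fun s => Real.exp (c * s) * N s) (Ioo a b) := by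
  have deriv : ∀ s ∈ Ioo a b, HasDerivAt (fun s => Real.exp (c * s) * N s)
      (Real.exp (c * s) * (c * 1) * N s + Real.exp (c * s) * N' s) s := fun s hs =>
    ((hasDerivAt_id s).const_mul c).exp.mul (hN s hs)
  refine monotoneOn_of_hasDerivWithinAt_nonneg (convex_Ioo a b)
    (fun s hs => (deriv s hs).continuousAt.continuousWithinAt)
    (fun s hs => (deriv s (interior_subset hs)).hasDerivWithinAt) fun s hs => ?_
  nlinarith [Real.exp_pos (c * s), h s (interior_subset hs)]

lemma antitoneOn_mul_rpow_neg_of_mul_deriv_le (hI : ∀ s ∈ Ioo 0 S, HasDerivAt I (I' s) s)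
    (h : ∀ s ∈ Ioo 0 S, s * I' s ≤ K * I s) : AntitoneOn (fun s => I s * s ^ (-K)) (Ioo 0 S) := by
  have deriv : ∀ s ∈ Ioo 0 S, HasDerivAt (fun s => I s * s ^ (-K))
      (I' s * s ^ (-K) + I s * (-K * s ^ (-K - 1))) s := fun s hs =>
    (hI s hs).mul (Real.hasDerivAt_rpow_const (.inl hs.1.ne'))
  refine antitoneOn_of_hasDerivWithinAt_nonpos (convex_Ioo 0 S)
    (fun s hs => (deriv s hs).continuousAt.continuousWithinAt)
    (fun s hs => (deriv s (interior_subset hs)).hasDerivWithinAt) fun s hs => ?_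
  have hs' := interior_subset hs
  have factor : I' s * s ^ (-K) + I s * (-K * s ^ (-K - 1)) =
      s ^ (-K - 1) * (s * I' s - K * I s) := by
    rw [Real.rpow_sub_one hs'.1.ne']
    field_simp [hs'.1.ne']
    ring
  rw [factor]
  exact mul_nonpos_of_nonneg_of_nonpos (Real.rpow_nonneg hs'.1.le _) (by linarith [h s hs'])

lemma not_forall_le_mul_pow_of_mul_deriv_le (hS : 0 < S)
    (hI : ∀ s ∈ Ioo 0 S, HasDerivAt I (I' s) s) (hpos : ∀ s ∈ Ioo 0 S, 0 < I s)
    (h : ∀ s ∈ Ioo 0 S, s * I' s ≤ K * I s) :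
    ¬ ∀ k : ℕ, ∃ B, ∀ s ∈ Ioo 0 S, I s ≤ B * s ^ k := by
  intro hflat
  obtain ⟨k, hk⟩ := exists_nat_gt K
  obtain ⟨B, hB⟩ := hflat k
  have anti := antitoneOn_mul_rpow_neg_of_mul_deriv_le hI h
  have hS2 : S / 2 ∈ Ioo 0 S := ⟨by linarith, by linarith⟩
  have upper_tendsto : Tendsto (fun s : ℝ => B * s ^ (k - K)) (𝓝[>] 0) (𝓝 0) := by
    have := (Real.continuousAt_rpow_const 0 (k - K) (.inr (by linarith))).const_mul B
    simpa [Real.zero_rpow (sub_pos.2 hk).ne'] using this.tendsto.mono_left nhdsWithin_le_nhds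
  refine (mul_pos (hpos _ hS2) (Real.rpow_pos_of_pos hS2.1 (-K))).not_ge
    (ge_of_tendsto upper_tendsto ?_)
  filter_upwards [Ioo_mem_nhdsGT hS2.1] with s hs
  have hs' : s ∈ Ioo 0 S := ⟨hs.1, hs.2.trans hS2.2⟩
  calc I (S / 2) * (S / 2) ^ (-K) ≤ I s * s ^ (-K) := anti hs' hS2 hs.2.le
    _ ≤ B * s ^ k * s ^ (-K) :=
      mul_le_mul_of_nonneg_right (hB s hs') (Real.rpow_nonneg hs.1.le _)
    _ = B * s ^ (k - K) := by
      rw [mul_assoc, ← Real.rpow_natCast, ← Real.rpow_add hs.1, sub_eq_add_neg]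

lemma not_forall_le_mul_pow_of_frequency {D D' : ℝ → ℝ} {A B : ℝ} (hS : 0 < S) (hc : 0 ≤ c)
    (hA : 0 ≤ A) (hI : ∀ s ∈ Ioo 0 S, HasDerivAt I (I' s) s)
    (hD : ∀ s ∈ Ioo 0 S, HasDerivAt D (D' s) s) (hIpos : ∀ s ∈ Ioo 0 S, 0 < I s)
    (hDnonneg : ∀ s ∈ Ioo 0 S, 0 ≤ D s)
    (growth : ∀ s ∈ Ioo 0 S, s * I' s ≤ A * (s * D s) + B * I s)
    (frequency : ∀ s ∈ Ioo 0 S,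
      -(c * (s * D s * I s)) ≤ (D s + s * D' s) * I s - s * D s * I' s) :
    ¬ ∀ k : ℕ, ∃ B, ∀ s ∈ Ioo 0 S, I s ≤ B * s ^ k := by
  have hN : ∀ s ∈ Ioo 0 S, HasDerivAt (fun s => s * D s / I s)
      (((1 * D s + s * D' s) * I s - s * D s * I' s) / I s ^ 2) s := fun s hs =>
    ((hasDerivAt_id s).mul (hD s hs)).div (hI s hs) (hIpos s hs).ne'
  have mono := monotoneOn_exp_mul_of_le_deriv (c := c) hN fun s hs => by
    have := hIpos s hs
    rw [le_div_iff₀ (by positivity), one_mul]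
    calc -(c * (s * D s / I s)) * I s ^ 2 = -(c * (s * D s * I s)) := by field_simp
      _ ≤ _ := frequency s hs
  have hS2 : S / 2 ∈ Ioo 0 S := ⟨by linarith, by linarith⟩
  set M := Real.exp (c * (S / 2)) * (S / 2 * D (S / 2) / I (S / 2))
  have sub : ∀ {s}, s ∈ Ioo 0 (S / 2) → s ∈ Ioo 0 S := fun hs => ⟨hs.1, hs.2.trans hS2.2⟩
  have bounded : ∀ s ∈ Ioo 0 (S / 2), s * D s ≤ M * I s := fun s hs => by
    have hN0 : 0 ≤ s * D s / I s :=
      div_nonneg (mul_nonneg hs.1.le (hDnonneg s (sub hs))) (hIpos s (sub hs)).le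
    rw [← div_le_iff₀ (hIpos s (sub hs))]
    exact (le_mul_of_one_le_left hN0 (Real.one_le_exp (mul_nonneg hc hs.1.le))).trans
      (mono (sub hs) hS2 hs.2.le)
  intro hflat
  refine not_forall_le_mul_pow_of_mul_deriv_le (K := A * M + B) hS2.1 (fun s hs => hI s (sub hs))
    (fun s hs => hIpos s (sub hs)) (fun s hs => ?_)
    fun k => (hflat k).imp fun _ h s hs => h s (sub hs)
  calc s * I' s ≤ A * (s * D s) + B * I s := growth s (sub hs)
    _ ≤ A * (M * I s) + B * I s := by linarith [mul_le_mul_of_nonneg_left (bounded s hs) hA]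
    _ = (A * M + B) * I s := by ring

end FrequencyODE

section GaussianWeight

/-- The backward heat kernel at `(r, s)` with pole `(x₀, 0)`, up to its normalization. -/
noncomputable def gaussWeight (x₀ : ℝ) (q : ℝ × ℝ) : ℝ :=
  Real.exp (-(q.1 - x₀) ^ 2 / (4 * q.2))

/-- The logarithmic derivative of `gaussWeight` in `r`, with the opposite sign. -/
noncomputable def gaussDrift (x₀ : ℝ) (q : ℝ × ℝ) : ℝ :=
  (q.1 - x₀) / (2 * q.2)

/-- The integral over `[0, R]` of the time slice at `s` of `F` against `gaussWeight`. -/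
noncomputable def gaussIntegral (R x₀ : ℝ) (F : ℝ × ℝ → ℝ) (s : ℝ) : ℝ :=
  ∫ r in 0..R, F (r, s) * gaussWeight x₀ (r, s)

variable {R x₀ s : ℝ} {T : Set ℝ} {F H : ℝ × ℝ → ℝ}

lemma gaussWeight_pos (x₀ : ℝ) (q : ℝ × ℝ) : 0 < gaussWeight x₀ q := Real.exp_pos _

lemma gaussWeight_le_one (x₀ r : ℝ) (hs : 0 ≤ s) : gaussWeight x₀ (r, s) ≤ 1 :=
  Real.exp_le_one_iff.2 <| div_nonpos_of_nonpos_of_nonneg (neg_nonpos.2 (sq_nonneg _))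
    (mul_nonneg zero_le_four hs)

lemma gaussWeight_le_mul_pow {r δ : ℝ} (hs : 0 < s) (hδ : 0 < δ) (hr : δ ≤ |r - x₀|) (k : ℕ) :
    gaussWeight x₀ (r, s) ≤ k.factorial * (4 / δ ^ 2) ^ k * s ^ k := by
  have hx : 0 < δ ^ 2 / (4 * s) := by positivity
  calc gaussWeight x₀ (r, s) ≤ Real.exp (-(δ ^ 2 / (4 * s))) := by
        rw [gaussWeight, neg_div, ← sq_abs (r - x₀)]
        gcongr
    _ ≤ ((δ ^ 2 / (4 * s)) ^ k / k.factorial)⁻¹ := by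
        rw [Real.exp_neg]
        exact inv_anti₀ (by positivity) (Real.pow_div_factorial_le_exp _ hx.le k)
    _ = k.factorial * (4 / δ ^ 2) ^ k * s ^ k := by
        rw [inv_div, mul_assoc, ← mul_pow, div_eq_mul_inv, ← inv_pow, inv_div]
        ring

lemma continuous_gaussWeight_slice (x₀ s : ℝ) : Continuous fun r => gaussWeight x₀ (r, s) :=
  ((by fun_prop : Continuous fun r => -(r - x₀) ^ 2).div_const (4 * s)).rexp

lemma continuousOn_gaussWeight {J : Set ℝ} (hT : ∀ s ∈ T, s ≠ 0) :
    ContinuousOn (gaussWeight x₀) (J ×ˢ T) := by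
  have : ∀ q ∈ J ×ˢ T, 4 * q.2 ≠ 0 := fun q hq => mul_ne_zero (by norm_num) (hT _ hq.2)
  unfold gaussWeight
  fun_prop (disch := assumption)

lemma continuousOn_gaussDrift {J : Set ℝ} (hT : ∀ s ∈ T, s ≠ 0) :
    ContinuousOn (gaussDrift x₀) (J ×ˢ T) := by
  have : ∀ q ∈ J ×ˢ T, 2 * q.2 ≠ 0 := fun q hq => mul_ne_zero (by norm_num) (hT _ hq.2)
  unfold gaussDrift
  fun_prop (disch := assumption)

lemma hasDerivAt_gaussWeight_fst (x₀ r s : ℝ) :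
    HasDerivAt (fun r => gaussWeight x₀ (r, s))
      (-(gaussDrift x₀ (r, s) * gaussWeight x₀ (r, s))) r := by
  have := ((((hasDerivAt_id r).sub_const x₀).fun_pow 2).fun_neg.div_const (4 * s)).exp
  refine this.congr_deriv ?_
  simp only [gaussWeight, gaussDrift, id]
  ring

lemma hasDerivAt_gaussWeight_snd (x₀ r : ℝ) (hs : s ≠ 0) :
    HasDerivAt (fun s => gaussWeight x₀ (r, s))
      (gaussDrift x₀ (r, s) ^ 2 * gaussWeight x₀ (r, s)) s := by
  have := ((hasDerivAt_const s (-(r - x₀) ^ 2)).fun_div ((hasDerivAt_id s).const_mul 4)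
    (mul_ne_zero four_ne_zero hs)).exp
  refine this.congr_deriv ?_
  simp only [gaussWeight, gaussDrift, id]
  field_simp
  ring

lemma hasDerivAt_gaussDrift_fst (x₀ r s : ℝ) :
    HasDerivAt (fun r => gaussDrift x₀ (r, s)) (1 / (2 * s)) r :=
  ((hasDerivAt_id r).sub_const x₀).div_const (2 * s)

lemma intervalIntegrable_mul_gaussWeight (hR : 0 ≤ R) (hF : ContinuousOn F (Icc 0 R ×ˢ T))
    (hs : s ∈ T) : IntervalIntegrable (fun r => F (r, s) * gaussWeight x₀ (r, s))
      MeasureTheory.volume 0 R :=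
  ((continuousOn_slice_fst hF hs).mul
    (continuous_gaussWeight_slice x₀ s).continuousOn).intervalIntegrable_of_Icc hR

lemma gaussIntegral_add (hR : 0 ≤ R) (hF : ContinuousOn F (Icc 0 R ×ˢ T))
    (hH : ContinuousOn H (Icc 0 R ×ˢ T)) (hs : s ∈ T) :
    gaussIntegral R x₀ (fun q => F q + H q) s =
      gaussIntegral R x₀ F s + gaussIntegral R x₀ H s := by
  simp only [gaussIntegral, add_mul]
  exact intervalIntegral.integral_add (intervalIntegrable_mul_gaussWeight hR hF hs)
    (intervalIntegrable_mul_gaussWeight hR hH hs)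

lemma gaussIntegral_const_mul (c : ℝ) :
    gaussIntegral R x₀ (fun q => c * F q) s = c * gaussIntegral R x₀ F s := by
  simp only [gaussIntegral, mul_assoc, intervalIntegral.integral_const_mul]

lemma gaussIntegral_mono (hR : 0 ≤ R) (hF : ContinuousOn F (Icc 0 R ×ˢ T))
    (hH : ContinuousOn H (Icc 0 R ×ˢ T)) (hs : s ∈ T)
    (h : ∀ r ∈ Ioo 0 R, F (r, s) ≤ H (r, s)) :
    gaussIntegral R x₀ F s ≤ gaussIntegral R x₀ H s :=
  intervalIntegral.integral_mono_on_of_le_Ioo hR (intervalIntegrable_mul_gaussWeight hR hF hs)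
    (intervalIntegrable_mul_gaussWeight hR hH hs) fun r hr =>
      mul_le_mul_of_nonneg_right (h r hr) (gaussWeight_pos x₀ (r, s)).le

lemma gaussIntegral_nonneg (hR : 0 ≤ R) (h : ∀ q, 0 ≤ F q) : 0 ≤ gaussIntegral R x₀ F s :=
  intervalIntegral.integral_nonneg hR fun r _ => mul_nonneg (h (r, s)) (gaussWeight_pos x₀ _).le

lemma gaussIntegral_pos (hF : ContinuousOn F (Icc 0 R ×ˢ T)) (hs : s ∈ T) (h : ∀ q, 0 ≤ F q)
    {r : ℝ} (hr : r ∈ Ioo 0 R) (hFr : F (r, s) ≠ 0) : 0 < gaussIntegral R x₀ F s := by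
  refine intervalIntegral.integral_pos (hr.1.trans hr.2) ((continuousOn_slice_fst hF hs).mul
    (continuous_gaussWeight_slice x₀ s).continuousOn)
    (fun r _ => mul_nonneg (h (r, s)) (gaussWeight_pos x₀ _).le) ⟨r, Ioo_subset_Icc_self hr, ?_⟩
  exact mul_pos ((h (r, s)).lt_of_ne' hFr) (gaussWeight_pos x₀ _)

lemma sq_gaussIntegral_mul_le (hR : 0 ≤ R) (hF : ContinuousOn F (Icc 0 R ×ˢ T))
    (hH : ContinuousOn H (Icc 0 R ×ˢ T)) (hs : s ∈ T) :
    gaussIntegral R x₀ (fun q => F q * H q) s ^ 2 ≤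
      gaussIntegral R x₀ (fun q => F q ^ 2) s * gaussIntegral R x₀ (fun q => H q ^ 2) s := by
  have expand : ∀ x : ℝ, gaussIntegral R x₀ (fun q => (x * F q + H q) ^ 2) s =
      gaussIntegral R x₀ (fun q => F q ^ 2) s * (x * x) +
        2 * gaussIntegral R x₀ (fun q => F q * H q) s * x +
        gaussIntegral R x₀ (fun q => H q ^ 2) s := fun x => by
    calc gaussIntegral R x₀ (fun q => (x * F q + H q) ^ 2) s
        = gaussIntegral R x₀ (fun q => x * x * F q ^ 2 + 2 * x * (F q * H q) + H q ^ 2) s := by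
          congr 1; ext q; ring
      _ = _ := by
          rw [gaussIntegral_add hR (by fun_prop) (by fun_prop) hs,
            gaussIntegral_add hR (by fun_prop) (by fun_prop) hs, gaussIntegral_const_mul,
            gaussIntegral_const_mul]
          ring
  have := discrim_le_zero fun x => (expand x).symm ▸ gaussIntegral_nonneg hR fun q => sq_nonneg _
  rw [discrim] at this
  linarith

lemma hasDerivAt_gaussIntegral (hR : 0 ≤ R) (hT : IsOpen T) (hT0 : ∀ s ∈ T, s ≠ 0)
    {F' : ℝ × ℝ → ℝ} (hF : ContinuousOn F (Icc 0 R ×ˢ T)) (hF' : ContinuousOn F' (Icc 0 R ×ˢ T))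
    (hFF' : ∀ r ∈ Ioo 0 R, ∀ s ∈ T, HasDerivAt (fun s => F (r, s)) (F' (r, s)) s) (hs : s ∈ T) :
    HasDerivAt (gaussIntegral R x₀ F)
      (gaussIntegral R x₀ F' s + gaussIntegral R x₀ (fun q => F q * gaussDrift x₀ q ^ 2) s) s := by
  have hG := continuousOn_gaussWeight (J := Icc 0 R) (x₀ := x₀) hT0
  have hh := continuousOn_gaussDrift (J := Icc 0 R) (x₀ := x₀) hT0
  rw [← gaussIntegral_add hR hF' (by fun_prop) hs]
  refine hasDerivAt_integral_of_continuousOn hR hT (F := fun q => F q * gaussWeight x₀ q)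
    (F' := fun q => (F' q + F q * gaussDrift x₀ q ^ 2) * gaussWeight x₀ q)
    (hF.mul hG) ((hF'.add (hF.mul (hh.pow 2))).mul hG) (fun r hr s hs => ?_) hs
  exact ((hFF' r hr s hs).mul (hasDerivAt_gaussWeight_snd x₀ r (hT0 s hs))).congr_deriv (by ring)

lemma sub_le_gaussIntegral (hR : 0 ≤ R) (hs : s ∈ T) {g φ : ℝ × ℝ → ℝ} {g' : ℝ → ℝ}
    (hg : ContinuousOn g (Icc 0 R ×ˢ T)) (hφ : ContinuousOn φ (Icc 0 R ×ˢ T))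
    (hgg' : ∀ r ∈ Ioo 0 R, HasDerivAt (fun r => g (r, s)) (g' r) r)
    (hle : ∀ r ∈ Ioo 0 R, g' r - gaussDrift x₀ (r, s) * g (r, s) ≤ φ (r, s)) :
    g (R, s) * gaussWeight x₀ (R, s) - g (0, s) * gaussWeight x₀ (0, s) ≤
      gaussIntegral R x₀ φ s := by
  have hG := (continuous_gaussWeight_slice x₀ s).continuousOn (s := Icc 0 R)
  refine intervalIntegral.sub_le_integral_of_hasDeriv_right_of_le hR
    ((continuousOn_slice_fst hg hs).mul hG)
    (fun r hr => ((hgg' r hr).mul (hasDerivAt_gaussWeight_fst x₀ r s)).hasDerivWithinAt)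
    ((continuousOn_slice_fst hφ hs).mul hG).integrableOn_Icc fun r hr => ?_
  calc g' r * gaussWeight x₀ (r, s) + g (r, s) * -(gaussDrift x₀ (r, s) * gaussWeight x₀ (r, s))
      = (g' r - gaussDrift x₀ (r, s) * g (r, s)) * gaussWeight x₀ (r, s) := by ring
    _ ≤ φ (r, s) * gaussWeight x₀ (r, s) :=
      mul_le_mul_of_nonneg_right (hle r hr) (gaussWeight_pos x₀ _).le

lemma gaussIntegral_eq_sub (hR : 0 ≤ R) (hs : s ∈ T) {g φ : ℝ × ℝ → ℝ} {g' : ℝ → ℝ}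
    (hg : ContinuousOn g (Icc 0 R ×ˢ T)) (hφ : ContinuousOn φ (Icc 0 R ×ˢ T))
    (hgg' : ∀ r ∈ Ioo 0 R, HasDerivAt (fun r => g (r, s)) (g' r) r)
    (heq : ∀ r ∈ Ioo 0 R, g' r - gaussDrift x₀ (r, s) * g (r, s) = φ (r, s)) :
    gaussIntegral R x₀ φ s =
      g (R, s) * gaussWeight x₀ (R, s) - g (0, s) * gaussWeight x₀ (0, s) := by
  have upper := sub_le_gaussIntegral hR hs hg hφ hgg' fun r hr => (heq r hr).le
  have lower := sub_le_gaussIntegral (x₀ := x₀) (g := fun q => -g q) (φ := fun q => -1 * φ q)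
    hR hs hg.neg (continuousOn_const.mul hφ) (fun r hr => (hgg' r hr).neg) fun r hr => by
      linarith [heq r hr]
  rw [gaussIntegral_const_mul] at lower
  linarith

end GaussianWeight

section BackwardFlow

variable {κ R S C x₀ s : ℝ} {u ur us urs f : ℝ × ℝ → ℝ}

/-- `u` solves the backward heat equation `u_s + u_rr - (κ / r²) u + f = 0` on `(0, R) × (0, S)`
with zero Dirichlet data, and `f` is dominated by the energy density. Here `ur`, `us` and `urs` are
the partial derivatives of `u`; the continuity assumptions reach the singular end `r = 0`, where the
quotients by `r` take the junk value `0`. -/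
structure BackwardFlow (κ R S C : ℝ) (u ur us urs f : ℝ × ℝ → ℝ) : Prop where
  continuousOn : ContinuousOn u (Icc 0 R ×ˢ Ioo 0 S)
  continuousOn_ur : ContinuousOn ur (Icc 0 R ×ˢ Ioo 0 S)
  continuousOn_us : ContinuousOn us (Icc 0 R ×ˢ Ioo 0 S)
  continuousOn_urs : ContinuousOn urs (Icc 0 R ×ˢ Ioo 0 S)
  continuousOn_div : ContinuousOn (fun q => u q / q.1) (Icc 0 R ×ˢ Ioo 0 S)
  continuousOn_us_div : ContinuousOn (fun q => us q / q.1) (Icc 0 R ×ˢ Ioo 0 S)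
  continuousOn_f : ContinuousOn f (Icc 0 R ×ˢ Ioo 0 S)
  eq_zero_left : ∀ s ∈ Ioo 0 S, u (0, s) = 0
  eq_zero_right : ∀ s ∈ Ioo 0 S, u (R, s) = 0
  ur_eq_zero : ∀ s ∈ Ioo 0 S, ur (0, s) = 0
  us_eq_zero_left : ∀ s ∈ Ioo 0 S, us (0, s) = 0
  us_eq_zero_right : ∀ s ∈ Ioo 0 S, us (R, s) = 0
  hasDerivAt_fst : ∀ r ∈ Ioo 0 R, ∀ s ∈ Ioo 0 S, HasDerivAt (fun r => u (r, s)) (ur (r, s)) r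
  hasDerivAt_ur_fst : ∀ r ∈ Ioo 0 R, ∀ s ∈ Ioo 0 S,
    HasDerivAt (fun r => ur (r, s)) (κ * u (r, s) / r ^ 2 - us (r, s) - f (r, s)) r
  hasDerivAt_us_fst : ∀ r ∈ Ioo 0 R, ∀ s ∈ Ioo 0 S, HasDerivAt (fun r => us (r, s)) (urs (r, s)) r
  hasDerivAt_snd : ∀ r ∈ Ioo 0 R, ∀ s ∈ Ioo 0 S, HasDerivAt (fun s => u (r, s)) (us (r, s)) s
  hasDerivAt_ur_snd : ∀ r ∈ Ioo 0 R, ∀ s ∈ Ioo 0 S, HasDerivAt (fun s => ur (r, s)) (urs (r, s)) s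
  f_sq_le : ∀ r ∈ Ioo 0 R, ∀ s ∈ Ioo 0 S,
    f (r, s) ^ 2 ≤ C * (ur (r, s) ^ 2 + κ * (u (r, s) / r) ^ 2)

/-- The energy density `u_r² + (κ / r²) u²` of the operator `-∂_r² + κ / r²`. -/
noncomputable def energyDensity (κ : ℝ) (u ur : ℝ × ℝ → ℝ) (q : ℝ × ℝ) : ℝ :=
  ur q ^ 2 + κ * (u q / q.1) ^ 2

/-- The operator `u_rr - gaussDrift * u_r - (κ / r²) u`, which is symmetric for `gaussWeight`,
applied to a solution of `u_s + u_rr - (κ / r²) u + f = 0`. -/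
noncomputable def driftOperator (x₀ : ℝ) (ur us f : ℝ × ℝ → ℝ) (q : ℝ × ℝ) : ℝ :=
  -us q - f q - gaussDrift x₀ q * ur q

/-- The flux `2 u_r u_s + gaussDrift * (u_r² - (κ / r²) u²)` whose divergence compares the time
derivative of the weighted energy with the square of `driftOperator`. -/
noncomputable def energyFlux (κ x₀ : ℝ) (u ur us : ℝ × ℝ → ℝ) (q : ℝ × ℝ) : ℝ :=
  2 * (ur q * us q) + gaussDrift x₀ q * (ur q ^ 2 - κ * (u q / q.1) ^ 2)

namespace BackwardFlow

lemma continuousOn_energyDensity (h : BackwardFlow κ R S C u ur us urs f) :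
    ContinuousOn (energyDensity κ u ur) (Icc 0 R ×ˢ Ioo 0 S) :=
  (h.continuousOn_ur.pow 2).add ((h.continuousOn_div.pow 2).const_mul κ)

lemma continuousOn_driftOperator (h : BackwardFlow κ R S C u ur us urs f) :
    ContinuousOn (driftOperator x₀ ur us f) (Icc 0 R ×ˢ Ioo 0 S) :=
  (h.continuousOn_us.neg.sub h.continuousOn_f).sub
    ((continuousOn_gaussDrift fun _ hs => hs.1.ne').mul h.continuousOn_ur)

lemma gaussIntegral_energyDensity_add (hR : 0 ≤ R) (h : BackwardFlow κ R S C u ur us urs f)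
    (hs : s ∈ Ioo 0 S) :
    gaussIntegral R x₀ (energyDensity κ u ur) s +
      gaussIntegral R x₀ (fun q => u q * driftOperator x₀ ur us f q) s = 0 := by
  have hφ : ContinuousOn (fun q => u q * driftOperator x₀ ur us f q) (Icc 0 R ×ˢ Ioo 0 S) :=
    h.continuousOn.mul h.continuousOn_driftOperator
  rw [← gaussIntegral_add hR h.continuousOn_energyDensity hφ hs,
    gaussIntegral_eq_sub hR hs (h.continuousOn.mul h.continuousOn_ur)
      (h.continuousOn_energyDensity.fun_add hφ)
      (fun r hr => (h.hasDerivAt_fst r hr s hs).mul (h.hasDerivAt_ur_fst r hr s hs)) fun _ _ => ?_,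
    Pi.mul_apply, Pi.mul_apply, h.eq_zero_left s hs, h.eq_zero_right s hs]
  · ring
  · simp only [energyDensity, driftOperator, Pi.mul_apply]
    ring

lemma hasDerivAt_gaussIntegral_sq (hR : 0 ≤ R) (h : BackwardFlow κ R S C u ur us urs f)
    (hs : s ∈ Ioo 0 S) :
    HasDerivAt (gaussIntegral R x₀ fun q => u q ^ 2)
      (2 * gaussIntegral R x₀ (energyDensity κ u ur) s -
        2 * gaussIntegral R x₀ (fun q => u q * f q) s +
        gaussIntegral R x₀ (fun q => u q ^ 2) s / (2 * s)) s := by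
  have hu := h.continuousOn
  have hur := h.continuousOn_ur
  have hus := h.continuousOn_us
  have hf := h.continuousOn_f
  have hE := h.continuousOn_energyDensity
  have hh := continuousOn_gaussDrift (J := Icc 0 R) (x₀ := x₀) fun s (hs : s ∈ Ioo 0 S) => hs.1.ne'
  refine (hasDerivAt_gaussIntegral (F' := fun q => 2 * (u q * us q)) hR isOpen_Ioo
    (fun _ hs => hs.1.ne') (hu.fun_pow 2) (by fun_prop) (fun r hr s hs => ?_) hs).congr_deriv ?_
  · exact ((h.hasDerivAt_snd r hr s hs).fun_pow 2).congr_deriv (by norm_num [mul_assoc])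
  have parts := gaussIntegral_eq_sub (x₀ := x₀) (s := s)
    (g := fun q => -2 * (u q * ur q) - gaussDrift x₀ q * u q ^ 2)
    (φ := fun q => (2 * (u q * us q) + u q ^ 2 * gaussDrift x₀ q ^ 2) +
      (-2 * energyDensity κ u ur q + (2 * (u q * f q) + -1 / (2 * s) * u q ^ 2)))
    hR hs (by fun_prop) (by fun_prop)
    (fun r hr => (((h.hasDerivAt_fst r hr s hs).mul (h.hasDerivAt_ur_fst r hr s hs)).const_mul
      (-2)).sub ((hasDerivAt_gaussDrift_fst x₀ r s).mul ((h.hasDerivAt_fst r hr s hs).fun_pow 2)))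
    fun _ _ => by simp only [energyDensity]; ring
  rw [gaussIntegral_add hR (by fun_prop) (by fun_prop) hs,
    gaussIntegral_add hR (by fun_prop) (by fun_prop) hs,
    gaussIntegral_add hR (by fun_prop) (by fun_prop) hs,
    gaussIntegral_add hR (by fun_prop) (by fun_prop) hs, gaussIntegral_const_mul,
    gaussIntegral_const_mul, gaussIntegral_const_mul, gaussIntegral_const_mul, h.eq_zero_left s hs,
    h.eq_zero_right s hs] at parts
  rw [gaussIntegral_const_mul]
  linear_combination parts

lemma hasDerivAt_gaussIntegral_energyDensity (hR : 0 ≤ R)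
    (h : BackwardFlow κ R S C u ur us urs f) (hs : s ∈ Ioo 0 S) :
    HasDerivAt (gaussIntegral R x₀ (energyDensity κ u ur))
      (gaussIntegral R x₀ (fun q => 2 * (ur q * urs q + κ * (u q / q.1 * (us q / q.1)))) s +
        gaussIntegral R x₀ (fun q => energyDensity κ u ur q * gaussDrift x₀ q ^ 2) s) s := by
  have hur := h.continuousOn_ur
  have hurs := h.continuousOn_urs
  have hdiv := h.continuousOn_div
  have hdiv' := h.continuousOn_us_div
  refine hasDerivAt_gaussIntegral hR isOpen_Ioo (fun _ hs => hs.1.ne') h.continuousOn_energyDensity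
    (by fun_prop) (fun r hr s hs => ?_) hs
  exact (((h.hasDerivAt_ur_snd r hr s hs).fun_pow 2).add
    ((((h.hasDerivAt_snd r hr s hs).div_const r).fun_pow 2).const_mul κ)).congr_deriv
      (by norm_num; ring)

lemma hasDerivAt_energyFlux {r : ℝ} (h : BackwardFlow κ R S C u ur us urs f) (hr : r ∈ Ioo 0 R)
    (hs : s ∈ Ioo 0 S) :
    HasDerivAt (fun r => energyFlux κ x₀ u ur us (r, s))
      (gaussDrift x₀ (r, s) * energyFlux κ x₀ u ur us (r, s) +
        2 * (ur (r, s) * urs (r, s) + κ * (u (r, s) / r * (us (r, s) / r))) +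
        energyDensity κ u ur (r, s) * gaussDrift x₀ (r, s) ^ 2 -
        2 * (driftOperator x₀ ur us f (r, s) ^ 2 + f (r, s) * driftOperator x₀ ur us f (r, s)) +
        1 / (2 * s) * energyDensity κ u ur (r, s) - κ * x₀ * u (r, s) ^ 2 / (s * r ^ 3)) r := by
  have hr' := hr.1.ne'
  have hs' := hs.1.ne'
  have hur := h.hasDerivAt_ur_fst r hr s hs
  have hdiv := (h.hasDerivAt_fst r hr s hs).fun_div (hasDerivAt_id r) hr'
  refine (((hur.mul (h.hasDerivAt_us_fst r hr s hs)).const_mul 2).add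
    ((hasDerivAt_gaussDrift_fst x₀ r s).mul
      ((hur.fun_pow 2).fun_sub ((hdiv.fun_pow 2).const_mul κ)))).congr_deriv ?_
  simp only [energyFlux, energyDensity, driftOperator, gaussDrift, id, Nat.cast_ofNat,
    Nat.reduceSub, pow_one]
  field_simp
  ring

lemma le_gaussIntegral_deriv_energyDensity (hκ : 0 ≤ κ) (hx₀ : x₀ ∈ Icc 0 R)
    (h : BackwardFlow κ R S C u ur us urs f) (hs : s ∈ Ioo 0 S) :
    2 * gaussIntegral R x₀ (fun q => driftOperator x₀ ur us f q ^ 2 +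
        f q * driftOperator x₀ ur us f q) s -
      gaussIntegral R x₀ (energyDensity κ u ur) s / (2 * s) ≤
    gaussIntegral R x₀ (fun q => 2 * (ur q * urs q + κ * (u q / q.1 * (us q / q.1)))) s +
      gaussIntegral R x₀ (fun q => energyDensity κ u ur q * gaussDrift x₀ q ^ 2) s := by
  have hR : 0 ≤ R := hx₀.1.trans hx₀.2
  have hur := h.continuousOn_ur
  have hus := h.continuousOn_us
  have hurs := h.continuousOn_urs
  have hdiv := h.continuousOn_div
  have hdiv' := h.continuousOn_us_div
  have hf := h.continuousOn_f
  have hE := h.continuousOn_energyDensity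
  have hX := h.continuousOn_driftOperator (x₀ := x₀)
  have hh := continuousOn_gaussDrift (J := Icc 0 R) (x₀ := x₀) fun s (hs : s ∈ Ioo 0 S) => hs.1.ne'
  have parts := sub_le_gaussIntegral (x₀ := x₀) (g := energyFlux κ x₀ u ur us)
    (φ := fun q => 2 * (ur q * urs q + κ * (u q / q.1 * (us q / q.1))) +
        energyDensity κ u ur q * gaussDrift x₀ q ^ 2 +
      (-2 * (driftOperator x₀ ur us f q ^ 2 + f q * driftOperator x₀ ur us f q) +
        1 / (2 * s) * energyDensity κ u ur q))
    hR hs (by unfold energyFlux; fun_prop) (by fun_prop)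
    (fun r hr => h.hasDerivAt_energyFlux hr hs) fun r hr => ?_
  · rw [gaussIntegral_add hR (by fun_prop) (by fun_prop) hs,
      gaussIntegral_add hR (by fun_prop) (by fun_prop) hs,
      gaussIntegral_add hR (by fun_prop) (by fun_prop) hs, gaussIntegral_const_mul (-2),
      gaussIntegral_const_mul (1 / _)] at parts
    have boundary : 0 ≤ gaussDrift x₀ (R, s) * ur (R, s) ^ 2 * gaussWeight x₀ (R, s) :=
      mul_nonneg (mul_nonneg (div_nonneg (sub_nonneg.2 hx₀.2) (by linarith [hs.1])) (sq_nonneg _))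
        (gaussWeight_pos x₀ _).le
    simp only [energyFlux, h.eq_zero_right s hs, h.us_eq_zero_left s hs, h.us_eq_zero_right s hs,
      h.ur_eq_zero s hs, zero_div, div_zero] at parts
    linear_combination parts + boundary
  · have gap : 0 ≤ κ * x₀ * u (r, s) ^ 2 / (s * r ^ 3) := by
      have := hx₀.1; have := hr.1; have := hs.1; positivity
    linarith

lemma neg_two_mul_gaussIntegral_mul_le (hR : 0 ≤ R) (h : BackwardFlow κ R S C u ur us urs f)
    (hs : s ∈ Ioo 0 S) :
    -2 * gaussIntegral R x₀ (fun q => u q * f q) s ≤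
      gaussIntegral R x₀ (fun q => u q ^ 2) s +
        C * gaussIntegral R x₀ (energyDensity κ u ur) s := by
  have hu := h.continuousOn
  have hf := h.continuousOn_f
  have hE := h.continuousOn_energyDensity
  rw [← gaussIntegral_const_mul, ← gaussIntegral_const_mul,
    ← gaussIntegral_add hR (by fun_prop) (by fun_prop) hs]
  refine gaussIntegral_mono hR (by fun_prop) (by fun_prop) hs fun r hr => ?_
  have := h.f_sq_le r hr s hs
  simp only [energyDensity]
  linarith [sq_nonneg (u (r, s) + f (r, s))]

lemma gaussIntegral_driftOperator_add_sq_le (hR : 0 ≤ R)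
    (h : BackwardFlow κ R S C u ur us urs f) (hs : s ∈ Ioo 0 S) :
    gaussIntegral R x₀ (fun q => (driftOperator x₀ ur us f q + 1 / 2 * f q) ^ 2) s ≤
      gaussIntegral R x₀ (fun q => driftOperator x₀ ur us f q ^ 2 +
        f q * driftOperator x₀ ur us f q) s +
      C / 4 * gaussIntegral R x₀ (energyDensity κ u ur) s := by
  have hf := h.continuousOn_f
  have hX := h.continuousOn_driftOperator (x₀ := x₀)
  have hE := h.continuousOn_energyDensity
  rw [← gaussIntegral_const_mul, ← gaussIntegral_add hR (by fun_prop) (by fun_prop) hs]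
  refine gaussIntegral_mono hR (by fun_prop) (by fun_prop) hs fun r hr => ?_
  have := h.f_sq_le r hr s hs
  simp only [energyDensity]
  linarith

lemma sq_gaussIntegral_energyDensity_sub_le (hR : 0 ≤ R)
    (h : BackwardFlow κ R S C u ur us urs f) (hs : s ∈ Ioo 0 S) :
    (gaussIntegral R x₀ (energyDensity κ u ur) s -
        1 / 2 * gaussIntegral R x₀ (fun q => u q * f q) s) ^ 2 ≤
      gaussIntegral R x₀ (fun q => u q ^ 2) s *
        (gaussIntegral R x₀ (fun q => driftOperator x₀ ur us f q ^ 2 +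
          f q * driftOperator x₀ ur us f q) s +
        C / 4 * gaussIntegral R x₀ (energyDensity κ u ur) s) := by
  have hu := h.continuousOn
  have hf := h.continuousOn_f
  have hX := h.continuousOn_driftOperator (x₀ := x₀)
  have split : gaussIntegral R x₀ (fun q => u q * (driftOperator x₀ ur us f q + 1 / 2 * f q)) s =
      -gaussIntegral R x₀ (energyDensity κ u ur) s +
        1 / 2 * gaussIntegral R x₀ (fun q => u q * f q) s := by
    rw [← eq_neg_of_add_eq_zero_right (h.gaussIntegral_energyDensity_add hR hs),
      ← gaussIntegral_const_mul, ← gaussIntegral_add hR (by fun_prop) (by fun_prop) hs]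
    congr 1; ext q; ring
  calc
    _ = gaussIntegral R x₀ (fun q => u q * (driftOperator x₀ ur us f q + 1 / 2 * f q)) s ^ 2 := by
        rw [split]; ring
    _ ≤ _ := sq_gaussIntegral_mul_le hR hu (by fun_prop) hs
    _ ≤ _ := mul_le_mul_of_nonneg_left (h.gaussIntegral_driftOperator_add_sq_le hR hs)
        (gaussIntegral_nonneg hR fun q => sq_nonneg _)

lemma not_forall_gaussIntegral_sq_le_mul_pow (hκ : 0 ≤ κ) (hC : 0 ≤ C) (hS : 0 < S)
    (hx₀ : x₀ ∈ Icc 0 R) (h : BackwardFlow κ R S C u ur us urs f)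
    (hne : ∀ s ∈ Ioo 0 S, ∃ r ∈ Ioo 0 R, u (r, s) ≠ 0) :
    ¬ ∀ k : ℕ, ∃ B, ∀ s ∈ Ioo 0 S, gaussIntegral R x₀ (fun q => u q ^ 2) s ≤ B * s ^ k := by
  have hR : 0 ≤ R := hx₀.1.trans hx₀.2
  have energy_nonneg : ∀ s, 0 ≤ gaussIntegral R x₀ (energyDensity κ u ur) s := fun s =>
    gaussIntegral_nonneg hR fun q => add_nonneg (sq_nonneg _) (mul_nonneg hκ (sq_nonneg _))
  have mass_pos : ∀ s ∈ Ioo 0 S, 0 < gaussIntegral R x₀ (fun q => u q ^ 2) s := fun s hs => by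
    obtain ⟨r, hr, hur⟩ := hne s hs
    exact gaussIntegral_pos (h.continuousOn.fun_pow 2) hs (fun q => sq_nonneg _) hr
      (pow_ne_zero 2 hur)
  refine not_forall_le_mul_pow_of_frequency (A := 2 + C) (B := S + 1 / 2) (c := C / 2) hS
    (by positivity) (by positivity) (fun s hs => h.hasDerivAt_gaussIntegral_sq hR hs)
    (fun s hs => h.hasDerivAt_gaussIntegral_energyDensity hR hs) mass_pos
    (fun s _ => energy_nonneg s) (fun s hs => ?_) fun s hs => ?_
  · have young := mul_le_mul_of_nonneg_left
      (h.neg_two_mul_gaussIntegral_mul_le (x₀ := x₀) hR hs) hs.1.le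
    have bound := mul_le_mul_of_nonneg_right hs.2.le (mass_pos s hs).le
    linear_combination young + bound +
      gaussIntegral R x₀ (fun q => u q ^ 2) s * mul_inv_cancel₀ hs.1.ne' / 2
  · have cauchy := mul_le_mul_of_nonneg_left
      (h.sq_gaussIntegral_energyDensity_sub_le (x₀ := x₀) hR hs) hs.1.le
    have lower := mul_le_mul_of_nonneg_right (mul_le_mul_of_nonneg_left
      (h.le_gaussIntegral_deriv_energyDensity hκ hx₀ hs) hs.1.le) (mass_pos s hs).le
    have := mul_nonneg hs.1.le (sq_nonneg (gaussIntegral R x₀ (fun q => u q * f q) s))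
    linear_combination lower + 2 * cauchy + this / 2 +
      gaussIntegral R x₀ (energyDensity κ u ur) s * gaussIntegral R x₀ (fun q => u q ^ 2) s *
        mul_inv_cancel₀ hs.1.ne'

lemma not_forall_le_mul_pow {δ M : ℝ} (hκ : 0 ≤ κ) (hC : 0 ≤ C) (hS : 0 < S) (hδ : 0 < δ)
    (hx₀ : x₀ ∈ Icc 0 R) (h : BackwardFlow κ R S C u ur us urs f)
    (hM : ∀ r ∈ Icc 0 R, ∀ s ∈ Ioo 0 S, |u (r, s)| ≤ M)
    (hne : ∀ s ∈ Ioo 0 S, ∃ r ∈ Ioo 0 R, u (r, s) ≠ 0) :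
    ¬ ∀ k : ℕ, ∃ K, ∀ r ∈ Icc 0 R, |r - x₀| < δ → ∀ s ∈ Ioo 0 S, |u (r, s)| ≤ K * s ^ k := by
  intro flat
  refine h.not_forall_gaussIntegral_sq_le_mul_pow hκ hC hS hx₀ hne fun k => ?_
  obtain ⟨K, hK⟩ := flat k
  refine ⟨(M * max K (M * (k.factorial * (4 / δ ^ 2) ^ k))) * R, fun s hs => ?_⟩
  have hR : 0 ≤ R := hx₀.1.trans hx₀.2
  suffices ∀ r ∈ Icc 0 R, |u (r, s)| * gaussWeight x₀ (r, s) ≤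
      max K (M * (k.factorial * (4 / δ ^ 2) ^ k)) * s ^ k by
    have hM0 : 0 ≤ M := (abs_nonneg _).trans (hM 0 ⟨le_rfl, hR⟩ s hs)
    refine (Real.le_norm_self _).trans ((intervalIntegral.norm_integral_le_of_norm_le_const
      (C := M * (max K (M * (k.factorial * (4 / δ ^ 2) ^ k)) * s ^ k)) fun r hr => ?_).trans_eq ?_)
    · have hr' := Ioc_subset_Icc_self (uIoc_of_le hR ▸ hr)
      rw [Real.norm_eq_abs, abs_mul, abs_pow, abs_of_pos (gaussWeight_pos x₀ _), sq, mul_assoc]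
      exact mul_le_mul (hM r hr' s hs) (this r hr')
        (mul_nonneg (abs_nonneg _) (gaussWeight_pos x₀ _).le) hM0
    · rw [sub_zero, abs_of_nonneg hR]
      ring
  intro r hr
  have hG := gaussWeight_pos x₀ (r, s)
  rw [max_mul_of_nonneg _ _ (pow_nonneg hs.1.le k)]
  rcases lt_or_ge |r - x₀| δ with near | far
  · exact le_max_of_le_left <| (mul_le_of_le_one_right (abs_nonneg _)
      (gaussWeight_le_one x₀ r hs.1.le)).trans (hK r hr near s hs)
  · refine le_max_of_le_right ?_
    rw [mul_assoc]
    gcongr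
    · exact (abs_nonneg _).trans (hM r hr s hs)
    · exact hM r hr s hs
    · exact gaussWeight_le_mul_pow hs.1 hδ far k

end BackwardFlow

end BackwardFlow

section BesselOperator

open scoped Topology ContDiff

variable {R S C p t₀ r s : ℝ} {T K : Set ℝ} {F H : ℝ × ℝ → ℝ}

/-- The defect `F_t - F_rr - (ν / r) F_r + (ν / r²) F` of `F` in the parabolic equation of the
Bessel operator, computed with derivatives within `Q`. -/
noncomputable def besselDefect (ν : ℝ) (Q : Set (ℝ × ℝ)) (F : ℝ × ℝ → ℝ) (q : ℝ × ℝ) : ℝ :=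
  dirDerivWithin Q (0, 1) F q - dirDerivWithin Q (1, 0) (dirDerivWithin Q (1, 0) F) q -
    ν / q.1 * dirDerivWithin Q (1, 0) F q + ν / q.1 ^ 2 * F q

/-- The time reversal of `H` about `t₀`, multiplied by `r ^ p`. For `p = ν / 2` this factor turns
the first-order term of the Bessel operator into an inverse-square potential. -/
noncomputable def scaledReverse (p t₀ : ℝ) (H : ℝ × ℝ → ℝ) (q : ℝ × ℝ) : ℝ :=
  q.1 ^ p * H (q.1, t₀ - q.2)

/-- The derivative `F_r + (p / r) F` of `r ^ p F` in `r`, divided by `r ^ p`. -/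
noncomputable def twistedDeriv (p : ℝ) (Q : Set (ℝ × ℝ)) (F : ℝ × ℝ → ℝ) (q : ℝ × ℝ) : ℝ :=
  dirDerivWithin Q (1, 0) F q + p * (F q / q.1)

lemma hasDerivAt_scaledReverse_fst (hr : 0 < r) {H' : ℝ}
    (h : HasDerivAt (fun r => H (r, t₀ - s)) H' r) :
    HasDerivAt (fun r => scaledReverse p t₀ H (r, s))
      (r ^ p * (H' + p * (H (r, t₀ - s) / r))) r := by
  refine ((Real.hasDerivAt_rpow_const (.inl hr.ne')).mul h).congr_deriv ?_
  rw [Real.rpow_sub_one hr.ne']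
  ring

lemma hasDerivAt_scaledReverse_snd {H' : ℝ} (h : HasDerivAt (fun t => H (r, t)) H' (t₀ - s)) :
    HasDerivAt (fun s => scaledReverse p t₀ H (r, s)) (r ^ p * -H') s := by
  refine ((h.comp s ((hasDerivAt_id s).const_sub t₀)).const_mul (r ^ p)).congr_deriv ?_
  ring

lemma continuousOn_scaledReverse (hR : 0 < R) (hp : 0 < p) (hST : Icc (t₀ - S) t₀ ⊆ T)
    (hH : ContinuousOn H (Ioc 0 R ×ˢ T)) (hK : ∃ K, ∀ q ∈ Ioo 0 R ×ˢ Icc (t₀ - S) t₀, |H q| ≤ K) :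
    ContinuousOn (scaledReverse p t₀ H) (Icc 0 R ×ˢ Ioo 0 S) := by
  have mem : ∀ s ∈ Ioo 0 S, t₀ - s ∈ Icc (t₀ - S) t₀ := fun s hs =>
    ⟨by linarith [hs.2], by linarith [hs.1]⟩
  obtain ⟨K, hK⟩ := hK
  exact continuousOn_rpow_mul_of_bounded hR hp
    (hH.comp (by fun_prop) fun q hq => ⟨hq.1, hST (mem _ hq.2)⟩) fun q hq => hK _ ⟨hq.1, mem _ hq.2⟩

lemma exists_abs_div_le (hR : 0 < R) (hT : IsOpen T) (hK : IsCompact K) (hKT : K ⊆ T)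
    (hF : ContDiffOn ℝ ∞ F (Icc 0 R ×ˢ T)) (h0 : ∀ t ∈ T, F (0, t) = 0) :
    ∃ M, ∀ q ∈ Ioo 0 R ×ˢ K, |F q / q.1| ≤ M := by
  have hU := (uniqueDiffOn_Icc hR).prod hT.uniqueDiffOn
  obtain ⟨M, hM⟩ := (isCompact_Icc.prod hK).exists_bound_of_continuousOn
    ((contDiffOn_dirDerivWithin hU hF (1, 0)).continuousOn.mono (prod_mono_right hKT))
  refine ⟨M, fun q hq => ?_⟩
  have mvt := (convex_Icc 0 R).norm_image_sub_le_of_norm_hasDerivWithin_le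
    (fun r hr => hasDerivWithinAt_slice_fst (hF.differentiableOn (by simp)) hr (hKT hq.2))
    (fun r hr => hM (r, q.2) ⟨hr, hq.2⟩) (left_mem_Icc.2 hR.le) (Ioo_subset_Icc_self hq.1)
  rw [h0 q.2 (hKT hq.2), sub_zero, sub_zero, Real.norm_eq_abs, Real.norm_eq_abs] at mvt
  rwa [abs_div, div_le_iff₀ (abs_pos.2 hq.1.1.ne')]

lemma continuousOn_scaledReverse_of_continuousOn (hR : 0 < R) (hp : 0 < p)
    (hST : Icc (t₀ - S) t₀ ⊆ T) (hH : ContinuousOn H (Icc 0 R ×ˢ T)) :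
    ContinuousOn (scaledReverse p t₀ H) (Icc 0 R ×ˢ Ioo 0 S) := by
  obtain ⟨M, hM⟩ := (isCompact_Icc.prod isCompact_Icc).exists_bound_of_continuousOn
    (hH.mono (prod_mono_right hST))
  exact continuousOn_scaledReverse hR hp hST (hH.mono (prod_mono_left Ioc_subset_Icc_self))
    ⟨M, fun q hq => hM q ⟨Ioo_subset_Icc_self hq.1, hq.2⟩⟩

lemma continuousOn_scaledReverse_div (hR : 0 < R) (hp : 0 < p) (hT : IsOpen T)
    (hST : Icc (t₀ - S) t₀ ⊆ T) (hF : ContDiffOn ℝ ∞ F (Icc 0 R ×ˢ T))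
    (h0 : ∀ t ∈ T, F (0, t) = 0) :
    ContinuousOn (scaledReverse p t₀ fun q => F q / q.1) (Icc 0 R ×ˢ Ioo 0 S) :=
  continuousOn_scaledReverse hR hp hST ((hF.continuousOn.mono (prod_mono_left
    Ioc_subset_Icc_self)).div continuousOn_fst fun _ hq => hq.1.1.ne')
    (exists_abs_div_le hR hT isCompact_Icc hST hF h0)

lemma continuousOn_besselDefect (hR : 0 < R) (hT : IsOpen T) (ν : ℝ)
    (hF : ContDiffOn ℝ ∞ F (Icc 0 R ×ˢ T)) :
    ContinuousOn (besselDefect ν (Icc 0 R ×ˢ T) F) (Ioc 0 R ×ˢ T) := by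
  have hU := (uniqueDiffOn_Icc hR).prod hT.uniqueDiffOn
  have hFr := contDiffOn_dirDerivWithin hU hF (1, 0)
  have sub : Ioc 0 R ×ˢ T ⊆ Icc 0 R ×ˢ T := prod_mono_left Ioc_subset_Icc_self
  have cF := hF.continuousOn.mono sub
  have cFr := hFr.continuousOn.mono sub
  have cFt := (contDiffOn_dirDerivWithin hU hF (0, 1)).continuousOn.mono sub
  have cFrr := (contDiffOn_dirDerivWithin hU hFr (1, 0)).continuousOn.mono sub
  have hne : ∀ q ∈ Ioc 0 R ×ˢ T, q.1 ≠ 0 := fun q hq => hq.1.1.ne'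
  have hne' : ∀ q ∈ Ioc 0 R ×ˢ T, q.1 ^ 2 ≠ 0 := fun q hq => pow_ne_zero 2 (hne q hq)
  unfold besselDefect
  fun_prop (disch := assumption)

lemma sq_le_mul_energy {g x y : ℝ} (hp : 0 < p) (h : |g| ≤ C * (|y| + |x|)) :
    g ^ 2 ≤ 2 * C ^ 2 * (2 + 1 / p) * ((x + p * y) ^ 2 + p * (p + 1) * y ^ 2) := by
  have triangle : |x| ≤ |x + p * y| + p * |y| := by
    calc |x| = |(x + p * y) - p * y| := by ring_nf
      _ ≤ |x + p * y| + |p * y| := abs_sub _ _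
      _ = |x + p * y| + p * |y| := by rw [abs_mul, abs_of_pos hp]
  calc g ^ 2 ≤ (C * (|y| + |x|)) ^ 2 := sq_le_sq' (neg_le_of_abs_le h) (le_of_abs_le h)
    _ = C ^ 2 * (|y| + |x|) ^ 2 := by ring
    _ ≤ C ^ 2 * (|x + p * y| + (p + 1) * |y|) ^ 2 :=
        mul_le_mul_of_nonneg_left (pow_le_pow_left₀ (by positivity) (by linarith) 2) (sq_nonneg C)
    _ ≤ C ^ 2 * (2 * (2 + 1 / p) * (|x + p * y| ^ 2 + p * (p + 1) * |y| ^ 2)) := by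
        gcongr
        have completed_square : 2 * (2 + 1 / p) * (|x + p * y| ^ 2 + p * (p + 1) * |y| ^ 2) -
            (|x + p * y| + (p + 1) * |y|) ^ 2 = (|x + p * y| - (p + 1) * |y|) ^ 2 +
              (2 + 2 / p) * |x + p * y| ^ 2 + 2 * p * (p + 1) * |y| ^ 2 := by
          field_simp
          ring
        rw [← sub_nonneg, completed_square]
        positivity
    _ = _ := by rw [sq_abs, sq_abs]; ring

lemma dirDerivWithin_snd_eq_zero {J : Set ℝ} (hT : IsOpen T) (hF : DifferentiableOn ℝ F (J ×ˢ T))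
    (hr : r ∈ J) (h : ∀ t ∈ T, F (r, t) = 0) :
    ∀ t ∈ T, dirDerivWithin (J ×ˢ T) (0, 1) F (r, t) = 0 := fun t ht =>
  (hT.uniqueDiffWithinAt ht).eq_deriv _ (hasDerivWithinAt_slice_snd hF hr ht)
    ((hasDerivWithinAt_const t T (0 : ℝ)).congr h (h t ht))

lemma continuousOn_scaledReverse_twistedDeriv (hR : 0 < R) (hp : 0 < p) (hT : IsOpen T)
    (hST : Icc (t₀ - S) t₀ ⊆ T) (hF : ContDiffOn ℝ ∞ F (Icc 0 R ×ˢ T))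
    (h0 : ∀ t ∈ T, F (0, t) = 0) :
    ContinuousOn (scaledReverse p t₀ (twistedDeriv p (Icc 0 R ×ˢ T) F)) (Icc 0 R ×ˢ Ioo 0 S) := by
  have hU := (uniqueDiffOn_Icc hR).prod hT.uniqueDiffOn
  refine ((continuousOn_scaledReverse_of_continuousOn hR hp hST
    (contDiffOn_dirDerivWithin hU hF (1, 0)).continuousOn).fun_add
      ((continuousOn_scaledReverse_div hR hp hT hST hF h0).const_mul p)).congr fun q _ => ?_
  simp only [scaledReverse, twistedDeriv]
  ring

lemma continuousOn_scaledReverse_besselDefect {ν : ℝ} (hR : 0 < R) (hp : 0 < p) (hT : IsOpen T)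
    (hST : Icc (t₀ - S) t₀ ⊆ T) (hF : ContDiffOn ℝ ∞ F (Icc 0 R ×ˢ T))
    (h0 : ∀ t ∈ T, F (0, t) = 0) (hdefect : ∀ q ∈ Ioo 0 R ×ˢ Icc (t₀ - S) t₀,
      |besselDefect ν (Icc 0 R ×ˢ T) F q| ≤
        C * (|F q / q.1| + |dirDerivWithin (Icc 0 R ×ˢ T) (1, 0) F q|)) :
    ContinuousOn (scaledReverse p t₀ (besselDefect ν (Icc 0 R ×ˢ T) F)) (Icc 0 R ×ˢ Ioo 0 S) := by
  have hU := (uniqueDiffOn_Icc hR).prod hT.uniqueDiffOn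
  obtain ⟨M, hM⟩ := exists_abs_div_le hR hT isCompact_Icc hST hF h0
  obtain ⟨N, hN⟩ := (isCompact_Icc.prod isCompact_Icc).exists_bound_of_continuousOn
    ((contDiffOn_dirDerivWithin hU hF (1, 0)).continuousOn.mono (prod_mono_right hST))
  refine continuousOn_scaledReverse hR hp hST (continuousOn_besselDefect hR hT _ hF)
    ⟨|C| * (M + N), fun q hq => ?_⟩
  calc |besselDefect ν (Icc 0 R ×ˢ T) F q|
      ≤ C * (|F q / q.1| + |dirDerivWithin (Icc 0 R ×ˢ T) (1, 0) F q|) :=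
        hdefect q hq
    _ ≤ |C| * (M + N) := mul_le_mul (le_abs_self C)
        (add_le_add (hM q hq) (hN q ⟨Ioo_subset_Icc_self hq.1, hq.2⟩)) (by positivity)
        (abs_nonneg C)

lemma Icc_prod_subset_closure_interior (hR : 0 < R) (hT : IsOpen T) :
    Icc 0 R ×ˢ T ⊆ closure (interior (Icc 0 R ×ˢ T)) := by
  rw [interior_prod_eq, interior_Icc, hT.interior_eq, closure_prod_eq, closure_Ioo hR.ne]
  exact prod_mono_right subset_closure

lemma hasDerivAt_scaledReverse_twistedDeriv_fst (hR : 0 < R) (hT : IsOpen T)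
    (hF : ContDiffOn ℝ ∞ F (Icc 0 R ×ˢ T)) (hr : r ∈ Ioo 0 R) (hs : t₀ - s ∈ T) :
    HasDerivAt (fun r => scaledReverse p t₀ (twistedDeriv p (Icc 0 R ×ˢ T) F) (r, s))
      (p * (p + 1) * scaledReverse p t₀ F (r, s) / r ^ 2 -
        scaledReverse p t₀ (fun q => -dirDerivWithin (Icc 0 R ×ˢ T) (0, 1) F q) (r, s) -
        scaledReverse p t₀ (besselDefect (2 * p) (Icc 0 R ×ˢ T) F) (r, s)) r := by
  have hU := (uniqueDiffOn_Icc hR).prod hT.uniqueDiffOn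
  have nhds : Icc 0 R ∈ 𝓝 r := Icc_mem_nhds hr.1 hr.2
  have hr0 : r ≠ 0 := hr.1.ne'
  have hFd := hasDerivAt_slice_fst (hF.differentiableOn (by simp)) nhds hs
  have hFrd := hasDerivAt_slice_fst
    ((contDiffOn_dirDerivWithin hU hF (1, 0)).differentiableOn (by simp)) nhds hs
  refine (hasDerivAt_scaledReverse_fst hr.1
    (hFrd.add ((hFd.fun_div (hasDerivAt_id r) hr0).const_mul p))).congr_deriv ?_
  simp only [scaledReverse, besselDefect, twistedDeriv, id]
  field_simp
  ring

lemma hasDerivAt_scaledReverse_twistedDeriv_snd (hR : 0 < R) (hT : IsOpen T)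
    (hF : ContDiffOn ℝ ∞ F (Icc 0 R ×ˢ T)) (hr : r ∈ Icc 0 R) (hs : t₀ - s ∈ T) :
    HasDerivAt (fun s => scaledReverse p t₀ (twistedDeriv p (Icc 0 R ×ˢ T) F) (r, s))
      (scaledReverse p t₀ (fun q => -twistedDeriv p (Icc 0 R ×ˢ T)
        (dirDerivWithin (Icc 0 R ×ˢ T) (0, 1) F) q) (r, s)) s := by
  have hU := (uniqueDiffOn_Icc hR).prod hT.uniqueDiffOn
  have hTs := hT.mem_nhds hs
  have hFd := hasDerivAt_slice_snd (hF.differentiableOn (by simp)) hr hTs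
  have hFrd := hasDerivAt_slice_snd
    ((contDiffOn_dirDerivWithin hU hF (1, 0)).differentiableOn (by simp)) hr hTs
  refine (hasDerivAt_scaledReverse_snd
    (hFrd.add ((hFd.div_const r).const_mul p))).congr_deriv ?_
  rw [dirDerivWithin_comm hU (Icc_prod_subset_closure_interior hR hT) hF _ _ ⟨hr, hs⟩]
  rfl

theorem backwardFlow_scaledReverse (hR : 0 < R) (hp : 0 < p) (hT : IsOpen T)
    (hST : Icc (t₀ - S) t₀ ⊆ T) (hF : ContDiffOn ℝ ∞ F (Icc 0 R ×ˢ T))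
    (h0 : ∀ t ∈ T, F (0, t) = 0) (hR0 : ∀ t ∈ T, F (R, t) = 0)
    (hdefect : ∀ q ∈ Ioo 0 R ×ˢ Icc (t₀ - S) t₀, |besselDefect (2 * p) (Icc 0 R ×ˢ T) F q| ≤
      C * (|F q / q.1| + |dirDerivWithin (Icc 0 R ×ˢ T) (1, 0) F q|)) :
    BackwardFlow (p * (p + 1)) R S (2 * C ^ 2 * (2 + 1 / p)) (scaledReverse p t₀ F)
      (scaledReverse p t₀ (twistedDeriv p (Icc 0 R ×ˢ T) F))
      (scaledReverse p t₀ fun q => -dirDerivWithin (Icc 0 R ×ˢ T) (0, 1) F q)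
      (scaledReverse p t₀ fun q =>
        -twistedDeriv p (Icc 0 R ×ˢ T) (dirDerivWithin (Icc 0 R ×ˢ T) (0, 1) F) q)
      (scaledReverse p t₀ (besselDefect (2 * p) (Icc 0 R ×ˢ T) F)) := by
  have hU := (uniqueDiffOn_Icc hR).prod hT.uniqueDiffOn
  have hF' := hF.differentiableOn (by simp)
  have hFt := contDiffOn_dirDerivWithin hU hF (0, 1)
  have hFt' := hFt.differentiableOn (by simp)
  have hFt0 := dirDerivWithin_snd_eq_zero hT hF' (left_mem_Icc.2 hR.le) h0
  have hFtR := dirDerivWithin_snd_eq_zero hT hF' (right_mem_Icc.2 hR.le) hR0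
  have mem' : ∀ {s}, s ∈ Ioo 0 S → t₀ - s ∈ Icc (t₀ - S) t₀ := fun hs =>
    ⟨by linarith [hs.2], by linarith [hs.1]⟩
  have mem : ∀ {s}, s ∈ Ioo 0 S → t₀ - s ∈ T := fun hs => hST (mem' hs)
  have zero_left : ∀ {H s}, scaledReverse p t₀ H (0, s) = 0 := by
    simp [scaledReverse, Real.zero_rpow hp.ne']
  exact {
    continuousOn := continuousOn_scaledReverse_of_continuousOn hR hp hST hF.continuousOn
    continuousOn_ur := continuousOn_scaledReverse_twistedDeriv hR hp hT hST hF h0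
    continuousOn_us := continuousOn_scaledReverse_of_continuousOn hR hp hST hFt.continuousOn.neg
    continuousOn_urs := (continuousOn_scaledReverse_twistedDeriv hR hp hT hST hFt
      hFt0).fun_neg.congr fun q _ => mul_neg _ _
    continuousOn_div := (continuousOn_scaledReverse_div hR hp hT hST hF h0).congr fun q _ =>
      mul_div_assoc _ _ _
    continuousOn_us_div := (continuousOn_scaledReverse_div hR hp hT hST hFt hFt0).fun_neg.congr
      fun q _ => by simp only [scaledReverse]; ring
    continuousOn_f := continuousOn_scaledReverse_besselDefect hR hp hT hST hF h0 hdefect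
    eq_zero_left := fun s _ => zero_left
    eq_zero_right := fun s hs => by rw [scaledReverse, hR0 _ (mem hs), mul_zero]
    ur_eq_zero := fun s _ => zero_left
    us_eq_zero_left := fun s _ => zero_left
    us_eq_zero_right := fun s hs => by rw [scaledReverse, hFtR _ (mem hs), neg_zero, mul_zero]
    hasDerivAt_fst := fun r hr s hs =>
      hasDerivAt_scaledReverse_fst hr.1 (hasDerivAt_slice_fst hF' (Icc_mem_nhds hr.1 hr.2) (mem hs))
    hasDerivAt_ur_fst := fun r hr s hs =>
      hasDerivAt_scaledReverse_twistedDeriv_fst hR hT hF hr (mem hs)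
    hasDerivAt_us_fst := fun r hr s hs =>
      (hasDerivAt_scaledReverse_fst hr.1
        (hasDerivAt_slice_fst hFt' (Icc_mem_nhds hr.1 hr.2) (mem hs)).fun_neg).congr_deriv (by
          simp only [scaledReverse, twistedDeriv]; ring)
    hasDerivAt_snd := fun r hr s hs => hasDerivAt_scaledReverse_snd
      (hasDerivAt_slice_snd hF' (Ioo_subset_Icc_self hr) (hT.mem_nhds (mem hs)))
    hasDerivAt_ur_snd := fun r hr s hs =>
      hasDerivAt_scaledReverse_twistedDeriv_snd hR hT hF (Ioo_subset_Icc_self hr) (mem hs)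
    f_sq_le := fun r hr s hs => by
      have := mul_le_mul_of_nonneg_left (sq_le_mul_energy hp (hdefect (r, t₀ - s) ⟨hr, mem' hs⟩))
        (sq_nonneg (r ^ p))
      simp only [scaledReverse, twistedDeriv]
      linear_combination this }

end BesselOperator

section UniqueContinuation

open scoped ContDiff

/-- `F` is a solution of `F_t = F_rr + (ν / r) F_r - (b / r²) F` on `(0, R) × T`, smooth up to the
ends of `[0, R]` and vanishing at `r = 0`, where the potential `b` takes the value `ν`. -/
structure IsRadialSolution (ν R : ℝ) (T : Set ℝ) (b F : ℝ × ℝ → ℝ) : Prop where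
  contDiffOn_potential : ContDiffOn ℝ ∞ b (Icc 0 R ×ˢ T)
  potential_zero : ∀ t ∈ T, b (0, t) = ν
  contDiffOn : ContDiffOn ℝ ∞ F (Icc 0 R ×ˢ T)
  eq_zero : ∀ t ∈ T, F (0, t) = 0
  dirDerivWithin_snd : ∀ q ∈ Ioo 0 R ×ˢ T, dirDerivWithin (Icc 0 R ×ˢ T) (0, 1) F q =
    dirDerivWithin (Icc 0 R ×ˢ T) (1, 0) (dirDerivWithin (Icc 0 R ×ˢ T) (1, 0) F) q +
      ν / q.1 * dirDerivWithin (Icc 0 R ×ˢ T) (1, 0) F q - b q / q.1 ^ 2 * F q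

variable {ν R S C t₀ a c : ℝ} {T K J : Set ℝ} {b F G : ℝ × ℝ → ℝ} {q : ℝ × ℝ}

lemma exists_forall_eq_zero_of_besselDefect_le (hν : 0 < ν) (hT : IsOpen T) (hS : 0 < S)
    (hST : Icc (t₀ - S) t₀ ⊆ T) (hG : ContDiffOn ℝ ∞ G (Icc 0 R ×ˢ T))
    (h0 : ∀ t ∈ T, G (0, t) = 0) (hR0 : ∀ t ∈ T, G (R, t) = 0)
    (hdefect : ∀ q ∈ Ioo 0 R ×ˢ Icc (t₀ - S) t₀, |besselDefect ν (Icc 0 R ×ˢ T) G q| ≤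
      C * (|G q / q.1| + |dirDerivWithin (Icc 0 R ×ˢ T) (1, 0) G q|))
    (hac : a < c) (hacR : Ioo a c ⊆ Ioo 0 R) (hflat : ∀ k, VanishesInTime (Ioo a c) T t₀ k G) :
    ∃ t ∈ Ioo (t₀ - S) t₀, ∀ r ∈ Ioo 0 R, G (r, t) = 0 := by
  obtain ⟨ha, hc⟩ := (Ioo_subset_Ioo_iff hac).1 hacR
  have hR : 0 < R := by linarith
  have mem : ∀ {s}, s ∈ Ioo 0 S → t₀ - s ∈ Icc (t₀ - S) t₀ := fun hs =>
    ⟨by linarith [hs.2], by linarith [hs.1]⟩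
  have hscale : ∀ r ∈ Icc 0 R, ∀ s, |scaledReverse (ν / 2) t₀ G (r, s)| ≤
      R ^ (ν / 2) * |G (r, t₀ - s)| := fun r hr s => by
    rw [scaledReverse, abs_mul, abs_of_nonneg (Real.rpow_nonneg hr.1 _)]
    exact mul_le_mul_of_nonneg_right (Real.rpow_le_rpow hr.1 hr.2 (by positivity)) (abs_nonneg _)
  by_contra! hne
  obtain ⟨M, hM⟩ := (isCompact_Icc.prod isCompact_Icc).exists_bound_of_continuousOn
    (hG.continuousOn.mono (prod_mono_right hST))
  have bounded : ∀ r ∈ Icc 0 R, ∀ s ∈ Ioo 0 S,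
      |scaledReverse (ν / 2) t₀ G (r, s)| ≤ R ^ (ν / 2) * M := fun r hr s hs =>
    (hscale r hr s).trans (mul_le_mul_of_nonneg_left (hM (r, t₀ - s) ⟨hr, mem hs⟩) (by positivity))
  have ne_zero : ∀ s ∈ Ioo 0 S, ∃ r ∈ Ioo 0 R, scaledReverse (ν / 2) t₀ G (r, s) ≠ 0 :=
    fun s hs => by
      obtain ⟨r, hr, hGr⟩ := hne (t₀ - s) ⟨by linarith [hs.2], by linarith [hs.1]⟩
      exact ⟨r, hr, mul_ne_zero (Real.rpow_pos_of_pos hr.1 _).ne' hGr⟩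
  rw [← mul_div_cancel₀ ν two_ne_zero] at hdefect
  refine (backwardFlow_scaledReverse hR (half_pos hν) hT hST hG h0 hR0
    hdefect).not_forall_le_mul_pow (x₀ := (a + c) / 2) (δ := (c - a) / 4) (by positivity)
    (by positivity) hS (by linarith) ⟨by linarith, by linarith⟩ bounded ne_zero fun k => ?_
  obtain ⟨A, hA⟩ := (hflat k).exists_abs_le_mul_pow
    (isOpen_Ioo.uniqueDiffOn.prod hT.uniqueDiffOn)
    (isCompact_Icc (a := (a + c) / 2 - (c - a) / 4) (b := (a + c) / 2 + (c - a) / 4))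
    (Icc_subset_Ioo (by linarith) (by linarith)) hS hST
    (hG.mono (prod_mono_left (hacR.trans Ioo_subset_Icc_self)))
  refine ⟨R ^ (ν / 2) * A, fun r hr hrx s hs => (hscale r hr s).trans ?_⟩
  obtain ⟨h₁, h₂⟩ := abs_lt.1 hrx
  rw [mul_assoc]
  exact mul_le_mul_of_nonneg_left
    (hA r ⟨by linarith, by linarith⟩ s (Ioo_subset_Icc_self hs)) (by positivity)

lemma dirDerivWithin_sub_mul {Q : Set (ℝ × ℝ)} (hQ : UniqueDiffOn ℝ Q)
    (hF : DifferentiableOn ℝ F Q) (w : ℝ × ℝ) :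
    EqOn (dirDerivWithin Q w fun q => (R - q.1) * F q)
      (fun q => (R - q.1) * dirDerivWithin Q w F q - w.1 * F q) Q := fun q hq => by
  have hw : dirDerivWithin Q w (fun q => R - q.1) q = -w.1 := by
    simp [dirDerivWithin, fderivWithin_fun_sub (hQ q hq) (differentiableWithinAt_const R)
      differentiableWithinAt_fst, fderivWithin_fst (hQ q hq)]
  refine (dirDerivWithin_mul hQ (by fun_prop) hF w hq).trans ?_
  dsimp only
  rw [hw]
  ring

lemma besselDefect_sub_mul (hR : 0 < R) (hT : IsOpen T) (hF : ContDiffOn ℝ ∞ F (Icc 0 R ×ˢ T))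
    (hq : q ∈ Icc 0 R ×ˢ T) :
    besselDefect ν (Icc 0 R ×ˢ T) (fun q => (R - q.1) * F q) q =
      (R - q.1) * besselDefect ν (Icc 0 R ×ˢ T) F q +
        (2 * dirDerivWithin (Icc 0 R ×ˢ T) (1, 0) F q + ν * (F q / q.1)) := by
  have hU := (uniqueDiffOn_Icc hR).prod hT.uniqueDiffOn
  have hF' := hF.differentiableOn (by simp)
  have hFr := (contDiffOn_dirDerivWithin hU hF (1, 0)).differentiableOn (by simp)
  have first := dirDerivWithin_sub_mul (R := R) hU hF' (1, 0)
  have second : dirDerivWithin (Icc 0 R ×ˢ T) (1, 0)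
      (dirDerivWithin (Icc 0 R ×ˢ T) (1, 0) fun q => (R - q.1) * F q) q =
      (R - q.1) * dirDerivWithin (Icc 0 R ×ˢ T) (1, 0) (dirDerivWithin (Icc 0 R ×ˢ T) (1, 0) F) q -
        2 * dirDerivWithin (Icc 0 R ×ˢ T) (1, 0) F q := by
    rw [eqOn_dirDerivWithin first (1, 0) hq, dirDerivWithin_sub hU (by fun_prop) (by fun_prop) _ hq]
    simp only [one_mul]
    rw [dirDerivWithin_sub_mul hU hFr (1, 0) hq]
    ring
  rw [besselDefect, besselDefect, second, first hq, dirDerivWithin_sub_mul hU hF' (0, 1) hq]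
  ring

-- Applied with `w = R - r`, `A = F / r`, `B = F_r`, `f = F`: then `w * A` and `w * B - f` are the
-- corresponding quantities for `(R - r) * F`.
lemma abs_le_of_nondegenerate {w A B f η M : ℝ} (hR : 0 ≤ R) (hη : 0 < η) (hw : 0 ≤ w)
    (hA : |A| ≤ M) (hB : |B| ≤ M) (hf : |f| ≤ R * |A|) (hlow : η ≤ |f| + M * w) :
    |A| ≤ 2 * M / η * (w * |A| + |w * B - f|) ∧
      |B| ≤ (3 * M + 2 * M * R * (2 * M / η)) / η * (w * |A| + |w * B - f|) := by
  have hM : 0 ≤ M := (abs_nonneg A).trans hA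
  have hA0 := abs_nonneg A
  have hB0 := abs_nonneg B
  have hD0 := abs_nonneg (w * B - f)
  have hwB : |w * B| = w * |B| := by rw [abs_mul, abs_of_nonneg hw]
  have f_le : |f| ≤ w * |B| + |w * B - f| := by
    have := abs_sub_abs_le_abs_sub f (w * B)
    rw [abs_sub_comm, hwB] at this
    linarith
  have wB_le : w * |B| ≤ |w * B - f| + R * |A| := by
    have := abs_sub_abs_le_abs_sub (w * B) f
    rw [hwB] at this
    linarith
  have η_le : η ≤ |w * B - f| + 2 * M * w := by
    linarith [mul_le_mul_of_nonneg_left hB hw]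
  have A_le : |A| ≤ 2 * M / η * (w * |A| + |w * B - f|) := by
    rw [div_mul_eq_mul_div, le_div_iff₀ hη]
    linarith [mul_le_mul_of_nonneg_left η_le hA0, mul_le_mul_of_nonneg_right hA hD0,
      mul_nonneg hM hD0]
  refine ⟨A_le, ?_⟩
  rw [div_mul_eq_mul_div, le_div_iff₀ hη]
  linarith [mul_le_mul_of_nonneg_left η_le hB0, mul_le_mul_of_nonneg_right hB hD0,
    mul_le_mul_of_nonneg_left wB_le (mul_nonneg zero_le_two hM),
    mul_le_mul_of_nonneg_left A_le (mul_nonneg (mul_nonneg zero_le_two hM) hR),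
    mul_nonneg hM (mul_nonneg hw hA0)]

lemma exists_le_abs_add_mul {M : ℝ} (hR : 0 ≤ R) (hK : IsCompact K) (hKT : K ⊆ T)
    (hF : ContDiffOn ℝ ∞ F (Icc 0 R ×ˢ T)) (hne : ∀ t ∈ K, F (R, t) ≠ 0)
    (hM : ∀ q ∈ Icc 0 R ×ˢ K, |dirDerivWithin (Icc 0 R ×ˢ T) (1, 0) F q| ≤ M) :
    ∃ η, 0 < η ∧ ∀ q ∈ Icc 0 R ×ˢ K, η ≤ |F q| + M * (R - q.1) := by
  have hFR : ContinuousOn (fun t => |F (R, t)|) K :=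
    (hF.continuousOn.comp (by fun_prop) fun t ht => ⟨right_mem_Icc.2 hR, hKT ht⟩).abs
  obtain ⟨η, hη, hηF⟩ := hK.exists_forall_le' hFR fun t ht => abs_pos.2 (hne t ht)
  refine ⟨η, hη, fun q hq => (hηF q.2 hq.2).trans ?_⟩
  have mvt := (convex_Icc 0 R).norm_image_sub_le_of_norm_hasDerivWithin_le
    (fun r hr => hasDerivWithinAt_slice_fst (hF.differentiableOn (by simp)) hr (hKT hq.2))
    (fun r hr => hM (r, q.2) ⟨hr, hq.2⟩) hq.1 (right_mem_Icc.2 hR)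
  rw [Real.norm_eq_abs, Real.norm_eq_abs, abs_of_nonneg (sub_nonneg.2 hq.1.2)] at mvt
  linarith [abs_sub_abs_le_abs_sub (F (R, q.2)) (F q)]

lemma exists_abs_div_le_and_abs_dirDerivWithin_le (hR : 0 < R) (hT : IsOpen T)
    (hK : IsCompact K) (hKT : K ⊆ T) (hF : ContDiffOn ℝ ∞ F (Icc 0 R ×ˢ T))
    (h0 : ∀ t ∈ T, F (0, t) = 0) (hne : ∀ t ∈ K, F (R, t) ≠ 0) :
    ∃ k l, ∀ q ∈ Ioo 0 R ×ˢ K,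
      |F q / q.1| ≤ k * ((R - q.1) * |F q / q.1| +
        |(R - q.1) * dirDerivWithin (Icc 0 R ×ˢ T) (1, 0) F q - F q|) ∧
      |dirDerivWithin (Icc 0 R ×ˢ T) (1, 0) F q| ≤ l * ((R - q.1) * |F q / q.1| +
        |(R - q.1) * dirDerivWithin (Icc 0 R ×ˢ T) (1, 0) F q - F q|) := by
  have hU := (uniqueDiffOn_Icc hR).prod hT.uniqueDiffOn
  obtain ⟨M₁, hM₁⟩ := exists_abs_div_le hR hT hK hKT hF h0
  obtain ⟨M₂, hM₂⟩ := (isCompact_Icc.prod hK).exists_bound_of_continuousOn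
    ((contDiffOn_dirDerivWithin hU hF (1, 0)).continuousOn.mono (prod_mono_right hKT))
  set M := max M₁ M₂
  have hFr : ∀ q ∈ Icc 0 R ×ˢ K, |dirDerivWithin (Icc 0 R ×ˢ T) (1, 0) F q| ≤ M := fun q hq =>
    (hM₂ q hq).trans (le_max_right _ _)
  obtain ⟨η, hη, hηF⟩ := exists_le_abs_add_mul hR.le hK hKT hF hne hFr
  refine ⟨2 * M / η, (3 * M + 2 * M * R * (2 * M / η)) / η, fun q hq => ?_⟩
  have hq' : q ∈ Icc 0 R ×ˢ K := ⟨Ioo_subset_Icc_self hq.1, hq.2⟩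
  refine abs_le_of_nondegenerate hR.le hη (sub_nonneg.2 hq'.1.2)
    ((hM₁ q hq).trans (le_max_left _ _)) (hFr q hq') ?_ (hηF q hq')
  rw [abs_div, abs_of_pos hq.1.1, mul_div_assoc', le_div_iff₀ hq.1.1, mul_comm]
  exact mul_le_mul_of_nonneg_right hq'.1.2 (abs_nonneg _)

namespace IsRadialSolution

lemma vanishesInTime (h : IsRadialSolution ν R T b F) (hT : IsOpen T) (ht₀ : t₀ ∈ T)
    (hJ : IsOpen J) (hJR : J ⊆ Ioo 0 R) (h₀ : ∀ r ∈ J, F (r, t₀) = 0) (k : ℕ) :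
    VanishesInTime J T t₀ k F := by
  have sub : J ×ˢ T ⊆ Icc 0 R ×ˢ T := prod_mono_left (hJR.trans Ioo_subset_Icc_self)
  have hne : ∀ q ∈ J ×ˢ T, q.1 ≠ 0 := fun q hq => (hJR hq.1).1.ne'
  have hfst : ContDiffOn ℝ ∞ (fun q : ℝ × ℝ => q.1) (J ×ˢ T) := contDiff_fst.contDiffOn
  have hr := eqOn_dirDerivWithin_of_isOpen (hJ.prod hT) sub (eqOn_refl F _) (1, 0)
  refine VanishesInTime.of_parabolic_eq (c₁ := fun q => ν / q.1) (c₂ := fun q => -(b q / q.1 ^ 2))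
    hJ hT ht₀ (h.contDiffOn.mono sub) (contDiffOn_const.div hfst hne)
    ((h.contDiffOn_potential.mono sub).div (hfst.pow 2) fun q hq => pow_ne_zero 2 (hne q hq)).neg
    (fun q hq => ?_) h₀ k
  dsimp only
  rw [← eqOn_dirDerivWithin_of_isOpen (hJ.prod hT) sub (eqOn_refl F _) (0, 1) hq,
    ← eqOn_dirDerivWithin_of_isOpen (hJ.prod hT) sub hr (1, 0) hq, ← hr hq,
    h.dirDerivWithin_snd q ⟨hJR hq.1, hq.2⟩]
  ring

lemma exists_abs_besselDefect_le (h : IsRadialSolution ν R T b F) (hR : 0 < R) (hT : IsOpen T)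
    (hK : IsCompact K) (hKT : K ⊆ T) :
    ∃ C, ∀ q ∈ Ioo 0 R ×ˢ K, |besselDefect ν (Icc 0 R ×ˢ T) F q| ≤ C * |F q / q.1| := by
  obtain ⟨C, hC⟩ := exists_abs_div_le hR hT hK hKT (h.contDiffOn_potential.sub contDiffOn_const)
    fun t ht => sub_eq_zero.2 (h.potential_zero t ht)
  refine ⟨C, fun q hq => ?_⟩
  have key : besselDefect ν (Icc 0 R ×ˢ T) F q = -((b q - ν) / q.1) * (F q / q.1) := by
    have := hq.1.1.ne'
    rw [besselDefect, h.dirDerivWithin_snd q ⟨hq.1, hKT hq.2⟩]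
    field_simp
    ring
  rw [key, abs_mul, abs_neg]
  exact mul_le_mul_of_nonneg_right (hC q hq) (abs_nonneg _)

lemma exists_abs_besselDefect_sub_mul_le (h : IsRadialSolution ν R T b F) (hν : 0 ≤ ν)
    (hR : 0 < R) (hT : IsOpen T) (hK : IsCompact K) (hKT : K ⊆ T) (hne : ∀ t ∈ K, F (R, t) ≠ 0) :
    ∃ C, ∀ q ∈ Ioo 0 R ×ˢ K, |besselDefect ν (Icc 0 R ×ˢ T) (fun q => (R - q.1) * F q) q| ≤
      C * (|(R - q.1) * F q / q.1| +
        |dirDerivWithin (Icc 0 R ×ˢ T) (1, 0) (fun q => (R - q.1) * F q) q|) := by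
  have hU := (uniqueDiffOn_Icc hR).prod hT.uniqueDiffOn
  have hF' := h.contDiffOn.differentiableOn (by simp)
  obtain ⟨C, hC⟩ := h.exists_abs_besselDefect_le hR hT hK hKT
  obtain ⟨k, l, hkl⟩ := exists_abs_div_le_and_abs_dirDerivWithin_le hR hT hK hKT h.contDiffOn
    h.eq_zero hne
  refine ⟨|C| + 2 * l + ν * k, fun q hq => ?_⟩
  obtain ⟨hA, hB⟩ := hkl q hq
  have hqT : q ∈ Icc 0 R ×ˢ T := ⟨Ioo_subset_Icc_self hq.1, hKT hq.2⟩
  have hw : 0 ≤ R - q.1 := sub_nonneg.2 hqT.1.2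
  rw [besselDefect_sub_mul hR hT h.contDiffOn hqT, dirDerivWithin_sub_mul hU hF' (1, 0) hqT]
  dsimp only
  rw [one_mul, mul_div_assoc, abs_mul, abs_of_nonneg hw]
  set A := F q / q.1
  set B := dirDerivWithin (Icc 0 R ×ˢ T) (1, 0) F q
  set E := (R - q.1) * |A| + |(R - q.1) * B - F q|
  have hE : (R - q.1) * |A| ≤ E := le_add_of_nonneg_right (abs_nonneg _)
  calc |(R - q.1) * besselDefect ν (Icc 0 R ×ˢ T) F q + (2 * B + ν * A)|
      ≤ |(R - q.1) * besselDefect ν (Icc 0 R ×ˢ T) F q| + (|2 * B| + |ν * A|) :=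
        (abs_add_le _ _).trans (add_le_add_right (abs_add_le _ _) _)
    _ = (R - q.1) * |besselDefect ν (Icc 0 R ×ˢ T) F q| + (2 * |B| + ν * |A|) := by
        rw [abs_mul, abs_of_nonneg hw, abs_mul, abs_mul, abs_two, abs_of_nonneg hν]
    _ ≤ (R - q.1) * (|C| * |A|) + (2 * (l * E) + ν * (k * E)) := by
        gcongr
        exact (hC q hq).trans (mul_le_mul_of_nonneg_right (le_abs_self C) (abs_nonneg _))
    _ ≤ (|C| + 2 * l + ν * k) * E := by
        linarith [mul_le_mul_of_nonneg_left hE (abs_nonneg C)]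

theorem exists_forall_eq_zero (h : IsRadialSolution ν R T b F) (hν : 0 < ν) (hT : IsOpen T)
    (hS : 0 < S) (hST : Icc (t₀ - S) t₀ ⊆ T)
    (hbc : (∀ t ∈ T, F (R, t) = 0) ∨ ∀ t ∈ T, F (R, t) ≠ 0) (hac : a < c)
    (hacR : Ioo a c ⊆ Ioo 0 R) (h₀ : ∀ r ∈ Ioo a c, F (r, t₀) = 0) :
    ∃ t ∈ Ioo (t₀ - S) t₀, ∀ r ∈ Ioo 0 R, F (r, t) = 0 := by
  have hR : 0 < R := by
    obtain ⟨ha, hc⟩ := (Ioo_subset_Ioo_iff hac).1 hacR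
    linarith
  have ht₀ : t₀ ∈ T := hST ⟨by linarith, le_rfl⟩
  have flat := h.vanishesInTime hT ht₀ isOpen_Ioo hacR h₀
  rcases hbc with hbc | hbc
  · obtain ⟨C, hC⟩ := h.exists_abs_besselDefect_le hR hT isCompact_Icc hST
    refine exists_forall_eq_zero_of_besselDefect_le (C := |C|) hν hT hS hST h.contDiffOn h.eq_zero
      hbc (fun q hq => (hC q hq).trans ?_) hac hacR flat
    gcongr
    exacts [le_abs_self C, le_add_of_nonneg_right (abs_nonneg _)]
  · obtain ⟨C, hC⟩ := h.exists_abs_besselDefect_sub_mul_le hν.le hR hT isCompact_Icc hST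
      fun t ht => hbc t (hST ht)
    have hw : ContDiffOn ℝ ∞ (fun q : ℝ × ℝ => R - q.1) (Icc 0 R ×ˢ T) := by fun_prop
    have sub : Ioo a c ×ˢ T ⊆ Icc 0 R ×ˢ T := prod_mono_left (hacR.trans Ioo_subset_Icc_self)
    obtain ⟨t, ht, hzero⟩ := exists_forall_eq_zero_of_besselDefect_le hν hT hS hST
      (hw.mul h.contDiffOn) (fun t ht => by simp [h.eq_zero t ht]) (fun t _ => by simp) hC hac hacR
      fun k => (flat k).mul_left (isOpen_Ioo.uniqueDiffOn.prod hT.uniqueDiffOn) ht₀ (hw.mono sub)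
        (h.contDiffOn.mono sub)
    exact ⟨t, ht, fun r hr => (mul_eq_zero.1 (hzero r hr)).resolve_left (sub_pos.2 hr.2).ne'⟩

end IsRadialSolution

end UniqueContinuation

section ZeroCurves

open scoped Topology ContDiff

lemma eventually_exists_eq_zero_of_deriv_ne_zero {F : ℝ × ℝ → ℝ} {T U : Set ℝ} {r t : ℝ}
    (hU : U ∈ 𝓝 r) (hT : T ∈ 𝓝 t) (hF : ContinuousOn F (U ×ˢ T)) (hr : F (r, t) = 0)
    (hd : deriv (fun x => F (x, t)) r ≠ 0) : ∀ᶠ s in 𝓝 t, ∃ x ∈ U, F (x, s) = 0 := by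
  wlog hpos : 0 < deriv (fun x => F (x, t)) r generalizing F
  · have hneg : deriv (fun x => -F (x, t)) r = -deriv (fun x => F (x, t)) r := deriv.fun_neg
    simpa using this (F := fun q => -F q) hF.neg (by simpa using hr) (by rwa [hneg, neg_ne_zero])
      (by rw [hneg]; exact neg_pos.2 (lt_of_le_of_ne (not_lt.1 hpos) hd))
  obtain ⟨l, u, ⟨hl, hu⟩, hlu⟩ := mem_nhds_iff_exists_Ioo_subset.1
    (inter_mem hU (eventually_nhdsWithin_sign_eq_of_deriv_pos hpos hr))
  obtain ⟨a, hla, har⟩ := exists_between hl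
  obtain ⟨c, hrc, hcu⟩ := exists_between hu
  have sub : Icc a c ⊆ U := (Icc_subset_Ioo hla hcu).trans (hlu.trans inter_subset_left)
  have hac : a ≤ c := har.le.trans hrc.le
  have hsign : ∀ x ∈ Ioo l u, SignType.sign (F (x, t)) = SignType.sign (x - r) :=
    fun x hx => (hlu hx).2
  have ha : F (a, t) < 0 :=
    sign_eq_neg_one_iff.1 ((hsign a ⟨hla, har.trans hu⟩).trans (sign_neg (sub_neg.2 har)))
  have hc : 0 < F (c, t) :=
    sign_eq_one_iff.1 ((hsign c ⟨hl.trans hrc, hcu⟩).trans (sign_pos (sub_pos.2 hrc)))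
  have slice : ∀ x ∈ U, ContinuousAt (fun s => F (x, s)) t := fun x hx =>
    (hF.comp (f := fun s => (x, s)) (by fun_prop) fun s hs => ⟨hx, hs⟩).continuousAt hT
  filter_upwards [(slice a (sub (left_mem_Icc.2 hac))).eventually_lt_const ha,
    (slice c (sub (right_mem_Icc.2 hac))).eventually_const_lt hc, hT] with s has hcs hs
  obtain ⟨x, hx, hx0⟩ := intermediate_value_Icc hac
    (hF.comp (f := fun x => (x, s)) (by fun_prop) fun x hx => ⟨sub hx, hs⟩) ⟨has.le, hcs.le⟩
  exact ⟨x, sub hx, hx0⟩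

lemma lowerHemicontinuousOn_setOf_eq_zero {F : ℝ × ℝ → ℝ} {T I : Set ℝ} {a c : ℝ} (hT : IsOpen T)
    (hIT : I ⊆ T) (hF : ContinuousOn F (Icc a c ×ˢ T))
    (ha : (∀ t ∈ T, F (a, t) = 0) ∨ ∀ t ∈ T, F (a, t) ≠ 0)
    (hc : (∀ t ∈ T, F (c, t) = 0) ∨ ∀ t ∈ T, F (c, t) ≠ 0)
    (hsimple : ∀ t ∈ I, ∀ r ∈ Ioo a c, F (r, t) = 0 → deriv (fun x => F (x, t)) r ≠ 0) :
    LowerHemicontinuousOn (fun t => {r ∈ Icc a c | F (r, t) = 0}) I := by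
  refine lowerHemicontinuousOn_iff.2 fun t ht => lowerHemicontinuousWithinAt_iff.2 ?_
  rintro U hU ⟨r, ⟨hr, hr0⟩, hrU⟩
  have hTt : T ∈ 𝓝 t := hT.mem_nhds (hIT ht)
  refine Eventually.filter_mono nhdsWithin_le_nhds ?_
  have of_end (h : (∀ s ∈ T, F (r, s) = 0) ∨ ∀ s ∈ T, F (r, s) ≠ 0) :
      ∀ᶠ s in 𝓝 t, ({r ∈ Icc a c | F (r, s) = 0} ∩ U).Nonempty := by
    filter_upwards [hTt] with s hs
    exact ⟨r, ⟨hr, h.resolve_right (fun hne => hne t (hIT ht) hr0) s hs⟩, hrU⟩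
  rcases eq_endpoints_or_mem_Ioo_of_mem_Icc hr with rfl | rfl | hr'
  · exact of_end ha
  · exact of_end hc
  · filter_upwards [eventually_exists_eq_zero_of_deriv_ne_zero
      (inter_mem (Ioo_mem_nhds hr'.1 hr'.2) (hU.mem_nhds hrU)) hTt
      (hF.mono (prod_mono_left (inter_subset_left.trans Ioo_subset_Icc_self))) hr0
      (hsimple t ht r hr' hr0)] with s hs
    obtain ⟨x, hx, hx0⟩ := hs
    exact ⟨x, ⟨Ioo_subset_Icc_self hx.1, hx0⟩, hx.2⟩

section Enumeration

variable {X α : Type*} [TopologicalSpace X] [LinearOrder α] [TopologicalSpace α] [OrderTopology α]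
  {Z : X → Set α} {I : Set X} {k : ℕ}

lemma continuousOn_of_strictMono_of_range_eq {e : X → Fin k → α}
    (hZ : LowerHemicontinuousOn Z I) (he : ∀ t ∈ I, StrictMono (e t))
    (hrange : ∀ t ∈ I, range (e t) = Z t) : ContinuousOn e I := by
  intro t ht
  refine tendsto_def.2 fun W hW => ?_
  have hmono : ∀ᶠ w in 𝓝 (e t), StrictMono w := by
    simp only [StrictMono, eventually_all]
    exact fun i j hij => (continuous_apply i).continuousAt.eventually_lt
      (continuous_apply j).continuousAt (he t ht hij)
  obtain ⟨V, hVW, hV, htV⟩ := mem_nhds_iff.1 (inter_mem hW hmono)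
  obtain ⟨U, hU, hUV⟩ := isOpen_pi_iff'.1 hV (e t) htV
  have near : ∀ᶠ s in 𝓝[I] t, ∀ j, (Z s ∩ U j).Nonempty := eventually_all.2 fun j =>
    lowerHemicontinuousWithinAt_iff.1 (hZ t ht) (U j) (hU j).1
      ⟨e t j, hrange t ht ▸ mem_range_self j, (hU j).2⟩
  filter_upwards [near, self_mem_nhdsWithin] with s hs hsI
  choose w hwZ hwU using hs
  obtain ⟨hwW, hw⟩ := hVW (hUV fun j _ => hwU j)
  choose f hf using fun j => (hrange s hsI).symm ▸ hwZ j
  have hfmono : StrictMono f := fun i j hij => (he s hsI).lt_iff_lt.1 (by rw [hf, hf]; exact hw hij)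
  have hwe : e s = w := funext fun j => by rw [← hf j, hfmono.eq_id, id]
  exact mem_preimage.2 (hwe ▸ hwW)

lemma exists_continuousOn_strictMono_range_eq [Nonempty α]
    (hZ : LowerHemicontinuousOn Z I) (hcard : ∀ t ∈ I, (Z t).encard = k) :
    ∃ e : X → Fin k → α, ContinuousOn e I ∧ ∀ t ∈ I, StrictMono (e t) ∧ range (e t) = Z t := by
  have exists_enum : ∀ t, ∃ e : Fin k → α, t ∈ I → StrictMono e ∧ range e = Z t := fun t => by
    by_cases ht : t ∈ I
    · have hfin : (Z t).Finite := finite_of_encard_eq_coe (hcard t ht)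
      have hk : hfin.toFinset.card = k := by
        rw [← ENat.natCast_inj, ← hcard t ht, hfin.encard_eq_coe_toFinset_card]
      refine ⟨hfin.toFinset.orderEmbOfFin hk, fun _ => ⟨OrderEmbedding.strictMono _, ?_⟩⟩
      rw [Finset.range_orderEmbOfFin, hfin.coe_toFinset]
    · exact ⟨fun _ => Classical.arbitrary α, fun h => absurd h ht⟩
  choose e he using exists_enum
  exact ⟨e, continuousOn_of_strictMono_of_range_eq hZ (fun t ht => (he t ht).1)
    fun t ht => (he t ht).2, he⟩

end Enumeration

lemma exists_tendsto_nhdsLT_of_dense_eventually_ne {g : ℝ → ℝ} {l t₀ A B : ℝ} (hl : l < t₀)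
    (hg : ContinuousOn g (Ioo l t₀)) (hgAB : MapsTo g (Ioo l t₀) (Icc A B))
    (hne : Dense {r | ∀ᶠ t in 𝓝[<] t₀, g t ≠ r}) : ∃ L, Tendsto g (𝓝[<] t₀) (𝓝 L) := by
  have hmaps : ∀ᶠ t in 𝓝[<] t₀, g t ∈ Icc A B := mem_of_superset (Ioo_mem_nhdsLT hl) hgAB
  refine tendsto_of_no_upcrossings hne ?_ ⟨B, hmaps.mono fun _ h => h.2⟩
    ⟨A, hmaps.mono fun _ h => h.1⟩
  rintro r (hr : ∀ᶠ t in 𝓝[<] t₀, g t ≠ r) y - hry ⟨hlt, hgt⟩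
  obtain ⟨p, hp, hpr⟩ := (mem_nhdsLT_iff_exists_Ioo_subset' hl).1
    (inter_mem (Ioo_mem_nhdsLT hl) hr)
  have hmem : Ioo p t₀ ∈ 𝓝[<] t₀ := Ioo_mem_nhdsLT hp
  obtain ⟨s, hs, hsp⟩ := (hlt.and_eventually hmem).exists
  obtain ⟨s', hs', hsp'⟩ := (hgt.and_eventually hmem).exists
  obtain ⟨q, hq, hqr⟩ := isPreconnected_Ioo.intermediate_value hsp hsp'
    (hg.mono (hpr.trans inter_subset_left)) ⟨hs.le, (hry.trans hs').le⟩
  exact (hpr hq).2 hqr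

namespace IsRadialSolution

variable {ν R S t₀ : ℝ} {T : Set ℝ} {b F : ℝ × ℝ → ℝ}

lemma of_deriv (hT : IsOpen T) (hb : ContDiffOn ℝ ∞ b (Icc 0 R ×ˢ T))
    (hb0 : ∀ t ∈ T, b (0, t) = ν) (hF : ContDiffOn ℝ ∞ F (Icc 0 R ×ˢ T))
    (h0 : ∀ t ∈ T, F (0, t) = 0)
    (hpde : ∀ r ∈ Ioo 0 R, ∀ t ∈ T, deriv (fun s => F (r, s)) t =
      deriv (deriv fun x => F (x, t)) r + ν / r * deriv (fun x => F (x, t)) r -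
        b (r, t) / r ^ 2 * F (r, t)) :
    IsRadialSolution ν R T b F := by
  refine ⟨hb, hb0, hF, h0, ?_⟩
  rintro ⟨r, t⟩ ⟨hr, ht⟩
  have hR : 0 < R := hr.1.trans hr.2
  have hF' := hF.differentiableOn (by simp)
  have hFr := (contDiffOn_dirDerivWithin ((uniqueDiffOn_Icc hR).prod hT.uniqueDiffOn) hF
    (1, 0)).differentiableOn (by simp)
  have hIcc : ∀ x ∈ Ioo 0 R, Icc 0 R ∈ 𝓝 x := fun x hx => Icc_mem_nhds hx.1 hx.2
  have first : ∀ x ∈ Ioo 0 R, deriv (fun x => F (x, t)) x =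
      dirDerivWithin (Icc 0 R ×ˢ T) (1, 0) F (x, t) := fun x hx =>
    (hasDerivAt_slice_fst hF' (hIcc x hx) ht).deriv
  have second : deriv (deriv fun x => F (x, t)) r = dirDerivWithin (Icc 0 R ×ˢ T) (1, 0)
      (dirDerivWithin (Icc 0 R ×ˢ T) (1, 0) F) (r, t) :=
    (eventuallyEq_of_mem (Ioo_mem_nhds hr.1 hr.2) first).deriv_eq.trans
      (hasDerivAt_slice_fst hFr (hIcc r hr) ht).deriv
  rw [← (hasDerivAt_slice_snd hF' (mem_of_mem_nhds (hIcc r hr)) (hT.mem_nhds ht)).deriv,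
    ← second, ← first r hr]
  exact hpde r hr t ht

lemma dense_setOf_mem_imp_ne_zero (h : IsRadialSolution ν R T b F) (hν : 0 < ν) (hT : IsOpen T)
    (hS : 0 < S) (hST : Icc (t₀ - S) t₀ ⊆ T)
    (hbc : (∀ t ∈ T, F (R, t) = 0) ∨ ∀ t ∈ T, F (R, t) ≠ 0)
    (hne : ∀ t ∈ Ioo (t₀ - S) t₀, ∃ r ∈ Ioo 0 R, F (r, t) ≠ 0) :
    Dense {r | r ∈ Icc 0 R → F (r, t₀) ≠ 0} := by
  refine dense_of_exists_between fun a c hac => ?_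
  by_contra! hcon
  have hzero : ∀ r ∈ Ioo a c, r ∈ Icc 0 R ∧ F (r, t₀) = 0 := fun r hr =>
    not_not.1 fun hr' => hcon r (fun hrR hFr => hr' ⟨hrR, hFr⟩) hr
  have hacR : Ioo a c ⊆ Ioo 0 R :=
    interior_Icc (a := (0 : ℝ)) ▸ interior_maximal (fun r hr => (hzero r hr).1) isOpen_Ioo
  obtain ⟨t, ht, hFt⟩ := h.exists_forall_eq_zero hν hT hS hST hbc hac hacR
    fun r hr => (hzero r hr).2
  obtain ⟨r, hr, hFr⟩ := hne t ht
  exact hFr (hFt r hr)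

lemma exists_tendsto_nhdsLT_of_zeros {g : ℝ → ℝ} (h : IsRadialSolution ν R T b F) (hν : 0 < ν)
    (hT : IsOpen T) (hS : 0 < S) (hST : Icc (t₀ - S) t₀ ⊆ T)
    (hbc : (∀ t ∈ T, F (R, t) = 0) ∨ ∀ t ∈ T, F (R, t) ≠ 0)
    (hne : ∀ t ∈ Ioo (t₀ - S) t₀, ∃ r ∈ Ioo 0 R, F (r, t) ≠ 0)
    (hg : ContinuousOn g (Ioo (t₀ - S) t₀))
    (hzero : ∀ t ∈ Ioo (t₀ - S) t₀, g t ∈ Icc 0 R ∧ F (g t, t) = 0) :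
    ∃ L, Tendsto g (𝓝[<] t₀) (𝓝 L) := by
  have hl : t₀ - S < t₀ := sub_lt_self t₀ hS
  refine exists_tendsto_nhdsLT_of_dense_eventually_ne hl hg (fun t ht => (hzero t ht).1)
    ((h.dense_setOf_mem_imp_ne_zero hν hT hS hST hbc hne).mono fun r hr => ?_)
  have hev : ∀ᶠ t in 𝓝 t₀, r ∈ Icc 0 R → F (r, t) ≠ 0 := by
    refine eventually_imp_distrib_left.2 fun hrR => ?_
    have hslice : ContinuousOn (fun t => F (r, t)) T :=
      h.contDiffOn.continuousOn.comp (by fun_prop) fun t ht => ⟨hrR, ht⟩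
    exact (hslice.continuousAt (hT.mem_nhds (hST ⟨hl.le, le_rfl⟩))).eventually_ne (hr hrR)
  filter_upwards [hev.filter_mono nhdsWithin_le_nhds, Ioo_mem_nhdsLT hl] with t ht htS hgr
  exact ht (hgr ▸ (hzero t htS).1) (hgr ▸ (hzero t htS).2)

end IsRadialSolution

end ZeroCurves

theorem zero_curves_exist_general
    {ν R t1 t2 : ℝ} (hν : 0 < ν) (hR : 0 < R) {b v : ℝ → ℝ → ℝ}
    (hb_smooth : ContDiffOn ℝ (⊤ : ℕ∞) (fun p : ℝ × ℝ => b p.1 p.2) (Icc 0 R ×ˢ Ioo t1 t2))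
    (hb0 : ∀ t ∈ Ioo t1 t2, b 0 t = ν)
    (hv_smooth : ContDiffOn ℝ (⊤ : ℕ∞) (fun p : ℝ × ℝ => v p.1 p.2) (Icc 0 R ×ˢ Ioo t1 t2))
    (hpde : ∀ r ∈ Ioo (0 : ℝ) R, ∀ t ∈ Ioo t1 t2,
      deriv (fun s => v r s) t = deriv (deriv (fun x => v x t)) r +
        (ν / r) * deriv (fun x => v x t) r - (b r t / r ^ 2) * v r t)
    (hbcR : (∀ t ∈ Ioo t1 t2, v R t = 0) ∨ (∀ t ∈ Ioo t1 t2, v R t ≠ 0))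
    (hv0 : ∀ t ∈ Ioo t1 t2, v 0 t = 0)
    {t0 : ℝ} (ht0 : t0 ∈ Ioo t1 t2) {n : ℕ} {ε0 : ℝ} (hε0 : 0 < ε0) (hε0' : t1 < t0 - ε0)
    (hsimple : ∀ t ∈ Ioo (t0 - ε0) t0, ∀ r ∈ Ioo (0 : ℝ) R,
      v r t = 0 → deriv (fun x => v x t) r ≠ 0)
    (hcard : ∀ t ∈ Ioo (t0 - ε0) t0, {r ∈ Icc (0 : ℝ) R | v r t = 0}.ncard = n + 1) :
    ∃ ζ : Fin (n + 1) → ℝ → ℝ,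
      (∀ i, ContinuousOn (ζ i) (Ioo (t0 - ε0) t0)) ∧
      (∀ i, ∀ t ∈ Ioo (t0 - ε0) t0, ζ i t ∈ Icc (0 : ℝ) R) ∧
      (∀ t ∈ Ioo (t0 - ε0) t0, ζ 0 t = 0) ∧
      (∀ t ∈ Ioo (t0 - ε0) t0, ∀ i j : Fin (n + 1), i < j → ζ i t < ζ j t) ∧
      (∀ t ∈ Ioo (t0 - ε0) t0, {r ∈ Icc (0 : ℝ) R | v r t = 0} = Set.range fun i => ζ i t) ∧
      (∀ i, ∃ L : ℝ, Tendsto (ζ i) (nhdsWithin t0 (Iio t0)) (nhds L)) := by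
  have sol := IsRadialSolution.of_deriv isOpen_Ioo hb_smooth hb0 hv_smooth hv0 hpde
  have hST : Icc (t0 - ε0) t0 ⊆ Ioo t1 t2 := Icc_subset_Ioo hε0' ht0.2
  have hsub : Ioo (t0 - ε0) t0 ⊆ Ioo t1 t2 := Ioo_subset_Icc_self.trans hST
  have hfin : ∀ t ∈ Ioo (t0 - ε0) t0, {r ∈ Icc (0 : ℝ) R | v r t = 0}.Finite := fun t ht =>
    finite_of_ncard_ne_zero ((hcard t ht).trans_ne n.succ_ne_zero)
  have hne : ∀ t ∈ Ioo (t0 - ε0) t0, ∃ r ∈ Ioo 0 R, v r t ≠ 0 := fun t ht => by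
    by_contra! hcon
    exact Ioo_infinite hR ((hfin t ht).subset fun r hr => ⟨Ioo_subset_Icc_self hr, hcon r hr⟩)
  have hemi := lowerHemicontinuousOn_setOf_eq_zero isOpen_Ioo hsub hv_smooth.continuousOn
    (Or.inl hv0) hbcR hsimple
  obtain ⟨e, he, henum⟩ := exists_continuousOn_strictMono_range_eq hemi (k := n + 1) fun t ht => by
    rw [← (hfin t ht).cast_ncard_eq]
    exact congrArg _ (hcard t ht)
  have hmem : ∀ t ∈ Ioo (t0 - ε0) t0, ∀ i, e t i ∈ Icc 0 R ∧ v (e t i) t = 0 := fun t ht i =>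
    (henum t ht).2.subset (mem_range_self i)
  have hcont : ∀ i, ContinuousOn (fun t => e t i) (Ioo (t0 - ε0) t0) := continuousOn_pi.1 he
  refine ⟨fun i t => e t i, hcont, fun i t ht => (hmem t ht i).1, fun t ht => ?_,
    fun t ht _ _ hij => (henum t ht).1 hij, fun t ht => (henum t ht).2.symm, fun i =>
    sol.exists_tendsto_nhdsLT_of_zeros hν isOpen_Ioo hε0 hST hbcR hne (hcont i) fun t ht =>
      hmem t ht i⟩
  obtain ⟨j, hj⟩ := (henum t ht).2.symm.subset ⟨left_mem_Icc.2 hR.le, hv0 t (hsub ht)⟩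
  exact le_antisymm (hj ▸ (henum t ht).1.monotone (Fin.zero_le j)) (hmem t ht 0).1.1

theorem zero_curves_exist
    (m : ℕ) (hm : 2 ≤ m) (R t1 t2 : ℝ) (hR : 0 < R) (ht12 : t1 < t2)
    (b v : ℝ → ℝ → ℝ)
    (hb_smooth : ContDiffOn ℝ (⊤ : ℕ∞) (fun p : ℝ × ℝ => b p.1 p.2) (Icc 0 R ×ˢ Ioo t1 t2))
    (hb_bdd : ∃ C : ℝ, ∀ r ∈ Icc (0:ℝ) R, ∀ t ∈ Ioo t1 t2, |b r t| ≤ C)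
    (hb_deriv_bdd : ∃ C : ℝ, ∀ r ∈ Icc (0:ℝ) R, ∀ t ∈ Ioo t1 t2,
      |deriv (fun x => b x t) r| ≤ C ∧ |deriv (fun s => b r s) t| ≤ C)
    (hb0 : ∀ t ∈ Ioo t1 t2, b 0 t = (m : ℝ) - 1)
    (hbr0 : ∀ t ∈ Ioo t1 t2, deriv (fun x => b x t) 0 = 0)
    (hv_smooth : ContDiffOn ℝ (⊤ : ℕ∞) (fun p : ℝ × ℝ => v p.1 p.2) (Icc 0 R ×ˢ Ioo t1 t2))
    (hpde : ∀ r ∈ Ioo (0:ℝ) R, ∀ t ∈ Ioo t1 t2,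
      deriv (fun s => v r s) t =
        deriv (deriv (fun x => v x t)) r + (((m : ℝ) - 1) / r) * deriv (fun x => v x t) r
          - (b r t / r ^ 2) * v r t)
    (hbcR : (∀ t ∈ Ioo t1 t2, v R t = 0) ∨ (∀ t ∈ Ioo t1 t2, v R t ≠ 0))
    (hv0 : ∀ t ∈ Ioo t1 t2, v 0 t = 0)
    (hnz : ¬ ∀ r ∈ Icc (0:ℝ) R, ∀ t ∈ Ioo t1 t2, v r t = 0)
    (t0 : ℝ) (ht0 : t0 ∈ Ioo t1 t2) (n : ℕ) (ε0 : ℝ) (hε0 : 0 < ε0) (hε0' : t1 < t0 - ε0)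
    (hsimple : ∀ t ∈ Ioo (t0 - ε0) t0, ∀ r ∈ Icc (0:ℝ) R,
      v r t = 0 → deriv (fun x => v x t) r ≠ 0)
    (hcard : ∀ t ∈ Ioo (t0 - ε0) t0, {r ∈ Icc (0:ℝ) R | v r t = 0}.ncard = n + 1)
    :
    ∃ ζ : Fin (n + 1) → ℝ → ℝ,
      (∀ i, ContinuousOn (ζ i) (Ioo (t0 - ε0) t0)) ∧
      (∀ i, ∀ t ∈ Ioo (t0 - ε0) t0, ζ i t ∈ Icc (0:ℝ) R) ∧
      (∀ t ∈ Ioo (t0 - ε0) t0, ζ 0 t = 0) ∧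
      (∀ t ∈ Ioo (t0 - ε0) t0, ∀ i j : Fin (n + 1), i < j → ζ i t < ζ j t) ∧
      (∀ t ∈ Ioo (t0 - ε0) t0, {r ∈ Icc (0:ℝ) R | v r t = 0} = Set.range fun i => ζ i t) ∧
      (∀ i, ∃ L : ℝ, Tendsto (ζ i) (nhdsWithin t0 (Iio t0)) (nhds L)) :=
  zero_curves_exist_general (sub_pos.2 (by exact_mod_cast hm)) hR hb_smooth hb0 hv_smooth hpde hbcR
    hv0 ht0 hε0 hε0' (fun t ht r hr => hsimple t ht r (Ioo_subset_Icc_self hr)) hcard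
end

section
/- Lemma 2.5(iii): Let v be a classical solution of v_t = v_rr + ((m−1)/r) v_r − (b(r,t)/r²) v on [0,R] × (t1,t2), not identically zero, satisfying the boundary condition (1.5) and v(0,t) = 0 for all t ∈ (t1,t2). Let t0 ∈ (t1,t2), let ε0 > 0 be such that for every t ∈ (t0 − ε0, t0) all zeros of v(·,t) are simple and Z(v(·,t)) = n+1, and let ζ_0 ≡ 0, ζ_1, ..., ζ_n : (t0 − ε0, t0) → [0,R] be the continuous zero curves with ζ_0(t) < ζ_1(t) < ... < ζ_n(t) exhausting the zero set of v(·,t), each having a limit ζ_i(t0) as t → t0⁻. Then Z(v(·,t0)) < ∞; more precisely, {r ∈ [0,R] : v(r,t0) = 0} = {ζ_i(t0) : 0 ≤ i ≤ n}. -/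
open Set Filter

/-!
Zeros of a solution of a linear parabolic equation in one space dimension do not appear out of
nowhere. If a solution has no zeros near an interior point `(x₀, t₀)` at times `t < t₀`, then it has
a constant sign there, and the strong minimum principle keeps it away from zero at `(x₀, t₀)` too.
Hence every interior zero at time `t₀` is an accumulation point of earlier zeros, while the boundary
condition gives the same at the endpoints. As the earlier zeros are finitely many convergent curves,
their accumulation points are exactly the limits of the curves. Away from `r = 0` the singular
coefficients of the radial equation are bounded, so all this applies to it.

The strong minimum principle on `[a, b] × [s, T]` follows from the weak one by comparison with a
small multiple of `((x - a) * (b - x)) ^ 2`: after multiplying the solution by `exp (L * t)` with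
`L` large, this stationary function is a subsolution.
-/

open scoped Topology

/-- `u` is a supersolution at `(x, t)` of `u_t = u_xx + p u_x + q u`. The coefficients are the
values at `(x, t)`, so an equation with variable coefficients is expressed by letting `p` and `q`
vary with the point. The regularity fields keep the derivatives from taking junk values. -/
structure IsSupersolutionAt (p q : ℝ) (u : ℝ → ℝ → ℝ) (x t : ℝ) : Prop where
  differentiableAt_time : DifferentiableAt ℝ (fun τ => u x τ) t
  contDiffAt_space : ContDiffAt ℝ 2 (fun y => u y t) x
  le_deriv_time : deriv (deriv fun y => u y t) x + p * deriv (fun y => u y t) x + q * u x t ≤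
    deriv (fun τ => u x τ) t

/-- `u` is a classical solution at `(x, t)` of `u_t = u_xx + p u_x + q u`, with the same conventions
as for `IsSupersolutionAt`. -/
structure IsSolutionAt (p q : ℝ) (u : ℝ → ℝ → ℝ) (x t : ℝ) : Prop where
  differentiableAt_time : DifferentiableAt ℝ (fun τ => u x τ) t
  contDiffAt_space : ContDiffAt ℝ 2 (fun y => u y t) x
  deriv_time_eq : deriv (fun τ => u x τ) t =
    deriv (deriv fun y => u y t) x + p * deriv (fun y => u y t) x + q * u x t

/-- The parabolic boundary of the cylinder `[a, b] × [s, T]`, that is, its bottom and its lateral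
sides: these carry the data from which the minimum principles bound a supersolution. The top
`(a, b) × {T}` counts as interior. -/
def parabolicBoundary (a b s T : ℝ) : Set (ℝ × ℝ) :=
  Icc a b ×ˢ Icc s T \ Ioo a b ×ˢ Ioc s T

section Operations

variable {u v : ℝ → ℝ → ℝ} {p q x t : ℝ}

lemma isSolutionAt_of_contDiffAt (hu : ContDiffAt ℝ 2 (fun z : ℝ × ℝ => u z.1 z.2) (x, t))
    (heq : deriv (fun τ => u x τ) t =
      deriv (deriv fun y => u y t) x + p * deriv (fun y => u y t) x + q * u x t) :
    IsSolutionAt p q u x t where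
  differentiableAt_time :=
    (hu.comp (f := fun τ => (x, τ)) t (by fun_prop)).differentiableAt two_ne_zero
  contDiffAt_space := hu.comp (f := fun y => (y, t)) x (by fun_prop)
  deriv_time_eq := heq

lemma IsSolutionAt.isSupersolutionAt (h : IsSolutionAt p q u x t) : IsSupersolutionAt p q u x t :=
  ⟨h.differentiableAt_time, h.contDiffAt_space, h.deriv_time_eq.ge⟩

lemma IsSolutionAt.neg (h : IsSolutionAt p q u x t) :
    IsSolutionAt p q (fun y τ => -u y τ) x t where
  differentiableAt_time := h.differentiableAt_time.fun_neg
  contDiffAt_space := h.contDiffAt_space.neg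
  deriv_time_eq := by
    simp only [deriv.fun_neg', deriv.fun_neg, h.deriv_time_eq]
    ring

lemma IsSupersolutionAt.add (hu : IsSupersolutionAt p q u x t) (hv : IsSupersolutionAt p q v x t) :
    IsSupersolutionAt p q (fun y τ => u y τ + v y τ) x t where
  differentiableAt_time := hu.differentiableAt_time.fun_add hv.differentiableAt_time
  contDiffAt_space := hu.contDiffAt_space.add hv.contDiffAt_space
  le_deriv_time := by
    have hderiv : deriv (fun y => u y t + v y t) =ᶠ[𝓝 x]
        fun y => deriv (fun y => u y t) y + deriv (fun y => v y t) y := by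
      filter_upwards [hu.contDiffAt_space.eventually (by simp),
        hv.contDiffAt_space.eventually (by simp)] with y huy hvy
      exact deriv_fun_add (huy.differentiableAt two_ne_zero) (hvy.differentiableAt two_ne_zero)
    rw [hderiv.deriv_eq, hderiv.eq_of_nhds,
      deriv_fun_add hu.differentiableAt_time hv.differentiableAt_time,
      deriv_fun_add
        ((hu.contDiffAt_space.derivWithin (m := 1) (by norm_num)).differentiableAt one_ne_zero)
        ((hv.contDiffAt_space.derivWithin (m := 1) (by norm_num)).differentiableAt one_ne_zero)]
    linarith [hu.le_deriv_time, hv.le_deriv_time]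

lemma IsSupersolutionAt.const_mul {k : ℝ} (hk : 0 ≤ k) (h : IsSupersolutionAt p q u x t) :
    IsSupersolutionAt p q (fun y τ => k * u y τ) x t where
  differentiableAt_time := h.differentiableAt_time.const_mul k
  contDiffAt_space := contDiffAt_const.mul h.contDiffAt_space
  le_deriv_time := by
    simp only [deriv_const_mul_field']
    linarith [mul_le_mul_of_nonneg_left h.le_deriv_time hk]

lemma IsSupersolutionAt.exp_mul (L : ℝ) (h : IsSupersolutionAt p q u x t) :
    IsSupersolutionAt p (q + L) (fun y τ => Real.exp (L * τ) * u y τ) x t where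
  differentiableAt_time := DifferentiableAt.fun_mul (by fun_prop) h.differentiableAt_time
  contDiffAt_space := contDiffAt_const.mul h.contDiffAt_space
  le_deriv_time := by
    have hexp : HasDerivAt (fun τ => Real.exp (L * τ)) (Real.exp (L * t) * L) t := by
      simpa using ((hasDerivAt_id t).const_mul L).exp
    simp only [deriv_const_mul_field', (hexp.fun_mul h.differentiableAt_time.hasDerivAt).deriv]
    linarith [mul_le_mul_of_nonneg_left h.le_deriv_time (Real.exp_pos (L * t)).le]

end Operations

section MinimumPrinciple

variable {u p q : ℝ → ℝ → ℝ} {a b s T P Q x t : ℝ}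

lemma deriv_nonpos_of_isMinOn_Icc {f : ℝ → ℝ} (hst : s < t) (hf : DifferentiableAt ℝ f t)
    (hmin : IsMinOn f (Icc s t) t) : deriv f t ≤ 0 := by
  have hcone : s - t ∈ posTangentConeAt (Icc s t) t :=
    sub_mem_posTangentConeAt_of_segment_subset (by rw [segment_symm, segment_eq_Icc hst.le])
  have hslope := hmin.localize.hasFDerivWithinAt_nonneg
    hf.hasDerivAt.hasFDerivAt.hasFDerivWithinAt hcone
  rw [ContinuousLinearMap.toSpanSingleton_apply, smul_eq_mul] at hslope
  exact nonpos_of_mul_nonneg_right hslope (sub_neg.2 hst)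

lemma deriv_deriv_nonneg_of_isLocalMin {f : ℝ → ℝ} (hf : ContinuousAt f x) (hmin : IsLocalMin f x) :
    0 ≤ deriv (deriv f) x := by
  by_contra! hneg
  have hmax : IsLocalMax f x := isLocalMax_of_deriv_deriv_neg hneg hmin.deriv_eq_zero hf
  have hconst : f =ᶠ[𝓝 x] fun _ => f x := by
    filter_upwards [hmin, hmax] with y hle hge using le_antisymm hge hle
  simp [hconst.deriv.deriv_eq] at hneg

lemma IsSupersolutionAt.nonneg_of_isMin {p q : ℝ} (h : IsSupersolutionAt p q u x t) (hq : q < 0)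
    (hst : s < t) (hspace : IsLocalMin (fun y => u y t) x)
    (htime : IsMinOn (fun τ => u x τ) (Icc s t) t) : 0 ≤ u x t := by
  by_contra! hneg
  have hle := h.le_deriv_time
  rw [hspace.deriv_eq_zero] at hle
  have hxx := deriv_deriv_nonneg_of_isLocalMin h.contDiffAt_space.continuousAt hspace
  have ht := deriv_nonpos_of_isMinOn_Icc hst h.differentiableAt_time htime
  linarith [mul_pos_of_neg_of_neg hq hneg]

lemma nonneg_of_isSupersolutionAt_of_neg
    (hcont : ContinuousOn (fun z : ℝ × ℝ => u z.1 z.2) (Icc a b ×ˢ Icc s T))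
    (hsuper : ∀ x ∈ Ioo a b, ∀ t ∈ Ioc s T, IsSupersolutionAt (p x t) (q x t) u x t)
    (hq : ∀ x ∈ Ioo a b, ∀ t ∈ Ioc s T, q x t < 0)
    (hbdry : ∀ z ∈ parabolicBoundary a b s T, 0 ≤ u z.1 z.2) :
    ∀ z ∈ Icc a b ×ˢ Icc s T, 0 ≤ u z.1 z.2 := by
  intro z hz
  obtain ⟨⟨x, t⟩, hxt, hmin⟩ := (isCompact_Icc.prod isCompact_Icc).exists_isMinOn ⟨z, hz⟩ hcont
  refine le_trans ?_ (hmin hz)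
  by_cases hint : (x, t) ∈ Ioo a b ×ˢ Ioc s T
  · obtain ⟨hx, ht⟩ := hint
    refine (hsuper x hx t ht).nonneg_of_isMin (hq x hx t ht) ht.1 ?_ fun τ hτ => ?_
    · filter_upwards [Icc_mem_nhds hx.1 hx.2] with y hy using hmin (a := (y, t)) ⟨hy, hxt.2⟩
    · exact hmin (a := (x, τ)) ⟨hxt.1, hτ.1, hτ.2.trans ht.2⟩
  · exact hbdry _ ⟨hxt, hint⟩

theorem nonneg_of_isSupersolutionAt
    (hcont : ContinuousOn (fun z : ℝ × ℝ => u z.1 z.2) (Icc a b ×ˢ Icc s T))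
    (hsuper : ∀ x ∈ Ioo a b, ∀ t ∈ Ioc s T, IsSupersolutionAt (p x t) (q x t) u x t)
    (hq : ∀ x ∈ Ioo a b, ∀ t ∈ Ioc s T, q x t ≤ Q)
    (hbdry : ∀ z ∈ parabolicBoundary a b s T, 0 ≤ u z.1 z.2) :
    ∀ z ∈ Icc a b ×ˢ Icc s T, 0 ≤ u z.1 z.2 := by
  have hweighted := nonneg_of_isSupersolutionAt_of_neg
    (u := fun x t => Real.exp (-(Q + 1) * t) * u x t) (p := p) (q := fun x t => q x t + -(Q + 1))
    (ContinuousOn.mul (by fun_prop) hcont)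
    (fun x hx t ht => (hsuper x hx t ht).exp_mul _)
    (fun x hx t ht => by linarith [hq x hx t ht])
    (fun z hz => mul_nonneg (Real.exp_pos _).le (hbdry z hz))
  exact fun z hz => nonneg_of_mul_nonneg_right (hweighted z hz) (Real.exp_pos _)

lemma deriv_neg_quartic :
    deriv (fun y => -((y - a) * (b - y)) ^ 2) =
      fun y => -(2 * ((y - a) * (b - y)) * (a + b - 2 * y)) := by
  funext y
  have hquad : HasDerivAt (fun y => (y - a) * (b - y)) (a + b - 2 * y) y :=
    (((hasDerivAt_id y).sub_const a).fun_mul ((hasDerivAt_id y).const_sub b)).congr_deriv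
      (by simp only [id_eq]; ring)
  simpa using (hquad.fun_pow 2).fun_neg.deriv

lemma deriv_deriv_neg_quartic :
    deriv (deriv fun y => -((y - a) * (b - y)) ^ 2) x =
      4 * ((x - a) * (b - x)) - 2 * (a + b - 2 * x) ^ 2 := by
  have hquad : HasDerivAt (fun y => (y - a) * (b - y)) (a + b - 2 * x) x :=
    (((hasDerivAt_id x).sub_const a).fun_mul ((hasDerivAt_id x).const_sub b)).congr_deriv
      (by simp only [id_eq]; ring)
  have hlin : HasDerivAt (fun y => a + b - 2 * y) (-2) x := by
    simpa using ((hasDerivAt_id x).const_mul 2).const_sub (a + b)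
  rw [deriv_neg_quartic, ((hquad.const_mul 2).fun_mul hlin).fun_neg.deriv]
  ring

/- With `y = (x - a) * (b - x)` and `ℓ = b - a` one has `y_x ^ 2 = ℓ ^ 2 - 4 * y` and `y_xx = -2`,
and the claim reduces to `0 ≤ 2 * ℓ ^ 2 - (12 + 2 * P * ℓ) * y + q * y ^ 2`; the lower bound on `q`
makes the discriminant of this quadratic polynomial in `y` nonpositive. -/
lemma isSupersolutionAt_neg_quartic {p q : ℝ} (hx : x ∈ Ioo a b) (hp : |p| ≤ P)
    (hq : (12 + 2 * P * (b - a)) ^ 2 / (8 * (b - a) ^ 2) ≤ q) :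
    IsSupersolutionAt p q (fun y _ => -((y - a) * (b - y)) ^ 2) x t where
  differentiableAt_time := differentiableAt_const _
  contDiffAt_space := by fun_prop
  le_deriv_time := by
    rw [deriv_deriv_neg_quartic, deriv_neg_quartic, deriv_const]
    beta_reduce
    have hℓ : 0 < b - a := by linarith [hx.1, hx.2]
    have hy : 0 ≤ (x - a) * (b - x) := mul_nonneg (sub_nonneg.2 hx.1.le) (sub_nonneg.2 hx.2.le)
    have hsq : (a + b - 2 * x) ^ 2 = (b - a) ^ 2 - 4 * ((x - a) * (b - x)) := by ring
    have hdrift : -(P * (b - a)) ≤ p * (a + b - 2 * x) := by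
      refine neg_le_of_abs_le ?_
      rw [abs_mul]
      exact mul_le_mul hp (abs_le.2 ⟨by linarith [hx.2], by linarith [hx.1]⟩) (abs_nonneg _)
        ((abs_nonneg p).trans hp)
    generalize (x - a) * (b - x) = y at *
    have hdisc : 0 ≤ 2 * (b - a) ^ 2 - (12 + 2 * P * (b - a)) * y + q * y ^ 2 := by
      rw [div_le_iff₀ (by positivity)] at hq
      have hprod : 0 ≤ 8 * (b - a) ^ 2 *
          (2 * (b - a) ^ 2 - (12 + 2 * P * (b - a)) * y + q * y ^ 2) := by
        linarith [mul_le_mul_of_nonneg_right hq (sq_nonneg y),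
          sq_nonneg (4 * (b - a) ^ 2 - (12 + 2 * P * (b - a)) * y)]
      exact nonneg_of_mul_nonneg_right hprod (by positivity)
    rw [hsq]
    linarith [mul_le_mul_of_nonneg_left hdrift hy]

lemma exists_pos_mul_quartic_le (hab : a < b) {f : ℝ → ℝ} (hf : ContinuousOn f (Icc a b))
    (hpos : ∀ x ∈ Icc a b, 0 < f x) :
    ∃ k > 0, ∀ x ∈ Icc a b, k * ((x - a) * (b - x)) ^ 2 ≤ f x := by
  obtain ⟨y, hy, hmin⟩ := isCompact_Icc.exists_isMinOn (nonempty_Icc.2 hab.le) hf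
  have hℓ : 0 < b - a := sub_pos.2 hab
  refine ⟨f y / (b - a) ^ 4, div_pos (hpos y hy) (pow_pos hℓ 4), fun x hx => ?_⟩
  have hquartic : ((x - a) * (b - x)) ^ 2 ≤ (b - a) ^ 4 := by
    rw [show (b - a) ^ 4 = ((b - a) * (b - a)) ^ 2 by ring]
    have hxa := sub_nonneg.2 hx.1
    have hbx := sub_nonneg.2 hx.2
    gcongr <;> linarith
  calc f y / (b - a) ^ 4 * ((x - a) * (b - x)) ^ 2
      ≤ f y / (b - a) ^ 4 * (b - a) ^ 4 :=
        mul_le_mul_of_nonneg_left hquartic (div_pos (hpos y hy) (pow_pos hℓ 4)).le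
    _ = f y := div_mul_cancel₀ _ (pow_pos hℓ 4).ne'
    _ ≤ f x := hmin hx

lemma pos_of_isSupersolutionAt_of_le
    (hcont : ContinuousOn (fun z : ℝ × ℝ => u z.1 z.2) (Icc a b ×ˢ Icc s T))
    (hsuper : ∀ x ∈ Ioo a b, ∀ t ∈ Ioc s T, IsSupersolutionAt (p x t) (q x t) u x t)
    (hp : ∀ x ∈ Ioo a b, ∀ t ∈ Ioc s T, |p x t| ≤ P)
    (hq : ∀ x ∈ Ioo a b, ∀ t ∈ Ioc s T,
      (12 + 2 * P * (b - a)) ^ 2 / (8 * (b - a) ^ 2) ≤ q x t ∧ q x t ≤ Q)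
    (hbdry : ∀ z ∈ parabolicBoundary a b s T, 0 ≤ u z.1 z.2)
    (hbot : ∀ x ∈ Icc a b, 0 < u x s) :
    ∀ x ∈ Ioo a b, ∀ t ∈ Icc s T, 0 < u x t := by
  intro x hx t ht
  have hbottom : ContinuousOn (fun x => u x s) (Icc a b) :=
    hcont.comp (f := fun x => (x, s)) (by fun_prop) fun x hx => ⟨hx, le_rfl, ht.1.trans ht.2⟩
  obtain ⟨k, hk, hkle⟩ := exists_pos_mul_quartic_le (hx.1.trans hx.2) hbottom hbot
  have hcompare : 0 ≤ u x t + k * -((x - a) * (b - x)) ^ 2 := by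
    refine nonneg_of_isSupersolutionAt (z := (x, t))
      (u := fun x t => u x t + k * -((x - a) * (b - x)) ^ 2) (hcont.add (by fun_prop))
      (fun x hx t ht => (hsuper x hx t ht).add
        ((isSupersolutionAt_neg_quartic hx (hp x hx t ht) (hq x hx t ht).1).const_mul hk.le))
      (fun x hx t ht => (hq x hx t ht).2) ?_ ⟨Ioo_subset_Icc_self hx, ht⟩
    rintro ⟨y, τ⟩ hz
    rcases hz.1.2.1.eq_or_lt with rfl | hτ
    · linarith [hkle y hz.1.1]
    · have hside : y = a ∨ y = b := by
        rcases eq_endpoints_or_mem_Ioo_of_mem_Icc hz.1.1 with h | h | h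
        exacts [.inl h, .inr h, absurd ⟨h, hτ, hz.1.2.2⟩ hz.2]
      rcases hside with rfl | rfl <;> simpa using hbdry _ hz
  have hquartic : 0 < k * ((x - a) * (b - x)) ^ 2 :=
    mul_pos hk (pow_pos (mul_pos (sub_pos.2 hx.1) (sub_pos.2 hx.2)) 2)
  linarith

theorem pos_of_isSupersolutionAt
    (hcont : ContinuousOn (fun z : ℝ × ℝ => u z.1 z.2) (Icc a b ×ˢ Icc s T))
    (hsuper : ∀ x ∈ Ioo a b, ∀ t ∈ Ioc s T, IsSupersolutionAt (p x t) (q x t) u x t)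
    (hp : ∀ x ∈ Ioo a b, ∀ t ∈ Ioc s T, |p x t| ≤ P)
    (hq : ∀ x ∈ Ioo a b, ∀ t ∈ Ioc s T, |q x t| ≤ Q)
    (hbdry : ∀ z ∈ parabolicBoundary a b s T, 0 ≤ u z.1 z.2)
    (hbot : ∀ x ∈ Icc a b, 0 < u x s) :
    ∀ x ∈ Ioo a b, ∀ t ∈ Icc s T, 0 < u x t := by
  set L := (12 + 2 * P * (b - a)) ^ 2 / (8 * (b - a) ^ 2) + Q
  have hweighted := pos_of_isSupersolutionAt_of_le (Q := Q + L)
    (u := fun x t => Real.exp (L * t) * u x t) (p := p) (q := fun x t => q x t + L)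
    (ContinuousOn.mul (by fun_prop) hcont)
    (fun x hx t ht => (hsuper x hx t ht).exp_mul L) hp
    (fun x hx t ht => by constructor <;> linarith [abs_le.1 (hq x hx t ht)])
    (fun z hz => mul_nonneg (Real.exp_pos _).le (hbdry z hz))
    (fun x hx => mul_pos (Real.exp_pos _) (hbot x hx))
  exact fun x hx t ht => pos_of_mul_pos_right (hweighted x hx t ht) (Real.exp_pos _).le

end MinimumPrinciple

section Zeros

variable {u p q : ℝ → ℝ → ℝ} {a b s T P Q x₀ t₀ : ℝ}

lemma forall_pos_or_forall_neg_of_isPreconnected {X : Type*} [TopologicalSpace X] {S : Set X}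
    {f : X → ℝ} (hS : IsPreconnected S) (hf : ContinuousOn f S) (hne : ∀ z ∈ S, f z ≠ 0) :
    (∀ z ∈ S, 0 < f z) ∨ ∀ z ∈ S, f z < 0 := by
  refine (hS.eq_or_eq_neg_of_sq_eq hf hf.abs (fun z _ => (sq_abs (f z)).symm)
    fun hz => abs_ne_zero.2 (hne _ hz)).imp (fun h z hz => ?_) fun h z hz => ?_
  · rw [h hz]
    exact abs_pos.2 (hne z hz)
  · rw [h hz]
    exact neg_neg_of_pos (abs_pos.2 (hne z hz))

lemma pos_of_isSolutionAt_of_pos_before (hsT : s < T)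
    (hcont : ContinuousOn (fun z : ℝ × ℝ => u z.1 z.2) (Icc a b ×ˢ Icc s T))
    (hsol : ∀ x ∈ Ioo a b, ∀ t ∈ Ioc s T, IsSolutionAt (p x t) (q x t) u x t)
    (hp : ∀ x ∈ Ioo a b, ∀ t ∈ Ioc s T, |p x t| ≤ P)
    (hq : ∀ x ∈ Ioo a b, ∀ t ∈ Ioc s T, |q x t| ≤ Q)
    (hpos : ∀ z ∈ Icc a b ×ˢ Ico s T, 0 < u z.1 z.2) :
    ∀ x ∈ Ioo a b, 0 < u x T := by
  have hclosure : closure (Icc a b ×ˢ Ico s T) = Icc a b ×ˢ Icc s T := by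
    rw [closure_prod_eq, closure_Icc, closure_Ico hsT.ne]
  have hnonneg : ∀ z ∈ Icc a b ×ˢ Icc s T, 0 ≤ u z.1 z.2 := fun z hz =>
    le_on_closure (fun z hz => (hpos z hz).le) continuousOn_const (hclosure ▸ hcont)
      (hclosure ▸ hz)
  exact fun x hx => pos_of_isSupersolutionAt hcont
    (fun x hx t ht => (hsol x hx t ht).isSupersolutionAt) hp hq (fun z hz => hnonneg z hz.1)
    (fun x hx => hpos (x, s) ⟨hx, le_rfl, hsT⟩) x hx T ⟨hsT.le, le_rfl⟩

theorem ne_zero_of_isSolutionAt_of_ne_zero_before (hsT : s < T)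
    (hcont : ContinuousOn (fun z : ℝ × ℝ => u z.1 z.2) (Icc a b ×ˢ Icc s T))
    (hsol : ∀ x ∈ Ioo a b, ∀ t ∈ Ioc s T, IsSolutionAt (p x t) (q x t) u x t)
    (hp : ∀ x ∈ Ioo a b, ∀ t ∈ Ioc s T, |p x t| ≤ P)
    (hq : ∀ x ∈ Ioo a b, ∀ t ∈ Ioc s T, |q x t| ≤ Q)
    (hne : ∀ z ∈ Icc a b ×ˢ Ico s T, u z.1 z.2 ≠ 0) :
    ∀ x ∈ Ioo a b, u x T ≠ 0 := by
  intro x hx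
  rcases forall_pos_or_forall_neg_of_isPreconnected (isPreconnected_Icc.prod isPreconnected_Ico)
    (hcont.mono (prod_mono_right Ico_subset_Icc_self)) hne with hpos | hneg
  · exact (pos_of_isSolutionAt_of_pos_before hsT hcont hsol hp hq hpos x hx).ne'
  · exact neg_ne_zero.1 (pos_of_isSolutionAt_of_pos_before hsT hcont.neg
      (fun x hx t ht => (hsol x hx t ht).neg) hp hq (fun z hz => neg_pos.2 (hneg z hz)) x hx).ne'

lemma exists_cylinder_of_eventually_nhds {r : ℝ × ℝ → Prop} (h : ∀ᶠ z in 𝓝 (x₀, t₀), r z) :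
    ∃ δ > 0, ∀ z ∈ Icc (x₀ - δ) (x₀ + δ) ×ˢ Icc (t₀ - δ) t₀, r z := by
  obtain ⟨δ, hδ, hball⟩ := Metric.nhds_basis_closedBall.eventually_iff.1 h
  rw [← closedBall_prod_same, Real.closedBall_eq_Icc, Real.closedBall_eq_Icc] at hball
  exact ⟨δ, hδ, fun z hz => hball ⟨hz.1, hz.2.1, hz.2.2.trans (le_add_of_nonneg_right hδ.le)⟩⟩

theorem frequently_exists_zero_of_isSolutionAt
    (hcont : ∀ᶠ z in 𝓝 (x₀, t₀), ContinuousAt (fun z : ℝ × ℝ => u z.1 z.2) z)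
    (hsol : ∀ᶠ z in 𝓝 (x₀, t₀), IsSolutionAt (p z.1 z.2) (q z.1 z.2) u z.1 z.2)
    (hp : IsBoundedUnder (· ≤ ·) (𝓝 (x₀, t₀)) fun z => |p z.1 z.2|)
    (hq : IsBoundedUnder (· ≤ ·) (𝓝 (x₀, t₀)) fun z => |q z.1 z.2|)
    (hzero : u x₀ t₀ = 0) {U : Set ℝ} (hU : U ∈ 𝓝 x₀) :
    ∃ᶠ t in 𝓝[<] t₀, ∃ x ∈ U, u x t = 0 := by
  by_contra hnone
  rw [not_frequently, eventually_nhdsWithin_iff] at hnone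
  obtain ⟨P, hP⟩ := hp.eventually_le
  obtain ⟨Q, hQ⟩ := hq.eventually_le
  have hgood := hcont.and <| hsol.and <| hP.and <| hQ.and <|
    (eventually_mem_set.2 hU).prod_nhds hnone
  obtain ⟨δ, hδ, hcyl⟩ := exists_cylinder_of_eventually_nhds hgood
  simp only [forall_and] at hcyl
  obtain ⟨hcont, hsol, hP, hQ, hU, hnone⟩ := hcyl
  have hint : Ioo (x₀ - δ) (x₀ + δ) ×ˢ Ioc (t₀ - δ) t₀ ⊆
      Icc (x₀ - δ) (x₀ + δ) ×ˢ Icc (t₀ - δ) t₀ :=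
    prod_mono Ioo_subset_Icc_self Ioc_subset_Icc_self
  exact ne_zero_of_isSolutionAt_of_ne_zero_before (sub_lt_self t₀ hδ)
    (fun z hz => (hcont z hz).continuousWithinAt)
    (fun x hx t ht => hsol (x, t) (hint ⟨hx, ht⟩)) (fun x hx t ht => hP (x, t) (hint ⟨hx, ht⟩))
    (fun x hx t ht => hQ (x, t) (hint ⟨hx, ht⟩))
    (fun z hz hz0 =>
      have hz' := prod_mono_right Ico_subset_Icc_self hz
      hnone z hz' hz.2.2 ⟨z.1, hU z hz', hz0⟩)
    x₀ ⟨sub_lt_self x₀ hδ, lt_add_of_pos_right x₀ hδ⟩ hzero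

lemma mem_range_of_frequently_mem {ι τ X : Type*} [Finite ι] [TopologicalSpace X] [T2Space X]
    {l : Filter τ} {ζ : ι → τ → X} {ζlim : ι → X} (hlim : ∀ i, Tendsto (ζ i) l (𝓝 (ζlim i)))
    {x : X} (hx : ∀ U ∈ 𝓝 x, ∃ᶠ t in l, ∃ i, ζ i t ∈ U) : x ∈ range ζlim := by
  by_contra hnot
  have hsep (i : ι) : ∃ U ∈ 𝓝 x, ∀ᶠ t in l, ζ i t ∉ U := by
    obtain ⟨V, hV, U, hU, hVU⟩ :=
      Filter.disjoint_iff.1 (disjoint_nhds_nhds.2 fun h => hnot ⟨i, h⟩)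
    exact ⟨U, hU, ((hlim i).eventually_mem hV).mono fun t ht => disjoint_left.1 hVU ht⟩
  choose U hU hζU using hsep
  refine hx (⋂ i, U i) (iInter_mem.2 hU) ?_
  filter_upwards [eventually_all.2 hζU] with t ht
  rintro ⟨i, hi⟩
  exact ht i (mem_iInter.1 hi i)

lemma limit_mem_zero_set {α β t₁ t₂ ζlim : ℝ} {ζ : ℝ → ℝ} (ht₀ : t₀ ∈ Ioo t₁ t₂)
    (hcont : ContinuousOn (fun z : ℝ × ℝ => u z.1 z.2) (Icc α β ×ˢ Ioo t₁ t₂))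
    (hζ : ∀ᶠ t in 𝓝[<] t₀, ζ t ∈ {x ∈ Icc α β | u x t = 0})
    (hlim : Tendsto ζ (𝓝[<] t₀) (𝓝 ζlim)) : ζlim ∈ {x ∈ Icc α β | u x t₀ = 0} := by
  have hmem : ζlim ∈ Icc α β := isClosed_Icc.mem_of_tendsto hlim (hζ.mono fun _ h => h.1)
  have htime : ∀ᶠ t in 𝓝[<] t₀, t ∈ Ioo t₁ t₂ := nhdsWithin_le_nhds (Ioo_mem_nhds ht₀.1 ht₀.2)
  have hgraph : Tendsto (fun t => (ζ t, t)) (𝓝[<] t₀) (𝓝[Icc α β ×ˢ Ioo t₁ t₂] (ζlim, t₀)) :=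
    tendsto_nhdsWithin_iff.2 ⟨hlim.prodMk_nhds nhdsWithin_le_nhds,
      (hζ.and htime).mono fun _ h => ⟨h.1.1, h.2⟩⟩
  have hvalue := (hcont (ζlim, t₀) ⟨hmem, ht₀⟩).tendsto.comp hgraph
  exact ⟨hmem, tendsto_nhds_unique hvalue
    (tendsto_const_nhds.congr' (hζ.mono fun _ h => h.2.symm))⟩

end Zeros

theorem zero_set_at_limit_time_general {ι : Type*} [Finite ι] {α β t₁ t₂ t₀ : ℝ}
    {v p q : ℝ → ℝ → ℝ} {ζ : ι → ℝ → ℝ} {ζlim : ι → ℝ} (ht₀ : t₀ ∈ Ioo t₁ t₂)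
    (hcont : ContinuousOn (fun z : ℝ × ℝ => v z.1 z.2) (Icc α β ×ˢ Ioo t₁ t₂))
    (hsol : ∀ x ∈ Ioo α β, ∀ t ∈ Ioo t₁ t₂, IsSolutionAt (p x t) (q x t) v x t)
    (hp : ∀ x ∈ Ioo α β, IsBoundedUnder (· ≤ ·) (𝓝 (x, t₀)) fun z => |p z.1 z.2|)
    (hq : ∀ x ∈ Ioo α β, IsBoundedUnder (· ≤ ·) (𝓝 (x, t₀)) fun z => |q z.1 z.2|)
    (hα : v α t₀ = 0 → ∃ᶠ t in 𝓝[<] t₀, v α t = 0)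
    (hβ : v β t₀ = 0 → ∃ᶠ t in 𝓝[<] t₀, v β t = 0)
    (hζ : ∀ᶠ t in 𝓝[<] t₀, {x ∈ Icc α β | v x t = 0} = range fun i => ζ i t)
    (hlim : ∀ i, Tendsto (ζ i) (𝓝[<] t₀) (𝓝 (ζlim i))) :
    {x ∈ Icc α β | v x t₀ = 0} = range ζlim := by
  refine Subset.antisymm (fun x hx => mem_range_of_frequently_mem hlim fun U hU => ?_) ?_
  · suffices hfreq : ∃ᶠ t in 𝓝[<] t₀, ∃ y ∈ U ∩ Icc α β, v y t = 0 by
      refine (hfreq.and_eventually hζ).mono ?_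
      rintro t ⟨⟨y, hy, hy0⟩, hζt⟩
      obtain ⟨i, rfl⟩ := hζt.subset ⟨hy.2, hy0⟩
      exact ⟨i, hy.1⟩
    have hself (h : ∃ᶠ t in 𝓝[<] t₀, v x t = 0) :
        ∃ᶠ t in 𝓝[<] t₀, ∃ y ∈ U ∩ Icc α β, v y t = 0 :=
      h.mono fun t ht => ⟨x, ⟨mem_of_mem_nhds hU, hx.1⟩, ht⟩
    rcases eq_endpoints_or_mem_Ioo_of_mem_Icc hx.1 with rfl | rfl | hxint
    · exact hself (hα hx.2)
    · exact hself (hβ hx.2)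
    · have hdomain : ∀ᶠ z in 𝓝 (x, t₀), z ∈ Ioo α β ×ˢ Ioo t₁ t₂ :=
        (isOpen_Ioo.prod isOpen_Ioo).mem_nhds ⟨hxint, ht₀⟩
      exact frequently_exists_zero_of_isSolutionAt
        (hdomain.mono fun z hz => hcont.continuousAt
          (prod_mem_nhds (Icc_mem_nhds hz.1.1 hz.1.2) (Ioo_mem_nhds hz.2.1 hz.2.2)))
        (hdomain.mono fun z hz => hsol z.1 hz.1 z.2 hz.2) (hp x hxint) (hq x hxint) hx.2
        (inter_mem hU (Icc_mem_nhds hxint.1 hxint.2))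
  · rintro _ ⟨i, rfl⟩
    exact limit_mem_zero_set ht₀ hcont (hζ.mono fun t ht => ht.superset ⟨i, rfl⟩) (hlim i)

theorem zero_set_at_limit_time
    (m : ℕ) (hm : 2 ≤ m) (R t1 t2 : ℝ) (hR : 0 < R) (ht12 : t1 < t2)
    (b v : ℝ → ℝ → ℝ)
    (hb_smooth : ContDiffOn ℝ (⊤ : ℕ∞) (fun p : ℝ × ℝ => b p.1 p.2) (Icc 0 R ×ˢ Ioo t1 t2))
    (hb_bdd : ∃ C : ℝ, ∀ r ∈ Icc (0:ℝ) R, ∀ t ∈ Ioo t1 t2, |b r t| ≤ C)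
    (hb_deriv_bdd : ∃ C : ℝ, ∀ r ∈ Icc (0:ℝ) R, ∀ t ∈ Ioo t1 t2,
      |deriv (fun x => b x t) r| ≤ C ∧ |deriv (fun s => b r s) t| ≤ C)
    (hb0 : ∀ t ∈ Ioo t1 t2, b 0 t = (m : ℝ) - 1)
    (hbr0 : ∀ t ∈ Ioo t1 t2, deriv (fun x => b x t) 0 = 0)
    (hv_smooth : ContDiffOn ℝ (⊤ : ℕ∞) (fun p : ℝ × ℝ => v p.1 p.2) (Icc 0 R ×ˢ Ioo t1 t2))
    (hpde : ∀ r ∈ Ioo (0:ℝ) R, ∀ t ∈ Ioo t1 t2,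
      deriv (fun s => v r s) t =
        deriv (deriv (fun x => v x t)) r + (((m : ℝ) - 1) / r) * deriv (fun x => v x t) r
          - (b r t / r ^ 2) * v r t)
    (hbcR : (∀ t ∈ Ioo t1 t2, v R t = 0) ∨ (∀ t ∈ Ioo t1 t2, v R t ≠ 0))
    (hv0 : ∀ t ∈ Ioo t1 t2, v 0 t = 0)
    (hnz : ¬ ∀ r ∈ Icc (0:ℝ) R, ∀ t ∈ Ioo t1 t2, v r t = 0)
    (t0 : ℝ) (ht0 : t0 ∈ Ioo t1 t2) (n : ℕ) (ε0 : ℝ) (hε0 : 0 < ε0) (hε0' : t1 < t0 - ε0)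
    (hsimple : ∀ t ∈ Ioo (t0 - ε0) t0, ∀ r ∈ Icc (0:ℝ) R,
      v r t = 0 → deriv (fun x => v x t) r ≠ 0)
    (hcard : ∀ t ∈ Ioo (t0 - ε0) t0, {r ∈ Icc (0:ℝ) R | v r t = 0}.ncard = n + 1)
    (ζ : Fin (n + 1) → ℝ → ℝ) (ζlim : Fin (n + 1) → ℝ)
    (hζ_cont : ∀ i, ContinuousOn (ζ i) (Ioo (t0 - ε0) t0))
    (hζ_mem : ∀ i, ∀ t ∈ Ioo (t0 - ε0) t0, ζ i t ∈ Icc (0:ℝ) R)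
    (hζ_zero : ∀ t ∈ Ioo (t0 - ε0) t0, ζ 0 t = 0)
    (hζ_mono : ∀ t ∈ Ioo (t0 - ε0) t0, ∀ i j : Fin (n + 1), i < j → ζ i t < ζ j t)
    (hζ_range : ∀ t ∈ Ioo (t0 - ε0) t0, {r ∈ Icc (0:ℝ) R | v r t = 0} = Set.range fun i => ζ i t)
    (hζ_lim : ∀ i, Tendsto (ζ i) (nhdsWithin t0 (Iio t0)) (nhds (ζlim i)))
    :
    {r ∈ Icc (0:ℝ) R | v r t0 = 0}.Finite ∧
    {r ∈ Icc (0:ℝ) R | v r t0 = 0} = Set.range ζlim := by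
  have hvint : ∀ r ∈ Ioo 0 R, ∀ t ∈ Ioo t1 t2,
      ContDiffAt ℝ 2 (fun z : ℝ × ℝ => v z.1 z.2) (r, t) := fun r hr t ht =>
    (hv_smooth.contDiffAt (prod_mem_nhds (Icc_mem_nhds hr.1 hr.2)
      (Ioo_mem_nhds ht.1 ht.2))).of_le (by norm_cast)
  have hbint : ∀ r ∈ Ioo 0 R, ContinuousAt (fun z : ℝ × ℝ => b z.1 z.2) (r, t0) := fun r hr =>
    hb_smooth.continuousOn.continuousAt (prod_mem_nhds (Icc_mem_nhds hr.1 hr.2)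
      (Ioo_mem_nhds ht0.1 ht0.2))
  have htime : ∀ᶠ t in 𝓝[<] t0, t ∈ Ioo t1 t2 := nhdsWithin_le_nhds (Ioo_mem_nhds ht0.1 ht0.2)
  have hpast : ∀ᶠ t in 𝓝[<] t0, t ∈ Ioo (t0 - ε0) t0 := Ioo_mem_nhdsLT (sub_lt_self t0 hε0)
  have hzeros := zero_set_at_limit_time_general (p := fun r _ => ((m : ℝ) - 1) / r)
    (q := fun r t => -(b r t / r ^ 2)) ht0 hv_smooth.continuousOn
    (fun r hr t ht => isSolutionAt_of_contDiffAt (hvint r hr t ht) (by rw [hpde r hr t ht]; ring))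
    (fun r hr => (continuousAt_const.div continuousAt_fst hr.1.ne').abs.isBoundedUnder_le)
    (fun r hr => ((hbint r hr).div (continuousAt_fst.pow 2)
      (pow_ne_zero 2 hr.1.ne')).neg.abs.isBoundedUnder_le)
    (fun _ => (htime.mono hv0).frequently)
    (fun hR0 => (htime.mono (hbcR.resolve_right fun h => h t0 ht0 hR0)).frequently)
    (hpast.mono hζ_range) hζ_lim
  exact ⟨hzeros ▸ finite_range ζlim, hzeros⟩
end

section
/- Lemma 2.6(i): Let v be a classical solution of v_t = v_rr + ((m−1)/r) v_r − (b(r,t)/r²) v on [0,R] × (t1,t2), not identically zero, satisfying the boundary condition (1.5) and v(0,t) = 0 for all t ∈ (t1,t2), and let t1 < T1 < T2 < t2. If there exist n points 0 < r_1 < r_2 < ... < r_n ≤ R such that v(r_i,T2) · v(r_{i+1},T2) < 0 for all 1 ≤ i ≤ n−1, then there also exist n points 0 < r'_1 < r'_2 < ... < r'_n ≤ R such that v(r'_i,T1) · v(r'_{i+1},T1) < 0 for all 1 ≤ i ≤ n−1. -/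
open Set Filter

/-! Multiplying a subsolution of `u_t = u_xx + a u_x + c u`, with `c` bounded above by `C`, by
`exp (-(C + 1) t)` makes positive local maxima impossible in the interior and at the final time.
So the component of `{u > 0}` in a space-time rectangle containing a given point attains the maximum
of the weighted function at the initial time or on a lateral side. A lateral side on which `u` is
positive somewhere is one on which `u` is positive throughout, and it can be followed down to the
initial time. Applied to `v` and `-v`, this gives paths from the points of alternating sign at the
final time to the initial time, along each of which `v` keeps its sign.

Two consecutive paths `γ`, `δ` are disjoint, since `v` has opposite signs on them, so they cannot
exchange their order: otherwise `γ s - δ t ≠ 0` would have a continuous logarithm on the square of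
parameters `(s, t)`. On the boundary of the square this difference points into the closed upper
half-plane along one arc from `(1, 1)` to `(0, 0)` and into the closed lower half-plane along the
other, so the imaginary part of the logarithm would change by `π` along the first and by `-π` along
the second.

The potential `-b / r ^ 2` is bounded above because `b` is positive near `r = 0`. -/

open scoped Topology

section Winding

variable {X : Type*} [TopologicalSpace X]

lemma mem_Icc_zero_pi_of_sin_nonneg {S : Set X} {φ : X → ℝ} {x y : X} (hS : IsPreconnected S)
    (hφ : ContinuousOn φ S) (hsin : ∀ z ∈ S, 0 ≤ Real.sin (φ z)) (hx : x ∈ S) (hy : y ∈ S)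
    (hφx : φ x ∈ Icc 0 Real.pi) : φ y ∈ Icc 0 Real.pi := by
  have hpi := Real.pi_pos
  have not_hit : ∀ c, Real.sin c < 0 → c ∉ φ '' S := by
    rintro _ hc ⟨z, hz, rfl⟩
    exact (hsin z hz).not_gt hc
  constructor
  · by_contra! hlt
    refine not_hit (max (φ y) (-(Real.pi / 2))) ?_ (hS.intermediate_value hy hx hφ
      ⟨le_max_left _ _, max_le (by linarith [hφx.1]) (by linarith [hφx.1])⟩)
    exact Real.sin_neg_of_neg_of_neg_pi_lt (max_lt hlt (by linarith))
      (lt_max_of_lt_right (by linarith))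
  · by_contra! hlt
    refine not_hit (min (φ y) (3 * Real.pi / 2)) ?_ (hS.intermediate_value hx hy hφ
      ⟨le_min (by linarith [hφx.2]) (by linarith [hφx.2]), min_le_left _ _⟩)
    have hgt : Real.pi < min (φ y) (3 * Real.pi / 2) := lt_min hlt (by linarith)
    have hle : min (φ y) (3 * Real.pi / 2) ≤ 3 * Real.pi / 2 := min_le_right _ _
    have := Real.sin_pos_of_pos_of_lt_pi (sub_pos.2 hgt) (by linarith)
    rwa [Real.sin_sub_pi, neg_pos] at this

lemma exists_eq_zero_of_im_nonneg_of_im_nonpos [SimplyConnectedSpace X]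
    [LocallyPathConnectedSpace X] (F : C(X, ℂ)) {S₁ S₂ : Set X} {x y : X}
    (hS₁ : IsPreconnected S₁) (hS₂ : IsPreconnected S₂) (hx₁ : x ∈ S₁) (hy₁ : y ∈ S₁)
    (hx₂ : x ∈ S₂) (hy₂ : y ∈ S₂) (hF₁ : ∀ z ∈ S₁, 0 ≤ (F z).im) (hF₂ : ∀ z ∈ S₂, (F z).im ≤ 0)
    (hx : 0 < (F x).re) (hy : (F y).re < 0) : ∃ z, F z = 0 := by
  by_contra! hF
  obtain ⟨G, ⟨hGx, hG⟩, -⟩ := Complex.isCoveringMapOn_exp.existsUnique_continuousMap_lifts F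
    (Complex.exp_log (hF x)) hF
  have exp_G : ∀ z, Complex.exp (G z) = F z := congrFun hG
  have im_eq : ∀ z, Real.exp (G z).re * Real.sin (G z).im = (F z).im := fun z => by
    rw [← Complex.exp_im, exp_G]
  have im_Gx : (G x).im = 0 := by
    rw [hGx, Complex.log_im]
    exact Complex.arg_eq_zero_iff.2 ⟨hx.le, (hF₂ x hx₂).antisymm (hF₁ x hx₁)⟩
  have h₁ : (G y).im ∈ Icc 0 Real.pi :=
    mem_Icc_zero_pi_of_sin_nonneg (φ := fun z => (G z).im) hS₁ (by fun_prop)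
      (fun z hz => nonneg_of_mul_nonneg_right ((hF₁ z hz).trans_eq (im_eq z).symm)
        (Real.exp_pos _)) hx₁ hy₁ (by simp [im_Gx, Real.pi_pos.le])
  have h₂ : -(G y).im ∈ Icc 0 Real.pi :=
    mem_Icc_zero_pi_of_sin_nonneg (φ := fun z => -(G z).im) hS₂ (by fun_prop)
      (fun z hz => by
        rw [Real.sin_neg, neg_nonneg]
        exact nonpos_of_mul_nonpos_right ((im_eq z).trans_le (hF₂ z hz)) (Real.exp_pos _))
      hx₂ hy₂ (by simp [im_Gx, Real.pi_pos.le])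
  have im_Gy : (G y).im = 0 := le_antisymm (neg_nonneg.1 h₂.1) h₁.1
  have re_eq : Real.exp (G y).re * Real.cos (G y).im = (F y).re := by
    rw [← Complex.exp_re, exp_G]
  rw [im_Gy, Real.cos_zero, mul_one] at re_eq
  exact (re_eq ▸ Real.exp_pos _).not_gt hy

lemma lt_of_joinedIn_of_disjoint {A B : Set (ℝ × ℝ)} {T₁ T₂ x y x' y' : ℝ}
    (hA : A ⊆ univ ×ˢ Icc T₁ T₂) (hB : B ⊆ univ ×ˢ Icc T₁ T₂) (hAB : Disjoint A B)
    (hx : JoinedIn A (x, T₂) (x', T₁)) (hy : JoinedIn B (y, T₂) (y', T₁)) (hxy : x < y) :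
    x' < y' := by
  by_contra! hle
  have hlt : y' < x' := hle.lt_of_ne fun h =>
    hAB.ne_of_mem hx.target_mem hy.target_mem (by rw [h])
  obtain ⟨γ, hγ⟩ := hx
  obtain ⟨δ, hδ⟩ := hy
  have γ_mem : ∀ s, γ.extend s ∈ A := fun s => hγ _
  have δ_mem : ∀ t, δ.extend t ∈ B := fun t => hδ _
  let F : C(ℝ × ℝ, ℂ) :=
    ⟨fun p => Complex.equivRealProdCLM.symm (γ.extend p.1 - δ.extend p.2), by fun_prop⟩
  have re_F : ∀ s t, (F (s, t)).re = (γ.extend s).1 - (δ.extend t).1 := fun _ _ => by simp [F]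
  have im_F : ∀ s t, (F (s, t)).im = (γ.extend s).2 - (δ.extend t).2 := fun _ _ => by simp [F]
  have preconnected_cross : ∀ a b : ℝ,
      IsPreconnected (({a} : Set ℝ) ×ˢ (univ : Set ℝ) ∪ (univ : Set ℝ) ×ˢ {b}) := fun a b =>
    IsPreconnected.union (a, b) (by simp) (by simp) (isPreconnected_singleton.prod
      isPreconnected_univ) (isPreconnected_univ.prod isPreconnected_singleton)
  -- `γ` is not below `δ` when `γ` is at its top or `δ` at its bottom, and not above `δ` when `γ` is
  -- at its bottom or `δ` at its top.
  obtain ⟨⟨s, t⟩, hst⟩ := exists_eq_zero_of_im_nonneg_of_im_nonpos F (x := (1, 1)) (y := (0, 0))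
    (preconnected_cross 0 1) (preconnected_cross 1 0) (by simp) (by simp) (by simp) (by simp)
    (by
      rintro ⟨s, t⟩ (⟨rfl, -⟩ | ⟨-, rfl⟩)
      · simpa [im_F] using (hB (δ_mem t)).2.2
      · simpa [im_F] using (hA (γ_mem s)).2.1)
    (by
      rintro ⟨s, t⟩ (⟨rfl, -⟩ | ⟨-, rfl⟩)
      · simpa [im_F] using (hB (δ_mem t)).2.1
      · simpa [im_F] using (hA (γ_mem s)).2.2)
    (by simpa [re_F] using hlt) (by simpa [re_F] using hxy)
  refine hAB.ne_of_mem (γ_mem s) (δ_mem t) (sub_eq_zero.1 ?_)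
  exact Complex.equivRealProdCLM.symm.map_eq_zero_iff.1 hst

end Winding

section PositivityComponent

variable {X : Type*} [TopologicalSpace X] {K : Set X}

lemma eventually_joinedIn_inter [LocallyPathConnectedSpace K] {V : Set X} {q : X} (hq : q ∈ K)
    (hV : V ∈ 𝓝[K] q) : ∀ᶠ z in 𝓝[K] q, JoinedIn (K ∩ V) q z := by
  rw [nhdsWithin_eq_map_subtype_coe hq] at hV ⊢
  rw [eventually_map]
  filter_upwards [pathComponentIn_mem_nhds hV] with z hz
  refine (hz.map_continuousOn continuous_subtype_val.continuousOn).mono ?_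
  rintro _ ⟨w, hw, rfl⟩
  exact ⟨w.2, hw⟩

lemma exists_joinedIn_isLocalMaxOn [T2Space X] [LocallyPathConnectedSpace K] {g : X → ℝ} {p : X}
    (hK : IsCompact K) (hg : ContinuousOn g K) (hpK : p ∈ K) (hp : 0 < g p) :
    ∃ q, JoinedIn {z ∈ K | 0 < g z} p q ∧ IsLocalMaxOn g K q := by
  set U := {z ∈ K | 0 < g z}
  have hpU : p ∈ U := ⟨hpK, hp⟩
  have hcl : closure (pathComponentIn U p) ⊆ K :=
    closure_minimal (pathComponentIn_subset.trans (sep_subset _ _)) hK.isClosed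
  obtain ⟨q, hq, hmax⟩ := (hK.of_isClosed_subset isClosed_closure hcl).exists_isMaxOn
    ⟨p, subset_closure (mem_pathComponentIn_self hpU)⟩ (hg.mono hcl)
  have hqpos : 0 < g q := hp.trans_le (hmax (subset_closure (mem_pathComponentIn_self hpU)))
  have joined_near : ∀ᶠ z in 𝓝[K] q, JoinedIn U q z :=
    eventually_joinedIn_inter (hcl hq) ((hg q (hcl hq)).eventually (lt_mem_nhds hqpos))
  obtain ⟨z, hqz, hpz⟩ : ∃ z, JoinedIn U q z ∧ JoinedIn U p z := by
    have := mem_closure_iff_nhdsWithin_neBot.1 hq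
    exact ((joined_near.filter_mono (nhdsWithin_mono q
      (pathComponentIn_subset.trans (sep_subset _ _)))).and self_mem_nhdsWithin).exists
  have hpq : JoinedIn U p q := hpz.trans hqz.symm
  exact ⟨q, hpq, joined_near.mono fun z hz => hmax (subset_closure (hpq.trans hz))⟩

end PositivityComponent

section MaximumPrinciple

lemma deriv_deriv_nonpos_of_isLocalMax {f : ℝ → ℝ} {x : ℝ} (hmax : IsLocalMax f x)
    (hf : ContinuousAt f x) : deriv (deriv f) x ≤ 0 := by
  by_contra! hlt
  have hmin : IsLocalMin f x := isLocalMin_of_deriv_deriv_pos hlt hmax.deriv_eq_zero hf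
  have hconst : f =ᶠ[𝓝 x] fun _ => f x := by
    filter_upwards [hmax, hmin] with y h₁ h₂ using le_antisymm h₁ h₂
  simp [hconst.deriv.deriv_eq] at hlt

lemma nonneg_of_isLocalMaxOn_Iic {f : ℝ → ℝ} {D t : ℝ} (hmax : IsLocalMaxOn f (Iic t) t)
    (hf : HasDerivWithinAt f D (Iic t) t) : 0 ≤ D := by
  have hcone : (-1 : ℝ) ∈ posTangentConeAt (Iic t) t := by
    refine mem_posTangentConeAt_of_segment_subset ?_
    rw [segment_symm, segment_eq_Icc (by linarith)]
    exact Icc_subset_Iic_self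
  simpa using hmax.hasFDerivWithinAt_nonpos hf.hasFDerivWithinAt hcone

/-- The function `u x t` is a subsolution of the parabolic equation `u_t = u_xx + a u_x + c u` at
the point `(x, t)`, where `a` and `c` are the values of the coefficients at that point. -/
structure IsParabolicSubsolutionAt (a c : ℝ) (u : ℝ → ℝ → ℝ) (x t : ℝ) : Prop where
  contDiffAt_space : ContDiffAt ℝ 2 (fun y => u y t) x
  differentiableAt_time : DifferentiableAt ℝ (u x) t
  deriv_le : deriv (u x) t ≤
    deriv (deriv fun y => u y t) x + a * deriv (fun y => u y t) x + c * u x t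

/-- The function `u x t` solves the parabolic equation `u_t = u_xx + a u_x + c u` at the point
`(x, t)`, where `a` and `c` are the values of the coefficients at that point. -/
structure IsParabolicSolutionAt (a c : ℝ) (u : ℝ → ℝ → ℝ) (x t : ℝ) : Prop where
  contDiffAt_space : ContDiffAt ℝ 2 (fun y => u y t) x
  differentiableAt_time : DifferentiableAt ℝ (u x) t
  deriv_eq : deriv (u x) t =
    deriv (deriv fun y => u y t) x + a * deriv (fun y => u y t) x + c * u x t

variable {a c x t : ℝ} {u : ℝ → ℝ → ℝ}

lemma isParabolicSolutionAt_of_contDiffAt (hu : ContDiffAt ℝ 2 (Function.uncurry u) (x, t))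
    (heq : deriv (u x) t =
      deriv (deriv fun y => u y t) x + a * deriv (fun y => u y t) x + c * u x t) :
    IsParabolicSolutionAt a c u x t where
  contDiffAt_space := hu.comp (f := fun y => (y, t)) x (by fun_prop)
  differentiableAt_time :=
    (hu.differentiableAt two_ne_zero).comp (f := fun s => (x, s)) t (by fun_prop)
  deriv_eq := heq

namespace IsParabolicSolutionAt

lemma isParabolicSubsolutionAt (h : IsParabolicSolutionAt a c u x t) :
    IsParabolicSubsolutionAt a c u x t :=
  ⟨h.contDiffAt_space, h.differentiableAt_time, h.deriv_eq.le⟩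

lemma const_mul (h : IsParabolicSolutionAt a c u x t) (κ : ℝ) :
    IsParabolicSolutionAt a c (fun y s => κ * u y s) x t where
  contDiffAt_space := contDiffAt_const.mul h.contDiffAt_space
  differentiableAt_time := h.differentiableAt_time.const_mul κ
  deriv_eq := by
    have deriv_space : (deriv fun y => κ * u y t) = fun y => κ * deriv (fun y => u y t) y :=
      funext fun y => deriv_const_mul_field κ
    rw [deriv_space, deriv_const_mul_field, deriv_const_mul_field, h.deriv_eq]
    ring

end IsParabolicSolutionAt

lemma IsParabolicSubsolutionAt.nonpos_of_isLocalMax {l : ℝ} (h : IsParabolicSubsolutionAt a c u x t)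
    (hl : c < l) (hspace : IsLocalMax (fun y => u y t) x)
    (htime : IsLocalMaxOn (fun s => Real.exp (-(l * s)) * u x s) (Iic t) t) : u x t ≤ 0 := by
  have deriv_weighted : HasDerivAt (fun s => Real.exp (-(l * s)) * u x s)
      (Real.exp (-(l * t)) * (deriv (u x) t - l * u x t)) t := by
    have := ((hasDerivAt_id t).const_mul l).neg.exp.mul h.differentiableAt_time.hasDerivAt
    exact this.congr_deriv (by simp only [Pi.neg_apply, id_eq]; ring)
  have hfirst : 0 ≤ deriv (u x) t - l * u x t :=
    nonneg_of_mul_nonneg_right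
      (nonneg_of_isLocalMaxOn_Iic htime deriv_weighted.hasDerivWithinAt) (Real.exp_pos _)
  have hsecond := deriv_deriv_nonpos_of_isLocalMax hspace h.contDiffAt_space.continuousAt
  have hle := h.deriv_le
  rw [hspace.deriv_eq_zero] at hle
  by_contra! hpos
  nlinarith [mul_pos (sub_pos.2 hl) hpos]

end MaximumPrinciple

section PositivePaths

/-- The dichotomy imposed at each endpoint by the boundary condition (1.5): the boundary values
`f` either vanish identically on `s` or vanish nowhere on `s`. -/
def IsZeroOrNonvanishingOn {X : Type*} (f : X → ℝ) (s : Set X) : Prop :=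
  (∀ x ∈ s, f x = 0) ∨ ∀ x ∈ s, f x ≠ 0

namespace IsZeroOrNonvanishingOn

variable {X : Type*} {f : X → ℝ} {s t : Set X}

lemma mono (h : IsZeroOrNonvanishingOn f t) (hst : s ⊆ t) : IsZeroOrNonvanishingOn f s :=
  h.imp (fun h x hx => h x (hst hx)) fun h x hx => h x (hst hx)

lemma const_mul (h : IsZeroOrNonvanishingOn f s) {κ : ℝ} (hκ : κ ≠ 0) :
    IsZeroOrNonvanishingOn (fun x => κ * f x) s :=
  h.imp (fun h x hx => by simp [h x hx]) fun h x hx => mul_ne_zero hκ (h x hx)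

lemma pos_of_pos [TopologicalSpace X] (h : IsZeroOrNonvanishingOn f s) (hs : IsPreconnected s)
    (hf : ContinuousOn f s) {x y : X} (hx : x ∈ s) (hy : y ∈ s) (hpos : 0 < f x) : 0 < f y := by
  obtain h | h := h
  · exact absurd (h x hx) hpos.ne'
  · by_contra! hle
    obtain ⟨z, hz, hz0⟩ := hs.intermediate_value hy hx hf ⟨hle, hpos.le⟩
    exact h z hz hz0

end IsZeroOrNonvanishingOn

variable {α β T₁ T₂ C : ℝ} {a c u : ℝ → ℝ → ℝ} {p : ℝ × ℝ}

lemma exists_joinedIn_parabolicBoundary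
    (hu : ContinuousOn (Function.uncurry u) (Icc α β ×ˢ Icc T₁ T₂))
    (hsub : ∀ x ∈ Ioo α β, ∀ t ∈ Ioc T₁ T₂, IsParabolicSubsolutionAt (a x t) (c x t) u x t)
    (hc : ∀ x ∈ Ioo α β, ∀ t ∈ Ioc T₁ T₂, c x t ≤ C)
    (hpK : p ∈ Icc α β ×ˢ Icc T₁ T₂) (hp : 0 < Function.uncurry u p) :
    ∃ x t, (x = α ∨ x = β ∨ t = T₁) ∧
      JoinedIn {z ∈ Icc α β ×ˢ Icc T₁ T₂ | 0 < Function.uncurry u z} p (x, t) := by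
  set K := Icc α β ×ˢ Icc T₁ T₂
  let g : ℝ × ℝ → ℝ := fun z => Real.exp (-((C + 1) * z.2)) * Function.uncurry u z
  have g_pos : ∀ z, 0 < g z ↔ 0 < Function.uncurry u z := fun z =>
    mul_pos_iff_of_pos_left (Real.exp_pos _)
  have : LocallyPathConnectedSpace K :=
    ((convex_Icc α β).prod (convex_Icc T₁ T₂)).locallyPathConnectedSpace
  obtain ⟨⟨x, t⟩, hpq, hmax⟩ := exists_joinedIn_isLocalMaxOn (g := g)
    (isCompact_Icc.prod isCompact_Icc) (by fun_prop) hpK ((g_pos p).2 hp)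
  simp only [g_pos] at hpq
  refine ⟨x, t, ?_, hpq⟩
  obtain ⟨⟨hx, ht⟩, hpos⟩ := hpq.target_mem
  by_contra! hinterior
  have hx' : x ∈ Ioo α β := ⟨hx.1.lt_of_ne' hinterior.1, hx.2.lt_of_ne hinterior.2.1⟩
  have ht' : t ∈ Ioc T₁ T₂ := ⟨ht.1.lt_of_ne' hinterior.2.2, ht.2⟩
  have hspace : IsLocalMax (fun y => u y t) x := by
    have : IsLocalMax (g ∘ fun y => (y, t)) x :=
      (hmax.comp_continuousOn (s := Icc α β) (g := fun y => (y, t)) (fun y hy => ⟨hy, ht⟩)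
        (by fun_prop) hx).isLocalMax (Icc_mem_nhds hx'.1 hx'.2)
    exact this.mono fun y hy => le_of_mul_le_mul_left hy (Real.exp_pos _)
  have htime : IsLocalMaxOn (g ∘ fun s => (x, s)) (Iic t) t := by
    have : IsLocalMaxOn (g ∘ fun s => (x, s)) (Icc T₁ t) t :=
      hmax.comp_continuousOn (g := fun s => (x, s)) (fun s hs => ⟨hx, hs.1, hs.2.trans ht.2⟩)
        (by fun_prop) ⟨ht.1, le_rfl⟩
    rwa [IsLocalMaxOn, nhdsWithin_Icc_eq_nhdsLE ht'.1] at this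
  exact ((hsub x hx' t ht').nonpos_of_isLocalMax
    ((hc x hx' t ht').trans_lt (lt_add_one C)) hspace htime).not_gt hpos

lemma joinedIn_vertical {K : Set (ℝ × ℝ)} {x t : ℝ}
    (hu : ContinuousOn (Function.uncurry u) K) (hK : {x} ×ˢ Icc T₁ t ⊆ K) (ht : T₁ ≤ t)
    (hbd : IsZeroOrNonvanishingOn (u x) (Icc T₁ t)) (hpos : 0 < u x t) :
    JoinedIn {z ∈ K | 0 < Function.uncurry u z} (x, t) (x, T₁) := by
  have hux : ContinuousOn (u x) (Icc T₁ t) :=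
    hu.comp (f := fun s => (x, s)) (by fun_prop) fun s hs => hK ⟨rfl, hs⟩
  have hconv : Convex ℝ ({x} ×ˢ Icc T₁ t) := (convex_singleton x).prod (convex_Icc T₁ t)
  have hsegment : segment ℝ (x, t) (x, T₁) ⊆ {x} ×ˢ Icc T₁ t :=
    hconv.segment_subset ⟨rfl, ht, le_rfl⟩ ⟨rfl, le_rfl, ht⟩
  refine JoinedIn.of_segment_subset (hsegment.trans ?_)
  rintro ⟨_, s⟩ ⟨rfl, hs⟩
  exact ⟨hK ⟨rfl, hs⟩, hbd.pos_of_pos isPreconnected_Icc hux ⟨ht, le_rfl⟩ hs hpos⟩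

lemma exists_joinedIn_bottom (hαβ : α < β)
    (hu : ContinuousOn (Function.uncurry u) (Icc α β ×ˢ Icc T₁ T₂))
    (hsub : ∀ x ∈ Ioo α β, ∀ t ∈ Ioc T₁ T₂, IsParabolicSubsolutionAt (a x t) (c x t) u x t)
    (hc : ∀ x ∈ Ioo α β, ∀ t ∈ Ioc T₁ T₂, c x t ≤ C)
    (hα : IsZeroOrNonvanishingOn (u α) (Icc T₁ T₂))
    (hβ : IsZeroOrNonvanishingOn (u β) (Icc T₁ T₂))
    (hpK : p ∈ Icc α β ×ˢ Icc T₁ T₂) (hp : 0 < Function.uncurry u p) :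
    ∃ x ∈ Ioo α β, JoinedIn {z ∈ Icc α β ×ˢ Icc T₁ T₂ | 0 < Function.uncurry u z} p (x, T₁) := by
  set K := Icc α β ×ˢ Icc T₁ T₂
  obtain ⟨x, t, hbdry, hpq⟩ := exists_joinedIn_parabolicBoundary hu hsub hc hpK hp
  obtain ⟨⟨hx, ht⟩, hpos⟩ := hpq.target_mem
  have descend (hbd : IsZeroOrNonvanishingOn (u x) (Icc T₁ T₂)) :
      JoinedIn {z ∈ K | 0 < Function.uncurry u z} (x, t) (x, T₁) :=
    joinedIn_vertical hu (prod_mono (singleton_subset_iff.2 hx) (Icc_subset_Icc_right ht.2))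
      ht.1 (hbd.mono (Icc_subset_Icc_right ht.2)) hpos
  have hbottom : JoinedIn {z ∈ K | 0 < Function.uncurry u z} p (x, T₁) := by
    obtain rfl | rfl | rfl := hbdry
    · exact hpq.trans (descend hα)
    · exact hpq.trans (descend hβ)
    · exact hpq
  obtain ⟨hbK, hbpos⟩ := hbottom.target_mem
  have : LocallyPathConnectedSpace K :=
    ((convex_Icc α β).prod (convex_Icc T₁ T₂)).locallyPathConnectedSpace
  have joined_near : ∀ᶠ z in 𝓝[K] (x, T₁), JoinedIn {z ∈ K | 0 < Function.uncurry u z} (x, T₁) z :=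
    eventually_joinedIn_inter hbK ((hu _ hbK).eventually (lt_mem_nhds hbpos))
  have horizontal : Tendsto (fun y => (y, T₁)) (𝓝[Ioo α β] x) (𝓝[K] (x, T₁)) :=
    (Continuous.prodMk_left T₁).continuousWithinAt.tendsto_nhdsWithin
      fun y hy => ⟨Ioo_subset_Icc_self hy, hbK.2⟩
  have : (𝓝[Ioo α β] x).NeBot := by
    rwa [← mem_closure_iff_nhdsWithin_neBot, closure_Ioo hαβ.ne]
  obtain ⟨y, hjoined, hy⟩ := ((horizontal.eventually joined_near).and self_mem_nhdsWithin).exists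
  exact ⟨y, hy, hbottom.trans hjoined⟩

lemma exists_joinedIn_bottom_of_ne_zero {v : ℝ → ℝ → ℝ} (hαβ : α < β)
    (hv : ContinuousOn (Function.uncurry v) (Icc α β ×ˢ Icc T₁ T₂))
    (hsol : ∀ x ∈ Ioo α β, ∀ t ∈ Ioc T₁ T₂, IsParabolicSolutionAt (a x t) (c x t) v x t)
    (hc : ∀ x ∈ Ioo α β, ∀ t ∈ Ioc T₁ T₂, c x t ≤ C)
    (hα : IsZeroOrNonvanishingOn (v α) (Icc T₁ T₂))
    (hβ : IsZeroOrNonvanishingOn (v β) (Icc T₁ T₂))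
    (hpK : p ∈ Icc α β ×ˢ Icc T₁ T₂) (hp : Function.uncurry v p ≠ 0) :
    ∃ x ∈ Ioo α β, JoinedIn
      {z ∈ Icc α β ×ˢ Icc T₁ T₂ | 0 < Function.uncurry v p * Function.uncurry v z} p (x, T₁) :=
  exists_joinedIn_bottom (u := fun x t => Function.uncurry v p * v x t) hαβ
    (continuousOn_const.mul hv)
    (fun x hx t ht => ((hsol x hx t ht).const_mul _).isParabolicSubsolutionAt) hc
    (hα.const_mul hp) (hβ.const_mul hp) hpK (mul_self_pos.2 hp)

end PositivePaths

lemma bddBelow_image_div {X : Type*} [TopologicalSpace X] [T2Space X] {K : Set X} {f g : X → ℝ}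
    (hK : IsCompact K) (hf : ContinuousOn f K) (hg : ContinuousOn g K) (hg0 : ∀ x ∈ K, 0 ≤ g x)
    (hfg : ∀ x ∈ K, g x = 0 → 0 < f x) : BddBelow ((fun x => f x / g x) '' K) := by
  have hcompact : IsCompact (K ∩ f ⁻¹' Iic 0) :=
    hK.of_isClosed_subset (hf.preimage_isClosed_of_isClosed hK.isClosed isClosed_Iic)
      inter_subset_left
  -- Only the part of `K` where `f ≤ 0` matters, and `g` has no zero there.
  have hcont : ContinuousOn (fun x => f x / g x) (K ∩ f ⁻¹' Iic 0) :=
    (hf.mono inter_subset_left).div (hg.mono inter_subset_left)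
      fun x hx h => (hfg x hx.1 h).not_ge hx.2
  obtain ⟨C, hC⟩ := hcompact.bddBelow_image hcont
  refine ⟨min C 0, forall_mem_image.2 fun x hx => ?_⟩
  obtain h | h := le_total (f x) 0
  · exact min_le_of_left_le (hC ⟨x, ⟨hx, h⟩, rfl⟩)
  · exact min_le_of_right_le (div_nonneg h (hg0 x hx))

lemma exists_neg_div_sq_le {b : ℝ → ℝ → ℝ} {R T₁ T₂ : ℝ}
    (hb : ContinuousOn (Function.uncurry b) (Icc 0 R ×ˢ Icc T₁ T₂))
    (hb0 : ∀ t ∈ Icc T₁ T₂, 0 < b 0 t) :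
    ∃ C, ∀ x ∈ Icc 0 R, ∀ t ∈ Icc T₁ T₂, -(b x t / x ^ 2) ≤ C := by
  obtain ⟨C, hC⟩ := bddBelow_image_div (g := fun z : ℝ × ℝ => z.1 ^ 2)
    (isCompact_Icc.prod isCompact_Icc) hb (by fun_prop) (fun _ _ => sq_nonneg _)
    (by
      rintro ⟨x, t⟩ hz hx
      obtain rfl : x = 0 := pow_eq_zero_iff two_ne_zero |>.1 hx
      exact hb0 t hz.2)
  exact ⟨-C, fun x hx t ht => neg_le_neg (hC ⟨(x, t), ⟨hx, ht⟩, rfl⟩)⟩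

lemma lt_and_mul_neg_of_joinedIn {f : ℝ × ℝ → ℝ} {K : Set (ℝ × ℝ)} {T₁ T₂ x y x' y' : ℝ}
    (hK : K ⊆ univ ×ˢ Icc T₁ T₂) (hxy : x < y) (hsign : f (x, T₂) * f (y, T₂) < 0)
    (hx : JoinedIn {z ∈ K | 0 < f (x, T₂) * f z} (x, T₂) (x', T₁))
    (hy : JoinedIn {z ∈ K | 0 < f (y, T₂) * f z} (y, T₂) (y', T₁)) :
    x' < y' ∧ f (x', T₁) * f (y', T₁) < 0 := by
  have opposite : ∀ z w, 0 < f (x, T₂) * f z → 0 < f (y, T₂) * f w → f z * f w < 0 :=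
    fun z w hz hw => (neg_iff_neg_of_mul_pos
      ((mul_mul_mul_comm (f (x, T₂)) _ _ _).symm ▸ mul_pos hz hw)).1 hsign
  refine ⟨lt_of_joinedIn_of_disjoint ((sep_subset _ _).trans hK) ((sep_subset _ _).trans hK)
    ?_ hx hy hxy, opposite _ _ hx.target_mem.2 hy.target_mem.2⟩
  exact disjoint_left.2 fun z hz hw => (opposite z z hz.2 hw.2).not_ge (mul_self_nonneg _)

theorem sign_changes_persist_backward_general {α β T₁ T₂ C : ℝ} {a c v : ℝ → ℝ → ℝ}
    (hαβ : α < β) (hT : T₁ ≤ T₂)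
    (hv : ContinuousOn (Function.uncurry v) (Icc α β ×ˢ Icc T₁ T₂))
    (hsol : ∀ x ∈ Ioo α β, ∀ t ∈ Ioc T₁ T₂, IsParabolicSolutionAt (a x t) (c x t) v x t)
    (hc : ∀ x ∈ Ioo α β, ∀ t ∈ Ioc T₁ T₂, c x t ≤ C)
    (hα : IsZeroOrNonvanishingOn (v α) (Icc T₁ T₂))
    (hβ : IsZeroOrNonvanishingOn (v β) (Icc T₁ T₂))
    {n : ℕ} {r : ℕ → ℝ} (hr : ∀ i < n, r i ∈ Icc α β)
    (hr_mono : ∀ i, i + 1 < n → r i < r (i + 1))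
    (hsign : ∀ i, i + 1 < n → v (r i) T₂ * v (r (i + 1)) T₂ < 0) :
    ∃ r' : ℕ → ℝ, (∀ i < n, r' i ∈ Ioo α β) ∧ (∀ i, i + 1 < n → r' i < r' (i + 1)) ∧
      ∀ i, i + 1 < n → v (r' i) T₁ * v (r' (i + 1)) T₁ < 0 := by
  obtain hn | hn := lt_or_ge n 2
  · obtain ⟨x, hx⟩ := nonempty_Ioo.2 hαβ
    exact ⟨fun _ => x, fun _ _ => hx, fun i hi => by omega, fun i hi => by omega⟩
  have hne : ∀ i < n, v (r i) T₂ ≠ 0 := by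
    rintro (_ | i) hi
    · exact left_ne_zero_of_mul (hsign 0 hn).ne
    · exact right_ne_zero_of_mul (hsign i hi).ne
  choose! r' hr' hjoined using fun i (hi : i < n) =>
    exists_joinedIn_bottom_of_ne_zero hαβ hv hsol hc hα hβ (p := (r i, T₂))
      ⟨hr i hi, hT, le_rfl⟩ (hne i hi)
  have consecutive : ∀ i, i + 1 < n →
      r' i < r' (i + 1) ∧ v (r' i) T₁ * v (r' (i + 1)) T₁ < 0 := fun i hi =>
    lt_and_mul_neg_of_joinedIn (prod_mono_left (subset_univ _)) (hr_mono i hi) (hsign i hi)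
      (hjoined i (by omega)) (hjoined (i + 1) hi)
  exact ⟨r', hr', fun i hi => (consecutive i hi).1, fun i hi => (consecutive i hi).2⟩

theorem sign_changes_persist_backward
    (m : ℕ) (hm : 2 ≤ m) (R t1 t2 : ℝ) (hR : 0 < R) (ht12 : t1 < t2)
    (b v : ℝ → ℝ → ℝ)
    (hb_smooth : ContDiffOn ℝ (⊤ : ℕ∞) (fun p : ℝ × ℝ => b p.1 p.2) (Icc 0 R ×ˢ Ioo t1 t2))
    (hb_bdd : ∃ C : ℝ, ∀ r ∈ Icc (0:ℝ) R, ∀ t ∈ Ioo t1 t2, |b r t| ≤ C)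
    (hb_deriv_bdd : ∃ C : ℝ, ∀ r ∈ Icc (0:ℝ) R, ∀ t ∈ Ioo t1 t2,
      |deriv (fun x => b x t) r| ≤ C ∧ |deriv (fun s => b r s) t| ≤ C)
    (hb0 : ∀ t ∈ Ioo t1 t2, b 0 t = (m : ℝ) - 1)
    (hbr0 : ∀ t ∈ Ioo t1 t2, deriv (fun x => b x t) 0 = 0)
    (hv_smooth : ContDiffOn ℝ (⊤ : ℕ∞) (fun p : ℝ × ℝ => v p.1 p.2) (Icc 0 R ×ˢ Ioo t1 t2))
    (hpde : ∀ r ∈ Ioo (0:ℝ) R, ∀ t ∈ Ioo t1 t2,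
      deriv (fun s => v r s) t =
        deriv (deriv (fun x => v x t)) r + (((m : ℝ) - 1) / r) * deriv (fun x => v x t) r
          - (b r t / r ^ 2) * v r t)
    (hbcR : (∀ t ∈ Ioo t1 t2, v R t = 0) ∨ (∀ t ∈ Ioo t1 t2, v R t ≠ 0))
    (hv0 : ∀ t ∈ Ioo t1 t2, v 0 t = 0)
    (hnz : ¬ ∀ r ∈ Icc (0:ℝ) R, ∀ t ∈ Ioo t1 t2, v r t = 0)
    (T1 T2 : ℝ) (hT1 : t1 < T1) (hT12 : T1 < T2) (hT2 : T2 < t2)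
    (n : ℕ) (r : ℕ → ℝ)
    (hr_pos : ∀ i < n, 0 < r i)
    (hr_mono : ∀ i, i + 1 < n → r i < r (i + 1))
    (hr_le : ∀ i < n, r i ≤ R)
    (hsign : ∀ i, i + 1 < n → v (r i) T2 * v (r (i + 1)) T2 < 0) :
    ∃ r' : ℕ → ℝ,
      (∀ i < n, 0 < r' i) ∧
      (∀ i, i + 1 < n → r' i < r' (i + 1)) ∧
      (∀ i < n, r' i ≤ R) ∧
      (∀ i, i + 1 < n → v (r' i) T1 * v (r' (i + 1)) T1 < 0) := by
  have hJ : Icc T1 T2 ⊆ Ioo t1 t2 := Icc_subset_Ioo hT1 hT2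
  have hm1 : (0 : ℝ) < m - 1 := sub_pos.2 (by exact_mod_cast hm)
  obtain ⟨C, hC⟩ := exists_neg_div_sq_le
    (hb_smooth.continuousOn.mono (prod_mono_right hJ)) fun t ht => by rwa [hb0 t (hJ ht)]
  have hsol : ∀ x ∈ Ioo 0 R, ∀ t ∈ Ioc T1 T2,
      IsParabolicSolutionAt ((m - 1) / x) (-(b x t / x ^ 2)) v x t := fun x hx t ht => by
    have ht' : t ∈ Ioo t1 t2 := hJ (Ioc_subset_Icc_self ht)
    refine isParabolicSolutionAt_of_contDiffAt ?_ (by rw [hpde x hx t ht']; ring)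
    exact (hv_smooth.contDiffAt (prod_mem_nhds (Icc_mem_nhds hx.1 hx.2)
      (Ioo_mem_nhds ht'.1 ht'.2))).of_le (WithTop.coe_le_coe.2 le_top)
  obtain ⟨r', hr', hmono, hsign'⟩ := sign_changes_persist_backward_general hR hT12.le
    (hv_smooth.continuousOn.mono (prod_mono_right hJ)) hsol
    (fun x hx t ht => hC x (Ioo_subset_Icc_self hx) t (Ioc_subset_Icc_self ht))
    (.inl fun t ht => hv0 t (hJ ht)) (.mono hbcR hJ)
    (fun i hi => ⟨(hr_pos i hi).le, hr_le i hi⟩) hr_mono hsign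
  exact ⟨r', fun i hi => (hr' i hi).1, hmono, fun i hi => (hr' i hi).2.le, hsign'⟩
end
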